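/- (Corollary 1.4) Assume d ≥ 4 is such that ρ := 7(2/(d+1) + (1 − 2/(d+1)) q(d−1)) < 1. Then there exist constants c_0 = 8d/log(1/ρ) and u_0 > 0 depending only on d such that lim_{N→∞} N^{2d} sup_{j∈ℤ} P[(U_{c_0,j,u_0 N^{d−1}})^c] = 0. -/

import Mathlib

open MeasureTheory Filter
open scoped ENNReal Classical

namespace DiscCyl

/-- The lattice `ℤ^{d+1}`. -/
abbrev Lat (d : ℕ) := Fin (d + 1) → ℤ

/-- The discrete cylinder `E = (ℤ/Nℤ)^d × ℤ`. -/
abbrev Cyl (d N : ℕ) := (Fin d → ZMod N) × ℤ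

instance (N : ℕ) : MeasurableSpace (ZMod N) := ⊤

instance (N : ℕ) : Countable (ZMod N) := by
  cases N with
  | zero => exact inferInstanceAs (Countable ℤ)
  | succ n => exact inferInstanceAs (Countable (Fin (n + 1)))

/-- The canonical projection `π_E : ℤ^{d+1} → E`. -/
def projE (d N : ℕ) (v : Lat d) : Cyl d N :=
  (fun i => (v i.castSucc : ZMod N), v (Fin.last d))

/-- The `2(d+1)` unit vectors `±e_i` of `ℤ^{d+1}`. -/
def unitVecs (d : ℕ) : Finset (Lat d) :=
  Finset.image (fun p : Fin (d + 1) × Bool => Pi.single p.1 (if p.2 then (1 : ℤ) else -1))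
    Finset.univ

/-- One-step transition probability of simple random walk on the cylinder:
each of the `2(d+1)` unit moves of `ℤ^{d+1}` is taken with probability `1/(2(d+1))`
and projected to `E`. -/
noncomputable def stepProb (d N : ℕ) (x y : Cyl d N) : ℝ≥0∞ :=
  (((unitVecs d).filter fun e => x + projE d N e = y).card : ℝ≥0∞) / (2 * (d + 1))

/-- `Pl` is the family of laws (indexed by the starting point) of simple random walk
on the cylinder `E = (ℤ/Nℤ)^d × ℤ`. -/
def IsCylRW (d N : ℕ) (Pl : Cyl d N → Measure (ℕ → Cyl d N)) : Prop :=
  (∀ x, IsProbabilityMeasure (Pl x)) ∧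
    ∀ (x : Cyl d N) (n : ℕ) (γ : ℕ → Cyl d N),
      Pl x {ω | ∀ i ≤ n, ω i = γ i} =
        (if γ 0 = x then 1 else 0) * ∏ i ∈ Finset.range n, stepProb d N (γ i) (γ (i + 1))

/-- The lattice `ℤ^ν`. -/
abbrev ZLat (ν : ℕ) := Fin ν → ℤ

/-- Unit vectors of `ℤ^ν`. -/
def zUnitVecs (ν : ℕ) : Set (ZLat ν) :=
  {v | ∃ i, v = Pi.single i 1 ∨ v = Pi.single i (-1)}

/-- One-step transition probability of simple random walk on `ℤ^ν`. -/
noncomputable def zStep (ν : ℕ) (x y : ZLat ν) : ℝ≥0∞ :=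
  if y - x ∈ zUnitVecs ν then (2 * ν : ℝ≥0∞)⁻¹ else 0

/-- `Ql` is the family of laws of simple random walk on `ℤ^ν`. -/
def IsLatRW (ν : ℕ) (Ql : ZLat ν → Measure (ℕ → ZLat ν)) : Prop :=
  (∀ x, IsProbabilityMeasure (Ql x)) ∧
    ∀ (x : ZLat ν) (n : ℕ) (γ : ℕ → ZLat ν),
      Ql x {ω | ∀ i ≤ n, ω i = γ i} =
        (if γ 0 = x then 1 else 0) * ∏ i ∈ Finset.range n, zStep ν (γ i) (γ (i + 1))

/-- `q(ν)`: the return probability to the origin of simple random walk on `ℤ^ν`. -/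
noncomputable def retProb (ν : ℕ) (Ql : ZLat ν → Measure (ℕ → ZLat ν)) : ℝ :=
  ((Ql 0) {ω | ∃ n : ℕ, 1 ≤ n ∧ ω n = 0}).toReal

/-- Entrance time `H_U` (with value `⊤` if `U` is never entered). -/
noncomputable def entT {X : Type*} (U : Set X) (ω : ℕ → X) : ℕ∞ :=
  sInf {t : ℕ∞ | ∃ n : ℕ, ω n ∈ U ∧ t = n}

/-- Exit time `T_U`. -/
noncomputable def exitT {X : Type*} (U : Set X) (ω : ℕ → X) : ℕ∞ :=
  entT Uᶜ ω

/-- `after t f ω = t + f (θ_t ω)`, with value `⊤` when `t = ⊤`. -/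
noncomputable def after {X : Type*} (t : ℕ∞) (f : (ℕ → X) → ℕ∞) (ω : ℕ → X) : ℕ∞ :=
  t.recTopCoe ⊤ fun m => (m : ℕ∞) + f fun k => ω (k + m)

/-- The block `C_j = (ℤ/Nℤ)^d × ([(j-3/4)N, (j+3/4)N] ∩ ℤ)`. -/
def Cblk (d N : ℕ) (j : ℤ) : Set (Cyl d N) :=
  {x | ((j : ℝ) - 3 / 4) * N ≤ (x.2 : ℝ) ∧ (x.2 : ℝ) ≤ ((j : ℝ) + 3 / 4) * N}

/-- The block `B_j = (ℤ/Nℤ)^d × [(j-1)N, (j+1)N]`. -/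
def Bblk (d N : ℕ) (j : ℤ) : Set (Cyl d N) :=
  {x | (j - 1) * (N : ℤ) ≤ x.2 ∧ x.2 ≤ (j + 1) * (N : ℤ)}

/-- The block `B̃_j = (ℤ/Nℤ)^d × [(j-2)N+1, (j+2)N-1]`. -/
def Btl (d N : ℕ) (j : ℤ) : Set (Cyl d N) :=
  {x | (j - 2) * (N : ℤ) + 1 ≤ x.2 ∧ x.2 ≤ (j + 2) * (N : ℤ) - 1}

/-- `D^j_1`: time of the first departure from `B̃_j` after the first return to `B_j`. -/
noncomputable def oneExc (d N : ℕ) (j : ℤ) (ω : ℕ → Cyl d N) : ℕ∞ :=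
  after (entT (Bblk d N j) ω) (exitT (Btl d N j)) ω

/-- `D^j_k`: time of the `k`-th departure from `B̃_j` (after successive returns to `B_j`). -/
noncomputable def DD (d N : ℕ) (j : ℤ) : ℕ → (ℕ → Cyl d N) → ℕ∞
  | 0, _ => 0
  | k + 1, ω => after (DD d N j k ω) (oneExc d N j) ω

/-- The law `P` of the walk with initial distribution uniform on `B_0`. -/
noncomputable def lawP (d N : ℕ) (Pl : Cyl d N → Measure (ℕ → Cyl d N)) :
    Measure (ℕ → Cyl d N) :=
  ((N : ℝ≥0∞) ^ d * (2 * N + 1))⁻¹ •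
    Measure.sum fun x : Cyl d N => if x ∈ Bblk d N 0 then Pl x else 0

/-- Nearest-neighbour adjacency on the cylinder. -/
def adj (d N : ℕ) (x y : Cyl d N) : Prop :=
  x ≠ y ∧ ∃ e ∈ unitVecs d, y = x + projE d N e

/-- `x` and `y` are connected by a nearest-neighbour path inside `S`. -/
def connIn (d N : ℕ) (S : Set (Cyl d N)) (x y : Cyl d N) : Prop :=
  Relation.ReflTransGen (fun a b => a ∈ S ∧ b ∈ S ∧ adj d N a b) x y

/-- `S` is a connected set. -/
def IsConnIn (d N : ℕ) (S : Set (Cyl d N)) : Prop :=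
  ∀ x ∈ S, ∀ y ∈ S, connIn d N S x y

/-- The boundary `∂U`. -/
def bdry (d N : ℕ) (U : Set (Cyl d N)) : Set (Cyl d N) :=
  {x | x ∉ U ∧ ∃ y ∈ U, adj d N x y}

/-- `ℓ^∞`-norm on `ℤ^{d+1}`. -/
def linf {d : ℕ} (v : Lat d) : ℕ := Finset.univ.sup fun i => (v i).natAbs

/-- `ℓ^∞`-distance induced on the cylinder. -/
noncomputable def cylDist (d N : ℕ) (x y : Cyl d N) : ℕ :=
  sInf {r : ℕ | ∃ v : Lat d, projE d N v = y - x ∧ linf v = r}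

/-- `S` has `ℓ^∞`-diameter at least `L`. -/
def diamGE (d N : ℕ) (S : Set (Cyl d N)) (L : ℕ) : Prop :=
  ∃ x ∈ S, ∃ y ∈ S, L ≤ cylDist d N x y

/-- `X_{[0,n]}`: the set of points visited up to time `n`. -/
def ran {X : Type*} (ω : ℕ → X) (n : ℕ) : Set X := {y | ∃ i ≤ n, ω i = y}

/-- The set of points visited up to the (possibly infinite) time `t`. -/
def ranE {X : Type*} (ω : ℕ → X) (t : ℕ∞) : Set X :=
  {y | ∃ i : ℕ, (i : ℕ∞) ≤ t ∧ ω i = y}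

/-- `L_m`: projections to `E` of `m`-dimensional affine coordinate lattices of `ℤ^{d+1}`. -/
def Lcoll (d N m : ℕ) : Set (Set (Cyl d N)) :=
  {F | ∃ I : Finset (Fin (d + 1)), I.card = m ∧ ∃ y : Lat d,
      F = (fun v => projE d N (y + v)) '' {v : Lat d | ∀ i ∉ I, v i = 0}}

/-- `A^j_m`: nonempty subsets of `C_j` contained in some `F ∈ L_m`. -/
def Adm (d N : ℕ) (j : ℤ) (m : ℕ) : Set (Finset (Cyl d N)) :=
  {A | A.Nonempty ∧ ↑A ⊆ Cblk d N j ∧ ∃ F ∈ Lcoll d N m, (↑A : Set (Cyl d N)) ⊆ F}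

/-- The segment `{x + k·e : 0 ≤ k ≤ L}` (addition via `π_E`). -/
def segment (d N : ℕ) (x : Cyl d N) (e : Lat d) (L : ℕ) : Set (Cyl d N) :=
  {y | ∃ k : ℕ, k ≤ L ∧ y = x + projE d N ((k : ℤ) • e)}

/-- The event `V_{K,j,t}` (with `k = ⌊t⌋` excursions). -/
def Vev (d N : ℕ) (K : ℝ) (j : ℤ) (k : ℕ) : Set (ℕ → Cyl d N) :=
  {ω | ∀ x ∈ Cblk d N j, ∀ e ∈ unitVecs d, ∃ i : ℕ, (i : ℝ) < Real.sqrt N ∧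
      ∀ l : ℕ, i ≤ l → l ≤ i + ⌊K * Real.log N⌋₊ →
        x + projE d N ((l : ℤ) • e) ∉ ranE ω (DD d N j k ω)}

/-- The event `U_{K,j,t}` (with `k = ⌊t⌋` excursions). -/
def Uev (d N : ℕ) (K : ℝ) (j : ℤ) (k : ℕ) : Set (ℕ → Cyl d N) :=
  {ω | ∀ F ∈ Lcoll d N 2, ∀ n : ℕ, (n : ℕ∞) ≤ DD d N j k ω →
      ∀ O₁ O₂ : Set (Cyl d N),
        O₁ ⊆ (F ∩ Cblk d N j) \ ran ω n → O₂ ⊆ (F ∩ Cblk d N j) \ ran ω n →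
        IsConnIn d N O₁ → IsConnIn d N O₂ →
        diamGE d N O₁ ⌊K * Real.log N⌋₊ → diamGE d N O₂ ⌊K * Real.log N⌋₊ →
        ∀ p ∈ O₁, ∀ q ∈ O₂, connIn d N ((F ∩ Cblk d N j) \ ran ω n) p q}

/-- A (finite) set `S` disconnects the cylinder. -/
def Disconnects (d N : ℕ) (S : Set (Cyl d N)) : Prop :=
  S.Finite ∧ ∃ M₀ : ℕ, ∀ M : ℕ, M₀ ≤ M → ∀ x y : Cyl d N,
    (M : ℤ) ≤ x.2 → y.2 ≤ -(M : ℤ) → ¬ connIn d N Sᶜ x y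

/-- The disconnection time `T_N`. -/
noncomputable def discT (d N : ℕ) (ω : ℕ → Cyl d N) : ℕ∞ :=
  sInf {t : ℕ∞ | ∃ n : ℕ, Disconnects d N (ran ω n) ∧ t = n}

/-- `r ≤ t` for `t : ℕ∞` and a real threshold `r` (trivially true when `t = ⊤`). -/
def geReal (t : ℕ∞) (r : ℝ) : Prop := ∀ n : ℕ, t = (n : ℕ∞) → r ≤ n

/-- `r < t` for `t : ℕ∞` and a real threshold `r` (trivially true when `t = ⊤`). -/
def gtReal (t : ℕ∞) (r : ℝ) : Prop := ∀ n : ℕ, t = (n : ℕ∞) → r < n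

/-- `φ_j(z) = E_z[exp(λ Σ_{x∈A} 1{H_x < T_{B̃_j}})]`. -/
noncomputable def phi (d N : ℕ) (Pl : Cyl d N → Measure (ℕ → Cyl d N)) (j : ℤ) (lam : ℝ)
    (A : Finset (Cyl d N)) (z : Cyl d N) : ℝ :=
  ∫ ω, Real.exp (lam * ∑ x ∈ A, if entT {x} ω < exitT (Btl d N j) ω then (1 : ℝ) else 0)
    ∂(Pl z)

/-- `‖φ_j‖_∞`. -/
noncomputable def phiSup (d N : ℕ) (Pl : Cyl d N → Measure (ℕ → Cyl d N)) (j : ℤ) (lam : ℝ)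
    (A : Finset (Cyl d N)) : ℝ :=
  ⨆ z : Cyl d N, phi d N Pl j lam A z

/-- `q_N = sup {P_z[H_F < T_{B̃_j}] : F ∈ L_m, z ∈ ∂F}`. -/
noncomputable def qNval (d N m : ℕ) (Pl : Cyl d N → Measure (ℕ → Cyl d N)) (j : ℤ) : ℝ :=
  sSup {r : ℝ | ∃ F ∈ Lcoll d N m, ∃ z ∈ bdry d N F,
      r = ((Pl z) {ω | entT F ω < exitT (Btl d N j) ω}).toReal}

/-- The times `τ_k`: `τ_0` is the entrance time of `(ℤ/Nℤ)^d × Nℤ`, and `τ_{k+1}` is the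
first time after `τ_k` at which the vertical component has moved by exactly `N`. -/
noncomputable def tauT (d N : ℕ) : ℕ → (ℕ → Cyl d N) → ℕ∞
  | 0, ω => entT {x : Cyl d N | (N : ℤ) ∣ x.2} ω
  | k + 1, ω =>
      (tauT d N k ω).recTopCoe ⊤ fun m =>
        sInf {t : ℕ∞ | ∃ n : ℕ, m < n ∧ ((ω n).2 - (ω m).2).natAbs = N ∧ t = n}

/-- `*`-adjacency on `ℤ²`. -/
def starAdj (x y : ℤ × ℤ) : Prop :=
  x ≠ y ∧ (x.1 - y.1).natAbs ≤ 1 ∧ (x.2 - y.2).natAbs ≤ 1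


/-- time shift -/
def shiftP {S : Type*} (ω : ℕ → S) : ℕ → S := fun n => ω (n + 1)

/-- cylinder sets -/
def cylS {S : Type*} (n : ℕ) (γ : ℕ → S) : Set (ℕ → S) := {ω | ∀ i ≤ n, ω i = γ i}

lemma measurable_shiftP {S : Type*} [MeasurableSpace S] : Measurable (shiftP : (ℕ → S) → ℕ → S) :=
  measurable_pi_lambda _ fun n => measurable_pi_apply (n + 1)

lemma measurableSet_cylS {S : Type*} [MeasurableSpace S] [MeasurableSingletonClass S]
    (n : ℕ) (γ : ℕ → S) : MeasurableSet (cylS n γ) := by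
  have : cylS n γ = ⋂ i ∈ Finset.range (n+1), (fun ω : ℕ → S => ω i) ⁻¹' {γ i} := by
    ext ω; simp [cylS]
  rw [this]
  exact Finset.measurableSet_biInter _ fun i _ => (measurable_pi_apply i) (measurableSet_singleton _)

lemma generate_cylS {S : Type*} [MeasurableSpace S] [MeasurableSingletonClass S] [Countable S] :
    (inferInstance : MeasurableSpace (ℕ → S)) =
      MeasurableSpace.generateFrom {s | ∃ n γ, s = cylS (S := S) n γ} := by
  apply le_antisymm
  · refine iSup_le fun i => ?_
    rintro _ ⟨s, hs, rfl⟩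
    have key : ((fun b : ℕ → S => b i) ⁻¹' s) =
        ⋃ c : {c : Fin (i+1) → S // c (Fin.last i) ∈ s},
          cylS i (fun k => if h : k < i + 1 then c.1 ⟨k, h⟩ else c.1 (Fin.last i)) := by
      ext ω
      simp only [Set.mem_preimage, Set.mem_iUnion, cylS, Set.mem_ofPred_eq]
      constructor
      · intro h
        refine ⟨⟨fun k => ω k, by simpa using h⟩, ?_⟩
        intro k hk
        simp [Nat.lt_succ_of_le hk]
      · rintro ⟨c, hc⟩
        have := hc i le_rfl
        rw [this]
        simp only [Nat.lt_succ_self, dite_true]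
        exact c.2
    rw [key]
    refine MeasurableSet.iUnion fun c => ?_
    exact MeasurableSpace.measurableSet_generateFrom ⟨_, _, rfl⟩
  · refine MeasurableSpace.generateFrom_le ?_
    rintro _ ⟨n, γ, rfl⟩
    exact measurableSet_cylS n γ

lemma isPiSystem_cylS {S : Type*} : IsPiSystem {s | ∃ n γ, s = cylS (S := S) n γ} := by
  rintro _ ⟨n, γ, rfl⟩ _ ⟨m, δ, rfl⟩ ⟨ω, h1, h2⟩
  refine ⟨max n m, ω, ?_⟩
  ext η
  simp only [cylS, Set.mem_inter_iff, Set.mem_ofPred_eq] at *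
  constructor
  · rintro ⟨a, b⟩ i hi
    rcases le_max_iff.1 hi with h | h
    · rw [a i h, h1 i h]
    · rw [b i h, h2 i h]
  · intro a
    exact ⟨fun i hi => by rw [a i (le_max_of_le_left hi), h1 i hi],
      fun i hi => by rw [a i (le_max_of_le_right hi), h2 i hi]⟩

/-- The simple Markov property. -/
lemma markov_map {S : Type*} [MeasurableSpace S] [MeasurableSingletonClass S] [Countable S] [DecidableEq S]
    (p : S → S → ℝ≥0∞) (P : S → Measure (ℕ → S)) (hP : ∀ x, IsProbabilityMeasure (P x))
    (hc : ∀ (x : S) (n : ℕ) (γ : ℕ → S), P x {ω | ∀ i ≤ n, ω i = γ i} =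
        (if γ 0 = x then 1 else 0) * ∏ i ∈ Finset.range n, p (γ i) (γ (i + 1))) (x : S) :
    (P x).map shiftP = Measure.sum (fun y => p x y • P y) := by
  have h0 : ∀ᵐ ω ∂(P x), ω 0 = x := by
    have : P x {ω | ω 0 = x} = 1 := by
      have := hc x 0 (fun _ => x)
      simpa using this
    rw [ae_iff]
    have hm : MeasurableSet {ω : ℕ → S | ω 0 = x} :=
      measurableSet_eq_fun (measurable_pi_apply 0) measurable_const
    exact (prob_compl_eq_zero_iff hm).2 this
  have hcyl : ∀ n γ, (P x).map shiftP (cylS n γ) =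
      p x (γ 0) * ∏ i ∈ Finset.range n, p (γ i) (γ (i + 1)) := by
    intro n γ
    rw [Measure.map_apply measurable_shiftP (measurableSet_cylS n γ)]
    have := hc x (n+1) (fun k => Nat.casesOn k x γ)
    rw [Finset.prod_range_succ'] at this
    have e0 : (if (Nat.casesOn (motive := fun _ => S) 0 x γ) = x then (1:ℝ≥0∞) else 0) = 1 := if_pos rfl
    rw [e0, one_mul, mul_comm] at this
    refine Eq.trans ?_ this
    apply measure_congr
    filter_upwards [h0] with ω hω
    apply propext
    change (shiftP ω ∈ cylS n γ) ↔ _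
    simp only [cylS, shiftP, Set.mem_ofPred_eq]
    change _ ↔ ∀ i ≤ n+1, ω i = _
    constructor
    · intro h i hi
      cases i with
      | zero => exact hω
      | succ i => exact h i (by omega)
    · intro h i hi
      exact h (i+1) (by omega)
  have hcyl' : ∀ n γ, Measure.sum (fun y => p x y • P y) (cylS n γ) =
      p x (γ 0) * ∏ i ∈ Finset.range n, p (γ i) (γ (i + 1)) := by
    intro n γ
    rw [Measure.sum_apply _ (measurableSet_cylS n γ)]
    rw [tsum_eq_single (γ 0)]
    · simp only [Measure.smul_apply, smul_eq_mul]
      congr 1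
      have := hc (γ 0) n γ
      rw [if_pos rfl, one_mul] at this
      exact this
    · intro y hy
      simp only [Measure.smul_apply, smul_eq_mul]
      have := hc y n γ
      rw [if_neg (Ne.symm hy), zero_mul] at this
      change _ * P y {ω | ∀ i ≤ n, ω i = γ i} = 0
      rw [this, mul_zero]
  have hpm : IsProbabilityMeasure ((P x).map shiftP) :=
    Measure.isProbabilityMeasure_map measurable_shiftP.aemeasurable
  refine ext_of_generate_finite _ generate_cylS isPiSystem_cylS ?_ ?_
  · rintro _ ⟨n, γ, rfl⟩
    rw [hcyl, hcyl']
  · have hun : (Set.univ : Set (ℕ → S)) = ⋃ y, cylS 0 (fun _ => y) := by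
      ext ω; simp [cylS]
    rw [hun]
    have hd : Pairwise (Function.onFun Disjoint fun y : S => cylS 0 (fun _ => y)) := by
      intro a b hab
      rw [Function.onFun, Set.disjoint_left]
      intro ω h1 h2
      exact hab ((h1 0 le_rfl).symm.trans (h2 0 le_rfl))
    rw [measure_iUnion hd (fun y => measurableSet_cylS _ _),
      measure_iUnion hd (fun y => measurableSet_cylS _ _)]
    simp only [hcyl, hcyl']

lemma sum_unitVecs {d : ℕ} {M : Type*} [AddCommMonoid M] (g : Lat d → M) :
    ∑ e ∈ unitVecs d, g e = ∑ i, (g (Pi.single i 1) + g (Pi.single i (-1))) := by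
  unfold unitVecs
  rw [Finset.sum_image]
  · rw [Fintype.sum_prod_type]
    simp
  · rintro ⟨i, a⟩ - ⟨k, b⟩ - h
    have h1 := congrFun h i
    by_cases hik : i = k
    · subst hik
      simp at h1
      cases a <;> cases b <;> simp at h1 ⊢
    · simp [hik] at h1
      cases a <;> simp at h1

/-- averaging over neighbours -/
noncomputable def avg (d N : ℕ) (f : Cyl d N → ℝ) (z : Cyl d N) : ℝ :=
  (∑ i, (f (z + projE d N (Pi.single i 1)) + f (z + projE d N (Pi.single i (-1))))) / (2 * (d + 1))

lemma markov_cyl {d N : ℕ} {Pl : Cyl d N → Measure (ℕ → Cyl d N)} (h : IsCylRW d N Pl)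
    (x : Cyl d N) (S : Set (ℕ → Cyl d N)) :
    (Pl x).real (shiftP ⁻¹' S) ≤ avg d N (fun y => (Pl y).real S) x := by
  have hp := h.1
  have key : (Pl x) (shiftP ⁻¹' S) ≤
      ∑ e ∈ unitVecs d, Pl (x + projE d N e) S / (2 * (d + 1)) := by
    refine (Measure.le_map_apply measurable_shiftP.aemeasurable S).trans ?_
    rw [markov_map (stepProb d N) Pl h.1 h.2 x]
    rw [Measure.sum_apply_of_countable]
    simp only [Measure.smul_apply, smul_eq_mul]
    have : ∀ y, stepProb d N x y * Pl y S =
        ∑ e ∈ unitVecs d, if x + projE d N e = y then Pl y S / (2 * (d + 1)) else 0 := by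
      intro y
      rw [← Finset.sum_filter, Finset.sum_const, stepProb, nsmul_eq_mul]
      rw [div_eq_mul_inv, div_eq_mul_inv]; ring
    simp_rw [this]
    rw [Summable.tsum_finsetSum (fun _ _ => ENNReal.summable)]
    refine Finset.sum_le_sum fun e _ => ?_
    rw [tsum_eq_single (x + projE d N e)]
    · simp
    · intro y hy; simp [Ne.symm hy]
  have h2 : (2 * ((d:ℝ≥0∞) + 1)) ≠ 0 := by simp
  rw [measureReal_def]
  refine (ENNReal.toReal_mono ?_ key).trans ?_
  · refine (ENNReal.sum_lt_top.2 fun e _ => ?_).ne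
    exact ENNReal.div_lt_top (measure_ne_top _ _) h2
  · rw [ENNReal.toReal_sum]
    · rw [avg, ← sum_unitVecs (fun e => (Pl (x + projE d N e)).real S), Finset.sum_div]
      refine Finset.sum_le_sum fun e _ => ?_
      rw [ENNReal.toReal_div, measureReal_def]
      simp [ENNReal.toReal_add]
    · intro e _
      exact (ENNReal.div_lt_top (measure_ne_top _ _) h2).ne

lemma mem_zUnitVecs_of {k : ℕ} {e : Lat k} (he : e ∈ unitVecs k) : e ∈ zUnitVecs (k+1) := by
  unfold unitVecs at he
  simp only [Finset.mem_image, Finset.mem_univ, true_and, Prod.exists] at he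
  obtain ⟨i, b, rfl⟩ := he
  refine ⟨i, ?_⟩
  cases b <;> simp

lemma markov_lat {k : ℕ} {Q : ZLat (k+1) → Measure (ℕ → ZLat (k+1))} (h : IsLatRW (k+1) Q)
    (x : ZLat (k+1)) (S : Set (ℕ → ZLat (k+1))) (hS : MeasurableSet S) :
    ∑ i, ((Q (x + Pi.single i 1)).real S + (Q (x + Pi.single i (-1))).real S) ≤
      2 * (k + 1) * (Q x).real (shiftP ⁻¹' S) := by
  have hp := h.1
  have key : ∑ e ∈ unitVecs k, (2 * ((k+1 : ℕ) : ℝ≥0∞))⁻¹ * Q (x + e) S ≤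
      (Q x) (shiftP ⁻¹' S) := by
    rw [← Measure.map_apply measurable_shiftP hS]
    rw [markov_map (zStep (k+1)) Q h.1 h.2 x, Measure.sum_apply_of_countable]
    simp only [Measure.smul_apply, smul_eq_mul]
    rw [show ∑ e ∈ unitVecs k, (2 * ((k+1 : ℕ) : ℝ≥0∞))⁻¹ * Q (x + e) S =
      ∑ e ∈ unitVecs k, (fun y => zStep (k+1) x y * Q y S) (x + e) from ?_]
    · rw [← Finset.sum_image (s := unitVecs k) (g := fun e => x + e)
        (f := fun y => zStep (k+1) x y * Q y S)]
      · exact ENNReal.sum_le_tsum _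
      · intro a _ b _ hab; exact add_left_cancel hab
    · refine Finset.sum_congr rfl fun e he => ?_
      simp only [zStep, add_sub_cancel_left, if_pos (mem_zUnitVecs_of he)]
  have h2 : (2 * ((k+1 : ℕ) : ℝ≥0∞))⁻¹ ≠ ⊤ := by
    simp
  have := ENNReal.toReal_mono (measure_ne_top _ _) key
  rw [ENNReal.toReal_sum] at this
  · simp only [ENNReal.toReal_mul, ENNReal.toReal_inv] at this
    have e2 : ENNReal.toReal 2 * (((k+1 : ℕ) : ℝ≥0∞)).toReal = 2 * (k + 1) := by
      rw [ENNReal.toReal_natCast]; simp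
    rw [e2, ← Finset.mul_sum, inv_mul_le_iff₀ (by positivity)] at this
    rw [← sum_unitVecs (fun e => (Q (x + e)).real S)]
    simpa [measureReal_def] using this
  · intro e _
    exact ENNReal.mul_ne_top h2 (measure_ne_top _ _)

lemma exists_h0 {k : ℕ} {Q : ZLat (k+1) → Measure (ℕ → ZLat (k+1))} (h : IsLatRW (k+1) Q) :
    ∃ h0 : ZLat (k+1) → ℝ, (∀ y, 0 ≤ h0 y) ∧ h0 0 = 1 ∧
      (∀ y, ∑ i, (h0 (y + Pi.single i 1) + h0 (y + Pi.single i (-1))) ≤ 2 * (k+1) * h0 y) ∧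
      ∑ i, (h0 (Pi.single i 1) + h0 (Pi.single i (-1))) ≤ 2 * (k+1) * retProb (k+1) Q := by
  have hp := h.1
  set S : Set (ℕ → ZLat (k+1)) := {ω | ∃ n, ω n = 0} with hS
  have hSm : MeasurableSet S := by
    have : S = ⋃ n, {ω : ℕ → ZLat (k+1) | ω n = 0} := by ext ω; simp [hS]
    rw [this]
    exact MeasurableSet.iUnion fun n =>
      measurableSet_eq_fun (measurable_pi_apply n) measurable_const
  refine ⟨fun y => (Q y).real S, fun y => measureReal_nonneg, ?_, ?_, ?_⟩
  · have h1 := h.2 0 0 (fun _ => 0)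
    simp only [if_true, Finset.range_zero, Finset.prod_empty, mul_one] at h1
    have h2 : (1 : ℝ≥0∞) ≤ Q 0 S := by
      rw [← h1]
      exact measure_mono fun ω hω => ⟨0, hω 0 le_rfl⟩
    have h3 : Q 0 S = 1 := le_antisymm prob_le_one h2
    simp [measureReal_def, h3]
  · intro y
    refine (markov_lat h y S hSm).trans ?_
    refine mul_le_mul_of_nonneg_left (measureReal_mono ?_) (by positivity)
    rintro ω ⟨n, hn⟩
    exact ⟨n+1, hn⟩
  · have := markov_lat h 0 S hSm
    simp only [zero_add] at this
    refine this.trans (le_of_eq ?_)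
    unfold retProb
    rw [measureReal_def]
    congr 2
    refine congrArg _ ?_
    ext ω
    constructor
    · rintro ⟨n, hn⟩
      exact ⟨n+1, by omega, hn⟩
    · rintro ⟨n, h1, hn⟩
      obtain ⟨m, rfl⟩ : ∃ m, n = m + 1 := ⟨n - 1, by omega⟩
      exact ⟨m, hn⟩

lemma entT_zero {X : Type*} {U : Set X} {ω : ℕ → X} (h : ω 0 ∈ U) : entT U ω = 0 := by
  unfold entT
  refine le_antisymm (sInf_le ⟨0, h, rfl⟩) bot_le

lemma entT_succ {X : Type*} {U : Set X} {ω : ℕ → X} (h : ω 0 ∉ U) :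
    entT U ω = entT U (shiftP ω) + 1 := by
  unfold entT
  apply le_antisymm
  · rw [ENat.sInf_add]
    refine le_iInf₂ ?_
    rintro _ ⟨n, hn, rfl⟩
    refine sInf_le ⟨n+1, hn, by simp⟩
  · refine le_sInf ?_
    rintro _ ⟨n, hn, rfl⟩
    cases n with
    | zero => exact absurd hn h
    | succ n =>
      push_cast
      gcongr
      exact sInf_le ⟨n, hn, rfl⟩

lemma after_zero {X : Type*} (f : (ℕ → X) → ℕ∞) (ω : ℕ → X) : after 0 f ω = f ω := by
  have : after ((0:ℕ):ℕ∞) f ω = ((0:ℕ):ℕ∞) + f (fun k => ω (k+0)) := rfl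
  simpa using this

lemma after_coe {X : Type*} (m : ℕ) (f : (ℕ → X) → ℕ∞) (ω : ℕ → X) :
    after (m:ℕ∞) f ω = m + f (fun k => ω (k+m)) := rfl

lemma after_top {X : Type*} (f : (ℕ → X) → ℕ∞) (ω : ℕ → X) : after ⊤ f ω = ⊤ := rfl

lemma after_succ {X : Type*} (t : ℕ∞) (f : (ℕ → X) → ℕ∞) (ω : ℕ → X) :
    after (t + 1) f ω = after t f (shiftP ω) + 1 := by
  induction t using ENat.recTopCoe with
  | top => rfl
  | coe m =>
    have : after ((m+1:ℕ):ℕ∞) f ω = ((m+1:ℕ):ℕ∞) + f (fun k => ω (k+(m+1))) := rfl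
    push_cast at this
    rw [this, after_coe]
    have : (fun k => ω (k + (m+1))) = fun k => shiftP ω (k+m) := rfl
    rw [this, add_right_comm]

lemma after_after {X : Type*} (t : ℕ∞) (f g : (ℕ → X) → ℕ∞) (ω : ℕ → X) :
    after (after t f ω) g ω = after t (fun η => after (f η) g η) ω := by
  induction t using ENat.recTopCoe with
  | top => rfl
  | coe m =>
    rw [after_coe, after_coe]
    induction f (fun k => ω (k+m)) using ENat.recTopCoe with
    | top => simp [after_top]
    | coe l =>
      have := after_coe (m + l) g ω
      push_cast at this
      rw [this, after_coe, add_assoc]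
      congr 3
      funext k
      congr 1; omega

noncomputable def IN (d N : ℕ) (j : ℤ) (k : ℕ) (ω : ℕ → Cyl d N) : ℕ∞ :=
  after (exitT (Btl d N j) ω) (DD d N j k) ω

lemma DD_front (d N : ℕ) (j : ℤ) (k : ℕ) (ω : ℕ → Cyl d N) :
    DD d N j (k+1) ω = after (oneExc d N j ω) (DD d N j k) ω := by
  induction k generalizing ω with
  | zero =>
    change after 0 _ ω = after (oneExc d N j ω) (fun _ => 0) ω
    rw [after_zero]
    induction oneExc d N j ω using ENat.recTopCoe with
    | top => rfl
    | coe l => rw [after_coe, add_zero]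
  | succ k ih =>
    change after (DD d N j (k+1) ω) (oneExc d N j) ω = _
    rw [ih, after_after]
    rfl

lemma DD_succ_eq (d N : ℕ) (j : ℤ) (k : ℕ) (ω : ℕ → Cyl d N) :
    DD d N j (k+1) ω = after (entT (Bblk d N j) ω) (IN d N j k) ω := by
  rw [DD_front, oneExc, after_after]; rfl

lemma DD_of_mem {d N : ℕ} {j : ℤ} {k : ℕ} {ω : ℕ → Cyl d N} (h : ω 0 ∈ Bblk d N j) :
    DD d N j (k+1) ω = IN d N j k ω := by
  rw [DD_succ_eq, entT_zero h, after_zero]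

lemma DD_of_notMem {d N : ℕ} {j : ℤ} {k : ℕ} {ω : ℕ → Cyl d N} (h : ω 0 ∉ Bblk d N j) :
    DD d N j (k+1) ω = DD d N j (k+1) (shiftP ω) + 1 := by
  rw [DD_succ_eq, entT_succ h, after_succ, ← DD_succ_eq]

lemma IN_of_notMem {d N : ℕ} {j : ℤ} {k : ℕ} {ω : ℕ → Cyl d N} (h : ω 0 ∉ Btl d N j) :
    IN d N j k ω = DD d N j k ω := by
  rw [IN, exitT, entT_zero h, after_zero]

lemma IN_of_mem {d N : ℕ} {j : ℤ} {k : ℕ} {ω : ℕ → Cyl d N} (h : ω 0 ∈ Btl d N j) :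
    IN d N j k ω = IN d N j k (shiftP ω) + 1 := by
  rw [IN, exitT, entT_succ (by simpa using h), after_succ]; rfl

/-- all of `A` visited by time `≤ n`, before the time `τ` -/
def Cov {d N : ℕ} (τ : (ℕ → Cyl d N) → ℕ∞) (n : ℕ) (A : Finset (Cyl d N)) :
    Set (ℕ → Cyl d N) :=
  {ω | ∃ m ≤ n, (m : ℕ∞) ≤ τ ω ∧ ∀ x ∈ A, x ∈ ran ω m}

lemma cov_shift {d N : ℕ} {τ σ : (ℕ → Cyl d N) → ℕ∞} {n : ℕ} {A : Finset (Cyl d N)}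
    {ω : ℕ → Cyl d N} (h : ω ∈ Cov τ (n+1) A) (hts : τ ω = σ (shiftP ω) + 1) :
    shiftP ω ∈ Cov σ n (A.erase (ω 0)) := by
  obtain ⟨m, hm, hmt, hA⟩ := h
  cases m with
  | zero =>
    refine ⟨0, Nat.zero_le _, by simp, fun x hx => ?_⟩
    obtain ⟨hx0, hx⟩ := Finset.mem_erase.1 hx
    obtain ⟨i, hi, hxi⟩ := hA x hx
    obtain rfl : i = 0 := by omega
    exact absurd hxi.symm hx0
  | succ m =>
    refine ⟨m, by omega, ?_, fun x hx => ?_⟩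
    · rw [hts] at hmt
      push_cast at hmt
      exact (ENat.add_le_add_iff_right (by simp)).1 hmt
    · obtain ⟨hx0, hx⟩ := Finset.mem_erase.1 hx
      obtain ⟨i, hi, hxi⟩ := hA x hx
      cases i with
      | zero => exact absurd hxi.symm hx0
      | succ i => exact ⟨i, by omega, hxi⟩

lemma cov_zero {d N : ℕ} {τ : (ℕ → Cyl d N) → ℕ∞} {A : Finset (Cyl d N)}
    {ω : ℕ → Cyl d N} (h : ω ∈ Cov τ 0 A) : ∀ x ∈ A, x = ω 0 := by
  obtain ⟨m, hm, hmt, hA⟩ := h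
  intro x hx
  obtain ⟨i, hi, hxi⟩ := hA x hx
  obtain rfl : i = 0 := by omega
  exact hxi.symm

lemma avg_mono {d N : ℕ} {f g : Cyl d N → ℝ} {z : Cyl d N}
    (h : ∀ y : Cyl d N, |y.2 - z.2| ≤ 1 → f y ≤ g y) : avg d N f z ≤ avg d N g z := by
  unfold avg
  gcongr with i
  · apply h
    simp only [projE, Prod.snd_add, add_sub_cancel_left]
    by_cases hi : i = Fin.last d
    · subst hi; simp
    · simp [Pi.single_apply, Ne.symm hi]
  · apply h
    simp only [projE, Prod.snd_add, add_sub_cancel_left]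
    by_cases hi : i = Fin.last d
    · subst hi; simp
    · simp [Pi.single_apply, Ne.symm hi]

lemma avg_const {d N : ℕ} (c : ℝ) (z : Cyl d N) : avg d N (fun _ => c) z = c := by
  unfold avg
  simp
  field_simp
  norm_num

lemma avg_smul {d N : ℕ} (c : ℝ) (f : Cyl d N → ℝ) (z : Cyl d N) :
    avg d N (fun y => c * f y) z = c * avg d N f z := by
  unfold avg
  rw [← mul_div_assoc, Finset.mul_sum]
  simp only [mul_add]

lemma avg_add {d N : ℕ} (f g : Cyl d N → ℝ) (z : Cyl d N) :
    avg d N (fun y => f y + g y) z = avg d N f z + avg d N g z := by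
  unfold avg
  rw [← add_div, ← Finset.sum_add_distrib]
  congr 1
  refine Finset.sum_congr rfl fun i _ => ?_
  ring

lemma ae_start {d N : ℕ} {Pl : Cyl d N → Measure (ℕ → Cyl d N)} (h : IsCylRW d N Pl)
    (z : Cyl d N) {E E' : Set (ℕ → Cyl d N)} (hE : ∀ ω ∈ E, ω 0 = z → ω ∈ E') :
    (Pl z).real E ≤ (Pl z).real E' := by
  have hp := h.1
  have h0 : ∀ᵐ ω ∂(Pl z), ω 0 = z := by
    have : Pl z {ω | ω 0 = z} = 1 := by
      have := h.2 z 0 (fun _ => z)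
      simpa using this
    rw [ae_iff]
    have hm : MeasurableSet {ω : ℕ → Cyl d N | ω 0 = z} :=
      measurableSet_eq_fun (measurable_pi_apply 0) measurable_const
    exact (prob_compl_eq_zero_iff hm).2 this
  rw [measureReal_def, measureReal_def]
  refine ENNReal.toReal_mono (measure_ne_top _ _) (measure_mono_ae ?_)
  filter_upwards [h0] with ω hω hE1
  exact hE ω hE1 hω

lemma mem_Bblk_iff {d N : ℕ} {j : ℤ} {z : Cyl d N} :
    z ∈ Bblk d N j ↔ |z.2 - j * N| ≤ N := by
  unfold Bblk
  simp only [Set.mem_ofPred_eq, abs_le]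
  constructor <;> rintro ⟨a, b⟩ <;> constructor <;> linarith

lemma mem_Btl_iff {d N : ℕ} {j : ℤ} {z : Cyl d N} :
    z ∈ Btl d N j ↔ |z.2 - j * N| < 2 * N := by
  unfold Btl
  simp only [Set.mem_ofPred_eq, abs_lt]
  constructor <;> rintro ⟨a, b⟩ <;> constructor <;> linarith

section
variable {d N : ℕ} {Pl : Cyl d N → Measure (ℕ → Cyl d N)} {j : ℤ} {A : Finset (Cyl d N)}
  {θ β : ℝ} {ψ : Cyl d N → ℝ}

lemma cov_step (hRW : IsCylRW d N Pl) {τ σ : (ℕ → Cyl d N) → ℕ∞} {n : ℕ} {A' : Finset (Cyl d N)}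
    {z : Cyl d N} (hts : ∀ ω, ω 0 = z → τ ω = σ (shiftP ω) + 1) :
    (Pl z).real (Cov τ (n+1) A') ≤ avg d N (fun y => (Pl y).real (Cov σ n (A'.erase z))) z := by
  refine (ae_start hRW z (E' := shiftP ⁻¹' (Cov σ n (A'.erase z))) ?_).trans
    (markov_cyl hRW z _)
  intro ω hω h0
  have := cov_shift hω (hts ω h0)
  rw [h0] at this
  exact this

lemma cov_bound (hN : 1 ≤ N) (hRW : IsCylRW d N Pl)
    (hA : ∀ x ∈ A, |x.2 - j * N| < N) (hθ : 0 < θ) (hθ1 : θ ≤ 1) (hβ1 : 1 ≤ β)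
    (h1 : ∀ z : Cyl d N, |z.2 - j * N| ≤ 2 * N → 1 ≤ ψ z)
    (h2 : ∀ z ∈ Btl d N j, z ∉ A → avg d N ψ z ≤ ψ z)
    (h3 : ∀ z ∈ A, avg d N ψ z ≤ θ * ψ z)
    (h4 : ∀ z : Cyl d N, |z.2 - j * N| = N → ψ z ≤ β) (n : ℕ) :
    (∀ k, ∀ A' ⊆ A, ∀ z : Cyl d N, |z.2 - j * N| ≤ 2 * N →
      (Pl z).real (Cov (IN d N j k) n A') ≤ θ ^ A'.card * ψ z * β ^ k) ∧
    (∀ k, ∀ A' ⊆ A, ∀ z : Cyl d N, N ≤ |z.2 - j * N| →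
      (Pl z).real (Cov (DD d N j k) n A') ≤ θ ^ A'.card * β ^ k) := by
  have hp := hRW.1
  have hN' : (1:ℤ) ≤ N := by exact_mod_cast hN
  -- a bound from an empty/singleton situation
  have hone : ∀ (E : Set (ℕ → Cyl d N)) (z : Cyl d N), (Pl z).real E ≤ 1 :=
    fun E z => measureReal_le_one
  have hempty : ∀ (E : Set (ℕ → Cyl d N)) (z : Cyl d N), (∀ ω ∈ E, ω 0 ≠ z) →
      (Pl z).real E ≤ 0 := by
    intro E z h
    have := ae_start hRW z (E := E) (E' := ∅) (fun ω hω h0 => absurd h0 (h ω hω))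
    simpa using this
  have hβk : ∀ k : ℕ, 1 ≤ β ^ k := fun k => one_le_pow₀ hβ1
  have hsingle : ∀ z ∈ A, 1 ≤ θ * ψ z := by
    intro z hz
    refine le_trans ?_ (h3 z hz)
    rw [← avg_const (d := d) (N := N) 1 z]
    refine avg_mono fun y hy => h1 y ?_
    have := hA z hz
    rw [abs_lt] at this
    rw [abs_le] at hy ⊢
    constructor <;> linarith [hy.1, hy.2, this.1, this.2]
  -- (i) inside, z in Btl, given previous step
  induction n with
  | zero =>
    have base2 : ∀ k, ∀ A' ⊆ A, ∀ z : Cyl d N, N ≤ |z.2 - j * N| →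
      (Pl z).real (Cov (DD d N j k) 0 A') ≤ θ ^ A'.card * β ^ k := by
      intro k A' hA' z hz
      rcases A'.eq_empty_or_nonempty with rfl | ⟨x, hx⟩
      · simpa using (hone _ z).trans (hβk k)
      · refine (hempty _ z ?_).trans (by positivity)
        intro ω hω h0
        have := cov_zero hω x hx
        have h' := hA x (hA' hx)
        rw [this, h0] at h'
        omega
    refine ⟨?_, base2⟩
    intro k A' hA' z hz
    rcases A'.eq_empty_or_nonempty with rfl | ⟨x, hx⟩
    · simp only [Finset.card_empty, pow_zero, one_mul]
      exact (hone _ z).trans (one_le_mul_of_one_le_of_one_le (h1 z hz) (hβk k))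
    · by_cases hxz : ∀ y ∈ A', y = z
      · have : A' = {z} := by
          ext y; simp only [Finset.mem_singleton]
          exact ⟨hxz y, fun h => by rw [h, ← hxz x hx]; exact hx⟩
        rw [this]
        simp only [Finset.card_singleton, pow_one]
        have hzA : z ∈ A := hA' (by rw [this]; simp)
        exact (hone _ z).trans (one_le_mul_of_one_le_of_one_le (hsingle z hzA) (hβk k))
      · push Not at hxz
        obtain ⟨y, hy, hyz⟩ := hxz
        refine (hempty _ z ?_).trans ?_
        · intro ω hω h0
          exact hyz ((cov_zero hω y hy).trans h0)
        · have := h1 z hz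
          positivity
  | succ n ih =>
    obtain ⟨ih1, ih2⟩ := ih
    have s1 : ∀ k, ∀ A' ⊆ A, ∀ z ∈ Btl d N j,
      (Pl z).real (Cov (IN d N j k) (n+1) A') ≤ θ ^ A'.card * ψ z * β ^ k := by
      intro k A' hA' z hz
      have hz' := mem_Btl_iff.1 hz
      refine (cov_step hRW (σ := IN d N j k) fun ω h0 => IN_of_mem (by rw [h0]; exact hz)).trans ?_
      have e1 : avg d N (fun y => (Pl y).real (Cov (IN d N j k) n (A'.erase z))) z ≤
          avg d N (fun y => (θ ^ (A'.erase z).card * β ^ k) * ψ y) z := by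
        refine avg_mono fun y hy => ?_
        refine (ih1 k (A'.erase z) ((Finset.erase_subset _ _).trans hA') y ?_).trans (le_of_eq (by ring))
        rw [abs_lt] at hz'
        rw [abs_le] at hy ⊢
        constructor <;> linarith [hy.1, hy.2, hz'.1, hz'.2]
      refine e1.trans ?_
      rw [avg_smul]
      have hψz := h1 z hz'.le
      by_cases hzA' : z ∈ A'
      · have hc : A'.card = (A'.erase z).card + 1 := (Finset.card_erase_add_one hzA').symm
        rw [hc, pow_succ]
        have := h3 z (hA' hzA')
        calc θ ^ (A'.erase z).card * β ^ k * avg d N ψ z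
            ≤ θ ^ (A'.erase z).card * β ^ k * (θ * ψ z) := by gcongr
          _ = _ := by ring
      · rw [Finset.erase_eq_of_notMem hzA']
        have hle : avg d N ψ z ≤ ψ z := by
          by_cases hzA : z ∈ A
          · refine (h3 z hzA).trans ?_
            nlinarith
          · exact h2 z hz hzA
        calc θ ^ A'.card * β ^ k * avg d N ψ z
            ≤ θ ^ A'.card * β ^ k * ψ z := by gcongr
          _ = _ := by ring
    have s2 : ∀ k, ∀ A' ⊆ A, ∀ z : Cyl d N, N ≤ |z.2 - j * N| →
      (Pl z).real (Cov (DD d N j k) (n+1) A') ≤ θ ^ A'.card * β ^ k := by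
      intro k A' hA' z hz
      have hzA : z ∉ A := fun h => by have := hA z h; omega
      cases k with
      | zero =>
        refine le_trans ?_ (ih2 0 A' hA' z hz)
        refine ae_start hRW z ?_
        rintro ω ⟨m, hm, hmt, hh⟩ h0
        have : (m:ℕ∞) ≤ 0 := hmt
        have : m = 0 := by simpa using this
        subst this
        exact ⟨0, Nat.zero_le _, hmt, hh⟩
      | succ k =>
        rcases hz.lt_or_eq with hlt | heq
        · have hzB : z ∉ Bblk d N j := by rw [mem_Bblk_iff]; omega
          refine (cov_step hRW (σ := DD d N j (k+1))
            fun ω h0 => DD_of_notMem (by rw [h0]; exact hzB)).trans ?_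
          rw [Finset.erase_eq_of_notMem (fun h => hzA (hA' h))]
          refine le_trans (avg_mono (g := fun _ => θ ^ A'.card * β ^ (k+1)) fun y hy => ?_)
            (avg_const _ z).le
          apply ih2 (k+1) A' hA' y
          rw [lt_abs] at hlt
          rw [abs_le] at hy
          rw [le_abs]
          rcases hlt with h | h
          · left; linarith [hy.1, hy.2]
          · right; linarith [hy.1, hy.2]
        · have hzB : z ∈ Bblk d N j := by rw [mem_Bblk_iff]; omega
          have hzT : z ∈ Btl d N j := by rw [mem_Btl_iff]; omega
          refine le_trans (ae_start hRW z (E' := Cov (IN d N j k) (n+1) A') ?_)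
            ((s1 k A' hA' z hzT).trans ?_)
          · rintro ω ⟨m, hm, hmt, hh⟩ h0
            rw [DD_of_mem (by rw [h0]; exact hzB)] at hmt
            exact ⟨m, hm, hmt, hh⟩
          · have := h4 z heq.symm
            rw [pow_succ]
            calc θ ^ A'.card * ψ z * β ^ k ≤ θ ^ A'.card * β * β ^ k := by gcongr
              _ = _ := by ring
    refine ⟨?_, s2⟩
    intro k A' hA' z hz
    by_cases hzT : z ∈ Btl d N j
    · exact s1 k A' hA' z hzT
    · have hz2 : ¬ (|z.2 - j * N| < 2 * N) := fun h => hzT (mem_Btl_iff.2 h)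
      refine le_trans (ae_start hRW z (E' := Cov (DD d N j k) (n+1) A') ?_)
            ((s2 k A' hA' z (by omega)).trans ?_)
      · rintro ω ⟨m, hm, hmt, hh⟩ h0
        rw [IN_of_notMem (by rw [h0]; exact hzT)] at hmt
        exact ⟨m, hm, hmt, hh⟩
      · have := h1 z hz
        have hβ := hβk k
        calc θ ^ A'.card * β ^ k = θ ^ A'.card * 1 * β ^ k := by ring
          _ ≤ _ := by gcongr

/-- The probability bound for covering `A` before `D_k`. -/
lemma cov_final (hN : 1 ≤ N) (hRW : IsCylRW d N Pl)
    (hA : ∀ x ∈ A, |x.2 - j * N| < N) (hθ : 0 < θ) (hθ1 : θ ≤ 1) (hβ1 : 1 ≤ β)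
    (h1 : ∀ z : Cyl d N, |z.2 - j * N| ≤ 2 * N → 1 ≤ ψ z)
    (h2 : ∀ z ∈ Btl d N j, z ∉ A → avg d N ψ z ≤ ψ z)
    (h3 : ∀ z ∈ A, avg d N ψ z ≤ θ * ψ z)
    (h4 : ∀ z : Cyl d N, |z.2 - j * N| = N → ψ z ≤ β)
    (M : ℝ) (hM1 : 1 ≤ M) (hM : ∀ z, ψ z ≤ M) (k : ℕ) (hAn : 2 ≤ A.card) (z : Cyl d N) :
    (Pl z).real {ω | ∃ n : ℕ, (n : ℕ∞) ≤ DD d N j k ω ∧ ∀ x ∈ A, x ∈ ran ω n} ≤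
      θ ^ A.card * M * β ^ k := by
  have hp := hRW.1
  have hβk : ∀ k : ℕ, 1 ≤ β ^ k := fun k => one_le_pow₀ hβ1
  have hn : ∀ n, (Pl z).real (Cov (DD d N j k) n A) ≤ θ ^ A.card * M * β ^ k := by
    intro n
    obtain ⟨c1, c2⟩ := cov_bound hN hRW hA hθ hθ1 hβ1 h1 h2 h3 h4 n
    by_cases hz : z ∈ Bblk d N j
    · cases k with
      | zero =>
        have : (Cov (DD d N j 0) n A) = ∅ := by
          ext ω
          simp only [Set.mem_empty_iff_false, iff_false]
          rintro ⟨m, hm, hmt, hh⟩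
          have : (m:ℕ∞) ≤ 0 := hmt
          have : m = 0 := by simpa using this
          subst this
          obtain ⟨x, hx, y, hy, hxy⟩ := Finset.one_lt_card.1 hAn
          obtain ⟨i, hi, rfl⟩ := hh x hx
          obtain ⟨i', hi', rfl⟩ := hh y hy
          have : i = i' := by omega
          exact hxy (by rw [this])
        rw [this]; simp; positivity
      | succ k =>
        have hz' := mem_Bblk_iff.1 hz
        refine le_trans (ae_start hRW z (E' := Cov (IN d N j k) n A) ?_)
          ((c1 k A subset_rfl z (by omega)).trans ?_)
        · rintro ω ⟨m, hm, hmt, hh⟩ h0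
          rw [DD_of_mem (by rw [h0]; exact hz)] at hmt
          exact ⟨m, hm, hmt, hh⟩
        · have := hM z
          have e : β ^ k ≤ β ^ (k+1) := pow_le_pow_right₀ hβ1 (by omega)
          gcongr
    · rw [mem_Bblk_iff] at hz
      refine (c2 k A subset_rfl z (by omega)).trans ?_
      have := hβk k
      calc θ ^ A.card * β ^ k = θ ^ A.card * 1 * β ^ k := by ring
          _ ≤ _ := by gcongr
  have hU : {ω | ∃ n : ℕ, (n : ℕ∞) ≤ DD d N j k ω ∧ ∀ x ∈ A, x ∈ ran ω n} =
      ⋃ n, Cov (DD d N j k) n A := by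
    ext ω
    simp only [Set.mem_iUnion]
    constructor
    · rintro ⟨n, a, b⟩; exact ⟨n, n, le_rfl, a, b⟩
    · rintro ⟨n, m, _, a, b⟩; exact ⟨m, a, b⟩
  have hmono : Monotone (fun n => Cov (DD d N j k) n A) := by
    rintro n n' hnn ω ⟨m, hm, r⟩
    exact ⟨m, hm.trans hnn, r⟩
  rw [hU, measureReal_def, hmono.measure_iUnion]
  have hnn : 0 ≤ θ ^ A.card * M * β ^ k := le_trans measureReal_nonneg (hn 0)
  refine ENNReal.toReal_le_of_le_ofReal hnn (iSup_le fun n => ?_)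
  rw [ENNReal.le_ofReal_iff_toReal_le (measure_ne_top _ _) hnn]
  exact hn n

end

lemma choose_real (a : ℝ) : Ring.choose a 0 = 1 ∧ Ring.choose a 1 = a ∧ Ring.choose a 2 = a * (a-1)/2 ∧
    Ring.choose a 3 = a * (a-1) * (a-2)/6 := by
  have h2 := Ring.descPochhammer_eq_factorial_smul_choose a 2
  have h3 := Ring.descPochhammer_eq_factorial_smul_choose a 3
  simp [descPochhammer_succ_right, Polynomial.smeval_mul, Polynomial.smeval_natCast, Polynomial.smeval_sub, Nat.factorial] at h2 h3
  have e : (2 : Polynomial ℤ).smeval a = 2 := by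
    have := Polynomial.smeval_natCast ℤ a 2
    simpa using this
  rw [e] at h3
  refine ⟨by simp, by simp, ?_, ?_⟩ <;> linarith

lemma rpow_taylor (q : ℝ) : ∃ C > 0, ∃ δ > 0, δ < 1 ∧ ∀ t : ℝ, |t| ≤ δ →
    (1 + t) ^ (-q) ≤ 1 - q * t + q * (q+1) / 2 * t^2 - q * (q+1) * (q+2) / 6 * t^3 + C * t^4 ∧
    (1 + t) ^ (-q) ≤ 1 - q * t + C * t^2 := by
  have h := (Real.one_add_rpow_hasFPowerSeriesAt_zero (a := -q))
  have h4 := h.isBigO_sub_partialSum_pow 4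
  have h2 := h.isBigO_sub_partialSum_pow 2
  obtain ⟨C4, hC4, h4⟩ := h4.exists_pos
  obtain ⟨C2, hC2, h2⟩ := h2.exists_pos
  have hh := (h4.bound.and h2.bound)
  rw [Metric.eventually_nhds_iff] at hh
  obtain ⟨δ, hδ, hh⟩ := hh
  obtain ⟨c0, c1, c2, c3⟩ := choose_real (-q)
  refine ⟨max C4 C2, lt_max_of_lt_left hC4, min (δ/2) (1/2), by positivity, ?_, ?_⟩
  · exact lt_of_le_of_lt (min_le_right _ _) (by norm_num)
  intro t ht
  have hd := hh (y := t) (by rw [Real.dist_eq, sub_zero]; linarith [ht.trans (min_le_left _ _)])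
  simp only [FormalMultilinearSeries.partialSum, binomialSeries, FormalMultilinearSeries.ofScalars_apply_eq, Finset.sum_range_succ, Finset.sum_range_zero, c0, c1, c2, c3, zero_add, smul_eq_mul, Real.norm_eq_abs, abs_abs, pow_abs] at hd
  obtain ⟨a, b⟩ := hd
  have a' := (le_abs_self _).trans a
  have b' := (le_abs_self _).trans b
  rw [abs_of_nonneg (by positivity : 0 ≤ t^4)] at a'
  rw [abs_of_nonneg (by positivity : 0 ≤ t^2)] at b'
  have m1 := mul_le_mul_of_nonneg_right (le_max_left C4 C2) (by positivity : 0 ≤ t^4)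
  have m2 := mul_le_mul_of_nonneg_right (le_max_right C4 C2) (by positivity : 0 ≤ t^2)
  constructor <;> nlinarith

set_option maxHeartbeats 800000 in
/-- Superharmonicity of the regularized power function on the lattice. -/
lemma lat_super (D : ℕ) (hD : 3 ≤ D) (p : ℝ) (hp : p = ((D:ℝ) - 2) / 2) :
    ∃ a : ℝ, 1 ≤ a ∧ ∀ {ι : Type} (J : Finset ι), J.card = D → ∀ (y : ι → ℝ) (s : ℝ),
      s = a + ∑ i ∈ J, (y i)^2 →
      (∀ i ∈ J, 0 < s + 1 + 2 * y i ∧ 0 < s + 1 - 2 * y i) ∧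
      ∑ i ∈ J, ((s + 1 + 2 * y i) ^ (-p) + (s + 1 - 2 * y i) ^ (-p)) ≤ 2 * D * s ^ (-p) := by
  have hD' : (3:ℝ) ≤ D := by exact_mod_cast hD
  have hp0 : 0 < p := by rw [hp]; linarith
  obtain ⟨C, hC, δ, hδ, hδ1, hT⟩ := rpow_taylor p
  set a : ℝ := 1 + 9 / δ^2 + D + (272 * C * D) / (4 * p * (p+1)) with ha
  have ha1 : 1 ≤ a := by
    have : 0 ≤ 9 / δ^2 + D + (272 * C * D) / (4 * p * (p+1)) := by positivity
    linarith
  have haδ : 9 / δ^2 ≤ a := by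
    have : 0 ≤ 1 + D + (272 * C * D) / (4 * p * (p+1)) := by positivity
    linarith
  have haC : p * (p+1) * D + 272 * C * D ≤ 4 * p * (p+1) * a := by
    have e : 4 * p * (p+1) * ((272 * C * D) / (4 * p * (p+1))) = 272 * C * D := by field_simp
    have : 4 * p * (p+1) * a = 4 * p * (p+1) * (1 + 9/δ^2) + 4 * p * (p+1) * D + 272 * C * D := by
      rw [ha]; linear_combination e
    rw [this]
    have h1 : 0 ≤ 4 * p * (p+1) * (1 + 9/δ^2) := by positivity
    have h2 : 0 ≤ 3 * p * (p+1) * D := by positivity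
    linarith
  refine ⟨a, ha1, ?_⟩
  intro ι J hJ y s hs
  have hS0 : 0 ≤ ∑ i ∈ J, (y i)^2 := Finset.sum_nonneg fun i _ => sq_nonneg _
  have hs1 : 1 ≤ s := by linarith
  have hs0 : 0 < s := by linarith
  have hy : ∀ i ∈ J, (y i)^2 ≤ s := by
    intro i hi
    have := Finset.single_le_sum (f := fun i => (y i)^2) (fun i _ => sq_nonneg _) hi
    linarith
  have hab : ∀ b : ℝ, b^2 ≤ s → |(1 + 2 * b) / s| ≤ δ := by
    intro b hb
    have h1 : (1 + 2 * b)^2 ≤ 9 * s := by nlinarith [sq_nonneg (b - 1)]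
    have h2 : 9 ≤ δ^2 * s := by
      have : 9 / δ^2 ≤ s := by linarith
      rw [div_le_iff₀ (by positivity)] at this
      linarith
    rw [abs_le]
    have h3 : (1 + 2 * b)^2 ≤ (δ * s)^2 := by nlinarith
    have := abs_le_of_sq_le_sq' h3 (by positivity)
    constructor
    · rw [le_div_iff₀ hs0]; linarith [this.1]
    · rw [div_le_iff₀ hs0]; linarith [this.2]
  have key : ∀ b : ℝ, b^2 ≤ s → 0 < s + 1 + 2 * b ∧ (s + 1 + 2 * b) ^ (-p) ≤ s ^ (-p) *
      (1 - p * ((1 + 2 * b) / s) + p * (p+1) / 2 * ((1 + 2 * b) / s)^2 -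
        p * (p+1) * (p+2) / 6 * ((1 + 2 * b) / s)^3 + C * ((1 + 2 * b) / s)^4) := by
    intro b hb
    have h := hab b hb
    have h' := (abs_le.1 h).1
    have e : s + 1 + 2 * b = s * (1 + (1 + 2 * b) / s) := by field_simp; ring
    have hpos : 0 < 1 + (1 + 2 * b) / s := by linarith
    refine ⟨by rw [e]; positivity, ?_⟩
    rw [e, Real.mul_rpow hs0.le hpos.le]
    have := (hT _ h).1
    gcongr
  constructor
  · intro i hi
    have k1 := (key (y i) (hy i hi)).1
    have k2 := (key (- y i) (by rw [neg_sq]; exact hy i hi)).1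
    exact ⟨k1, by linarith⟩
  have hsp : 0 < s ^ (-p) := by positivity
  have term : ∀ i ∈ J, (s + 1 + 2 * y i) ^ (-p) + (s + 1 - 2 * y i) ^ (-p) ≤ s ^ (-p) *
      (2 - 2 * p / s + p * (p+1) * (1 + 4 * (y i)^2) / s^2 + C * (16 / s^2 + 256 * (y i)^2 / s^3)) := by
    intro i hi
    have k1 := (key (y i) (hy i hi)).2
    have k2 := (key (- y i) (by rw [neg_sq]; exact hy i hi)).2
    have e2 : s + 1 + 2 * (- y i) = s + 1 - 2 * y i := by ring
    rw [e2] at k2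
    refine (add_le_add k1 k2).trans ?_
    rw [← mul_add]
    refine mul_le_mul_of_nonneg_left ?_ hsp.le
    set b := y i
    have hb : b^2 ≤ s := hy i hi
    have hq : p * (p+1) * (p+2) / 6 * ((1 + 2 * b) / s)^3 + p * (p+1) * (p+2) / 6 * ((1 + 2 * -b) / s)^3 =
       p * (p+1) * (p+2) / 6 * ((2 + 24 * b^2) / s^3) := by field_simp; ring
    have hq0 : 0 ≤ p * (p+1) * (p+2) / 6 * ((2 + 24 * b^2) / s^3) := by positivity
    have hl : p * ((1 + 2 * b) / s) + p * ((1 + 2 * -b) / s) = 2 * p / s := by field_simp; ring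
    have hqq : p * (p+1) / 2 * ((1 + 2 * b) / s)^2 + p * (p+1) / 2 * ((1 + 2 * -b) / s)^2 =
      p * (p+1) * (1 + 4 * b^2) / s^2 := by field_simp; ring
    have hf : ((1 + 2 * b) / s)^4 + ((1 + 2 * -b) / s)^4 ≤ 16 / s^2 + 256 * b^2 / s^3 := by
      have e1 : ((1 + 2 * b) / s)^4 + ((1 + 2 * -b) / s)^4 = (2 + 48 * b^2 + 32 * b^4) / s^4 := by
        field_simp; ring
      have e3 : 16 / s^2 + 256 * b^2 / s^3 = (16 * s^2 + 256 * b^2 * s) / s^4 := by field_simp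
      rw [e1, e3]
      refine div_le_div_of_nonneg_right ?_ (by positivity)
      have n1 := mul_nonneg (sq_nonneg b) (sub_nonneg.2 hb)
      have n2 := mul_nonneg (sq_nonneg b) (sub_nonneg.2 hs1)
      have n3 : 1 ≤ s^2 := one_le_pow₀ hs1
      have n4 : 0 ≤ b^2 * s := by positivity
      nlinarith
    have m := mul_le_mul_of_nonneg_left hf hC.le
    rw [mul_add] at m
    clear_value b
    linarith
  refine (Finset.sum_le_sum term).trans ?_
  rw [← Finset.mul_sum]
  have hsum : ∑ i ∈ J, (2 - 2 * p / s + p * (p+1) * (1 + 4 * (y i)^2) / s^2 + C * (16 / s^2 + 256 * (y i)^2 / s^3))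
     = D * (2 - 2 * p / s + p * (p+1) / s^2 + 16 * C / s^2) + (4 * p * (p+1) / s^2 + 256 * C / s^3) * (s - a) := by
    have : s - a = ∑ i ∈ J, (y i)^2 := by linarith
    rw [this, Finset.mul_sum, ← hJ, ← nsmul_eq_mul, ← Finset.sum_const, ← Finset.sum_add_distrib]
    refine Finset.sum_congr rfl fun i _ => ?_
    field_simp
    ring
  rw [hsum]
  have hfin : D * (2 - 2 * p / s + p * (p+1) / s^2 + 16 * C / s^2) + (4 * p * (p+1) / s^2 + 256 * C / s^3) * (s - a) ≤ 2 * D := by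
    have hDp : (D:ℝ) = 2 * p + 2 := by rw [hp]; ring
    have e : D * (2 - 2 * p / s + p * (p+1) / s^2 + 16 * C / s^2) + (4 * p * (p+1) / s^2 + 256 * C / s^3) * (s - a)
       = 2 * D + (p * (p+1) * D + 16 * C * D - 4 * p * (p+1) * a) / s^2 + 256 * C * (s-a) / s^3 := by
      rw [hDp]; field_simp; ring
    have h1 : 256 * C * (s-a) / s^3 ≤ 256 * C / s^2 := by
      have : 256 * C / s^2 = 256 * C * s / s^3 := by field_simp
      rw [this]
      refine div_le_div_of_nonneg_right ?_ (by positivity)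
      refine mul_le_mul_of_nonneg_left (by linarith) (by positivity)
    have h2 : (p * (p+1) * D + 16 * C * D - 4 * p * (p+1) * a) / s^2 ≤ (-(256 * C)) / s^2 := by
      refine div_le_div_of_nonneg_right ?_ (by positivity)
      have : 256 * C * 1 ≤ 256 * C * D := mul_le_mul_of_nonneg_left (by linarith) (by positivity)
      linarith
    rw [e]
    have : (-(256 * C)) / s^2 = - (256 * C / s^2) := by ring
    linarith
  calc _ ≤ s ^ (-p) * (2 * D) := mul_le_mul_of_nonneg_left hfin hsp.le
    _ = _ := by ring

lemma phi_nonneg {p s T : ℝ} (hp : 0 < p) (hs : 0 < s) (hT : 0 < T) :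
    0 ≤ s ^ (-p) - T ^ (-p) + p * T ^ (-p-1) * (s - T) := by
  have hu : 0 < s / T := by positivity
  have h1 : 1 - p * (s/T - 1) ≤ (s/T) ^ (-p) := by
    rw [Real.rpow_def_of_pos hu]
    have h2 := Real.add_one_le_exp (Real.log (s/T) * -p)
    have h3 := Real.log_le_sub_one_of_pos hu
    nlinarith
  have e : s ^ (-p) = T ^ (-p) * (s/T) ^ (-p) := by
    rw [← Real.mul_rpow hT.le hu.le]; congr 1; field_simp
  have e2 : T ^ (-p-1) = T ^ (-p) / T := by rw [Real.rpow_sub_one hT.ne']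
  have hTp : 0 < T ^ (-p) := by positivity
  rw [e, e2]
  have := mul_le_mul_of_nonneg_left h1 hTp.le
  have e3 : p * (T ^ (-p) / T) * (s - T) = T^(-p) * (p * (s/T-1)) := by field_simp
  rw [e3]
  nlinarith

lemma phi_upper {p C δ s T : ℝ} (hs : 0 < s) (hT : 0 < T)
    (hC : ∀ t : ℝ, |t| ≤ δ → (1 + t) ^ (-p) ≤ 1 - p * t + C * t^2) (hd : |s/T - 1| ≤ δ) :
    s ^ (-p) - T ^ (-p) + p * T ^ (-p-1) * (s - T) ≤ T ^ (-p) * (C * (s/T-1)^2) := by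
  have hu : 0 < s / T := by positivity
  have h1 := hC _ hd
  rw [add_sub_cancel] at h1
  have e : s ^ (-p) = T ^ (-p) * (s/T) ^ (-p) := by
    rw [← Real.mul_rpow hT.le hu.le]; congr 1; field_simp
  have e2 : T ^ (-p-1) = T ^ (-p) / T := by rw [Real.rpow_sub_one hT.ne']
  have hTp : 0 < T ^ (-p) := by positivity
  rw [e, e2]
  have := mul_le_mul_of_nonneg_left h1 hTp.le
  have e3 : p * (T ^ (-p) / T) * (s - T) = T^(-p) * (p * (s/T-1)) := by field_simp
  rw [e3]
  nlinarith

/-- Integer coordinates of a point of the cylinder. -/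
noncomputable def co {d N : ℕ} (w : Cyl d N) : Lat d :=
  Fin.snoc (α := fun _ => ℤ) (fun i => (w.1 i).valMinAbs) w.2

lemma co_castSucc {d N : ℕ} (w : Cyl d N) (i : Fin d) : co w i.castSucc = (w.1 i).valMinAbs := by
  simp [co]

lemma co_last {d N : ℕ} (w : Cyl d N) : co w (Fin.last d) = w.2 := by
  simp [co]

lemma co_same {d N : ℕ} (w : Cyl d N) {i i' : Fin (d+1)} (h : i' ≠ i) (ε : ℤ) :
    co (w + projE d N (Pi.single i ε)) i' = co w i' := by
  induction i' using Fin.lastCases with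
  | last => simp [co_last, projE, Pi.single_apply, h]
  | cast l => simp [co_castSucc, projE, Pi.single_apply, h]

lemma co_step {d N : ℕ} (hN : 4 < N) (w : Cyl d N) (i : Fin (d+1)) (h : 4 * |co w i| ≤ N) {ε : ℤ}
    (hε : |ε| ≤ 1) : co (w + projE d N (Pi.single i ε)) i = co w i + ε := by
  induction i using Fin.lastCases with
  | last => simp [co_last, projE]
  | cast l =>
    have : NeZero N := ⟨by omega⟩
    rw [co_castSucc] at h
    simp only [co_castSucc, projE, Prod.fst_add, Pi.add_apply, Pi.single_eq_same]
    rw [ZMod.valMinAbs_spec]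
    constructor
    · simp
    · rw [abs_le] at hε
      have h' := abs_le.1 (show |(w.1 l).valMinAbs| ≤ |(w.1 l).valMinAbs| from le_rfl)
      constructor <;> omega

/-- Squared transverse distance. -/
noncomputable def sq {d N : ℕ} (J : Finset (Fin (d+1))) (w : Cyl d N) : ℝ := ∑ i ∈ J, (co w i : ℝ)^2

lemma sq_nonneg' {d N : ℕ} (J : Finset (Fin (d+1))) (w : Cyl d N) : 0 ≤ sq J w :=
  Finset.sum_nonneg fun i _ => _root_.sq_nonneg _

lemma le_sq {d N : ℕ} {J : Finset (Fin (d+1))} (w : Cyl d N) {i} (hi : i ∈ J) :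
    (co w i : ℝ)^2 ≤ sq J w :=
  Finset.single_le_sum (f := fun i => (co w i : ℝ)^2) (fun i _ => _root_.sq_nonneg _) hi

lemma sq_notMem {d N : ℕ} {J : Finset (Fin (d+1))} (w : Cyl d N) {i} (hi : i ∉ J) (ε : ℤ) :
    sq J (w + projE d N (Pi.single i ε)) = sq J w := by
  unfold sq
  refine Finset.sum_congr rfl fun i' hi' => ?_
  have hne : i' ≠ i := fun h => hi (h ▸ hi')
  rw [co_same w hne]

lemma sq_mem {d N : ℕ} {J : Finset (Fin (d+1))} (w : Cyl d N) {i} (hi : i ∈ J) (ε : ℤ)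
    (h : co (w + projE d N (Pi.single i ε)) i = co w i + ε) :
    sq J (w + projE d N (Pi.single i ε)) = sq J w + ε^2 + 2 * ε * co w i := by
  unfold sq
  rw [← Finset.add_sum_erase _ _ hi, ← Finset.add_sum_erase J (fun i => (co w i : ℝ)^2) hi, h]
  have : ∑ x ∈ J.erase i, ((co (w + projE d N (Pi.single i ε)) x : ℝ))^2 = ∑ x ∈ J.erase i, (co w x : ℝ)^2 :=
    Finset.sum_congr rfl fun i' hi' => by rw [co_same w (Finset.ne_of_mem_erase hi')]
  rw [this]
  push_cast
  ring

lemma co_small {d N : ℕ} {J : Finset (Fin (d+1))} (w : Cyl d N) {i} (hi : i ∈ J)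
    (h : sq J w ≤ (N:ℝ)^2/16) : 4 * |co w i| ≤ N := by
  have h1 := (le_sq w hi).trans h
  have h2 : ((4 * co w i : ℤ) : ℝ)^2 ≤ (N:ℝ)^2 := by push_cast; linarith
  have h3 := abs_le_of_sq_le_sq h2 (by positivity)
  have h4 : |4 * co w i| ≤ (N:ℤ) := by exact_mod_cast h3
  rwa [abs_mul] at h4

lemma single_neg_cancel {d N : ℕ} (w : Cyl d N) (i : Fin (d+1)) (ε : ℤ) :
    w + projE d N (Pi.single i ε) + projE d N (Pi.single i (-ε)) = w := by
  have : projE d N (Pi.single i ε) + projE d N (Pi.single i (-ε)) = 0 := by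
    ext l
    · by_cases h : l.castSucc = i <;> simp [projE, Pi.single_apply, h]
    · simp [projE, Pi.single_apply]; split_ifs <;> simp
  rw [add_assoc, this, add_zero]

lemma avg_le_of_sum {d N : ℕ} {f : Cyl d N → ℝ} {z : Cyl d N} {b : ℝ}
    (h : ∑ i, (f (z + projE d N (Pi.single i 1)) + f (z + projE d N (Pi.single i (-1)))) ≤ 2 * (d+1) * b) :
    avg d N f z ≤ b := by
  unfold avg
  rw [div_le_iff₀ (by positivity)]
  linarith

set_option maxHeartbeats 1000000 in
lemma exists_R (d D : ℕ) (hD : 3 ≤ D) (p : ℝ) (hp : p = ((D:ℝ) - 2) / 2) :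
    ∃ c > (0:ℝ), ∃ C > 0, ∃ N0 : ℕ, 4 < N0 ∧ ∀ N ≥ N0, ∀ J : Finset (Fin (d+1)), J.card = D →
      ∃ R : Cyl d N → ℝ, (∀ w, 0 ≤ R w) ∧
        (∀ w, avg d N R w ≤ R w + C * ((N:ℝ)^2/16) ^ (-p-1)) ∧
        (∀ w, sq J w = 0 → c ≤ R w) ∧
        (∀ w (r : ℝ), 0 < r → r ≤ sq J w → R w ≤ r ^ (-p)) := by
  have hD' : (3:ℝ) ≤ D := by exact_mod_cast hD
  have hp0 : 0 < p := by rw [hp]; linarith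
  obtain ⟨a, ha1, hlat⟩ := lat_super D hD p hp
  obtain ⟨C, hC, δ, hδ, hδ1, hT⟩ := rpow_taylor p
  have ha0 : 0 < a := by linarith
  have hap : 0 < a ^ (-p) := by positivity
  -- choice of N0
  have hlim : Tendsto (fun N : ℕ => ((N:ℝ)^2/16)) atTop atTop := by
    refine Tendsto.atTop_div_const (by norm_num) ?_
    exact (tendsto_pow_atTop (by norm_num)).comp tendsto_natCast_atTop_atTop
  have hlim2 : Tendsto (fun N : ℕ => (1 + p) * ((N:ℝ)^2/16) ^ (-p)) atTop (nhds 0) := by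
    have := ((tendsto_rpow_neg_atTop hp0).comp hlim).const_mul (1+p)
    simpa using this
  obtain ⟨N0, hN0⟩ := eventually_atTop.1 (((hlim.eventually_ge_atTop (1 + a + 9 / δ^2)).and
    (hlim2.eventually (gt_mem_nhds (half_pos hap)))).and (eventually_gt_atTop 4))
  refine ⟨a ^ (-p) / 2, by positivity, p + 9 * C, by positivity, N0, (hN0 N0 le_rfl).2, ?_⟩
  intro N hN J hJ
  obtain ⟨⟨hT1, hT2⟩, hN4⟩ := hN0 N hN
  set T : ℝ := (N:ℝ)^2/16 with hTdef
  have hδ9 : 0 < 9 / δ^2 := by positivity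
  have hTpos : 0 < T := by linarith
  have hTa : a ≤ T := by linarith
  have hT1' : 1 ≤ T := by linarith
  have hTδ : 9 ≤ δ^2 * T := by
    have : 9 / δ^2 ≤ T := by linarith
    rw [div_le_iff₀ (by positivity)] at this
    linarith
  set Φ : ℝ → ℝ := fun s => s ^ (-p) - T ^ (-p) + p * T ^ (-p-1) * (s - T) with hΦ
  have hTp1 : 0 < T ^ (-p-1) := by positivity
  have eTp1 : T ^ (-p-1) = T ^ (-p) / T := by rw [Real.rpow_sub_one hTpos.ne']
  have hΦ0 : ∀ s, 0 < s → 0 ≤ Φ s := fun s hs => phi_nonneg hp0 hs hTpos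
  set s : Cyl d N → ℝ := fun w => a + sq J w with hs
  have hsa : ∀ w, a ≤ s w := fun w => by have := sq_nonneg' J w; simp only [hs]; linarith
  have hs0 : ∀ w, 0 < s w := fun w => ha0.trans_le (hsa w)
  set R : Cyl d N → ℝ := fun w => if s w ≤ T then Φ (s w) else 0 with hR
  have hRΦ : ∀ w, R w ≤ Φ (s w) := by
    intro w; simp only [hR]; split_ifs
    · exact le_rfl
    · exact hΦ0 _ (hs0 w)
  have hR0 : ∀ w, 0 ≤ R w := by
    intro w; simp only [hR]; split_ifs
    · exact hΦ0 _ (hs0 w)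
    · exact le_rfl
  have hΦup : ∀ t, 0 < t → t ≤ T → Φ t ≤ t ^ (-p) := by
    intro t ht htT
    have h1 : 0 < T ^ (-p) := by positivity
    have h2 : p * T ^ (-p-1) * (t - T) ≤ 0 := mul_nonpos_of_nonneg_of_nonpos (by positivity) (by linarith)
    simp only [hΦ]; linarith
  refine ⟨R, hR0, ?_, ?_, ?_⟩
  · intro w
    apply avg_le_of_sum
    by_cases hw : s w ≤ T
    · have hRw : R w = Φ (s w) := by simp only [hR, if_pos hw]
      have hco : ∀ i ∈ J, 4 * |co w i| ≤ N := fun i hi => co_small w hi (by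
        have : s w = a + sq J w := rfl
        rw [← hTdef]; linarith)
      obtain ⟨hpos, hsum⟩ := hlat J hJ (fun i => (co w i : ℝ)) (s w) rfl
      rw [← Finset.sum_add_sum_compl J]
      have hJs : ∑ i ∈ J, (R (w + projE d N (Pi.single i 1)) + R (w + projE d N (Pi.single i (-1)))) ≤
          2 * D * (Φ (s w) + p * T^(-p-1)) := by
        have hterm : ∀ i ∈ J, R (w + projE d N (Pi.single i 1)) + R (w + projE d N (Pi.single i (-1))) ≤
            ((s w + 1 + 2 * co w i) ^ (-p) + (s w + 1 - 2 * co w i) ^ (-p)) +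
             2 * (- T ^ (-p) + p * T ^ (-p-1) * (s w + 1 - T)) := by
          intro i hi
          have c1 := sq_mem w hi 1 (co_step hN4 w i (hco i hi) (by norm_num))
          have c2 := sq_mem w hi (-1) (co_step hN4 w i (hco i hi) (by norm_num))
          have s1 : s (w + projE d N (Pi.single i 1)) = s w + 1 + 2 * co w i := by
            simp only [hs]; rw [c1]; push_cast; ring
          have s2 : s (w + projE d N (Pi.single i (-1))) = s w + 1 - 2 * co w i := by
            simp only [hs]; rw [c2]; push_cast; ring
          have r1 := hRΦ (w + projE d N (Pi.single i 1))
          have r2 := hRΦ (w + projE d N (Pi.single i (-1)))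
          rw [s1] at r1
          rw [s2] at r2
          refine (add_le_add r1 r2).trans (le_of_eq ?_)
          simp only [hΦ]
          ring
        refine (Finset.sum_le_sum hterm).trans ?_
        rw [Finset.sum_add_distrib, Finset.sum_const, hJ, nsmul_eq_mul]
        have : 2 * D * (Φ (s w) + p * T^(-p-1)) = 2 * D * (s w) ^ (-p) + D * (2 * (- T ^ (-p) + p * T ^ (-p-1) * (s w + 1 - T))) := by
          simp only [hΦ]; ring
        rw [this]
        linarith
      have hJc : ∑ i ∈ Jᶜ, (R (w + projE d N (Pi.single i 1)) + R (w + projE d N (Pi.single i (-1)))) =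
          ((Jᶜ.card : ℕ) : ℝ) * (2 * Φ (s w)) := by
        rw [← nsmul_eq_mul, ← Finset.sum_const]
        refine Finset.sum_congr rfl fun i hi => ?_
        have hi' : i ∉ J := by simpa using hi
        have s1 : ∀ ε : ℤ, s (w + projE d N (Pi.single i ε)) = s w := by
          intro ε; simp only [hs]; rw [sq_notMem w hi']
        have r1 : ∀ ε : ℤ, R (w + projE d N (Pi.single i ε)) = Φ (s w) := by
          intro ε; rw [← hRw]; simp only [hR, s1 ε]
        rw [r1, r1]; ring
      have hcard : ((Jᶜ.card : ℕ) : ℝ) = (d:ℝ) + 1 - D := by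
        have h1 := Finset.card_add_card_compl J
        rw [hJ, Fintype.card_fin] at h1
        have h2 : (D:ℝ) + (Jᶜ.card : ℕ) = (d:ℝ) + 1 := by exact_mod_cast h1
        linarith
      have hDd : (D:ℝ) ≤ d + 1 := by
        have h1 := J.card_le_univ
        rw [hJ, Fintype.card_fin] at h1
        exact_mod_cast h1
      rw [hJc, hRw, hcard]
      have m1 : 2 * D * (p * T ^ (-p-1)) ≤ 2 * (d+1) * (p * T^(-p-1)) := by
        refine mul_le_mul_of_nonneg_right (by linarith) (by positivity)
      have m2 : 0 ≤ 2 * ((d:ℝ)+1) * (9 * C * T ^ (-p-1)) := by positivity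
      nlinarith
    · push Not at hw
      have hRw : R w = 0 := by simp only [hR, if_neg (not_le.2 hw)]
      have hnb : ∀ i, ∀ ε : ℤ, (ε = 1 ∨ ε = -1) → R (w + projE d N (Pi.single i ε)) ≤ (p + 9 * C) * T ^ (-p-1) := by
        intro i ε hε
        have hpos : 0 ≤ (p + 9 * C) * T ^ (-p-1) := by positivity
        by_cases hw' : s (w + projE d N (Pi.single i ε)) ≤ T
        · have hi : i ∈ J := by
            by_contra hi
            simp only [hs] at hw' hw
            rw [sq_notMem w hi] at hw'
            linarith
          set w' := w + projE d N (Pi.single i ε) with hw'def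
          have hwe : w = w' + projE d N (Pi.single i (-ε)) := (single_neg_cancel w i ε).symm
          have hc : 4 * |co w' i| ≤ N := co_small w' hi (by
            have : s w' = a + sq J w' := rfl
            rw [← hTdef]; linarith)
          have hε1 : |(-ε)| ≤ 1 := by rcases hε with rfl | rfl <;> norm_num
          have hst := sq_mem w' hi (-ε) (co_step hN4 w' i hc hε1)
          rw [← hwe] at hst
          have hε2 : ((-ε : ℤ) : ℝ)^2 = 1 := by rcases hε with rfl | rfl <;> norm_num
          rw [hε2] at hst
          have hsw : s w = s w' + (1 + 2 * ((-ε : ℤ) : ℝ) * co w' i) := by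
            simp only [hs]; rw [hst]; ring
          have hb : (co w' i : ℝ)^2 ≤ T := by
            have := le_sq w' hi
            have h2 : s w' = a + sq J w' := rfl
            linarith
          set b : ℝ := ((-ε : ℤ) : ℝ) * co w' i with hbdef
          have hb2 : b^2 ≤ T := by rw [hbdef, mul_pow, hε2, one_mul]; exact hb
          have hdiff0 : 0 ≤ T - s w' := by linarith
          have hdiff1 : T - s w' ≤ 1 + 2 * b := by
            have : s w = s w' + (1 + 2 * b) := by rw [hsw, hbdef]; ring
            linarith
          have hsq : (T - s w')^2 ≤ 9 * T := by
            have : (T - s w')^2 ≤ (1 + 2 * b)^2 := pow_le_pow_left₀ hdiff0 hdiff1 2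
            nlinarith [_root_.sq_nonneg (b - 1)]
          have habs : |s w' / T - 1| ≤ δ := by
            have e : s w' / T - 1 = - ((T - s w') / T) := by field_simp; ring
            rw [e, abs_neg, abs_of_nonneg (by positivity), div_le_iff₀ hTpos]
            have : (T - s w')^2 ≤ (δ * T)^2 := by nlinarith
            exact abs_le_of_sq_le_sq' this (by positivity) |>.2
          have hup := phi_upper (hs0 w') hTpos (fun t ht => (hT t ht).2) habs
          refine (hRΦ w').trans (hup.trans ?_)
          have e : (s w' / T - 1)^2 = (T - s w')^2 / T^2 := by field_simp; ring
          rw [e, eTp1]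
          have h9 : (T - s w')^2 / T^2 ≤ 9 / T := by
            rw [div_le_div_iff₀ (by positivity) hTpos]
            nlinarith
          have hTp : 0 < T ^ (-p) := by positivity
          calc T ^ (-p) * (C * ((T - s w')^2 / T^2)) ≤ T ^ (-p) * (C * (9 / T)) := by
                refine mul_le_mul_of_nonneg_left (mul_le_mul_of_nonneg_left h9 hC.le) hTp.le
            _ = 9 * C * (T ^ (-p) / T) := by ring
            _ ≤ _ := by
                refine mul_le_mul_of_nonneg_right (by linarith) (by positivity)
        · have : R (w + projE d N (Pi.single i ε)) = 0 := by simp only [hR, if_neg hw']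
          rw [this]; exact hpos
      rw [hRw, zero_add]
      calc _ ≤ ∑ i : Fin (d+1), ((p + 9 * C) * T ^ (-p-1) + (p + 9 * C) * T ^ (-p-1)) :=
            Finset.sum_le_sum fun i _ => add_le_add (hnb i 1 (Or.inl rfl)) (hnb i (-1) (Or.inr rfl))
        _ = _ := by
            rw [Finset.sum_const, Finset.card_univ, Fintype.card_fin, nsmul_eq_mul]; push_cast; ring
  · intro w hw
    have hsw : s w = a := by simp only [hs]; rw [hw]; ring
    have : R w = Φ a := by simp only [hR]; rw [hsw, if_pos hTa]
    rw [this]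
    simp only [hΦ]
    have e : p * T ^ (-p-1) * (a - T) = p * T^(-p-1) * a - p * T ^ (-p) := by
      rw [eTp1]; field_simp
    rw [e]
    have : 0 ≤ p * T^(-p-1) * a := by positivity
    linarith
  · intro w r hr hrw
    have hrs : r ≤ s w := by simp only [hs]; linarith
    simp only [hR]
    split_ifs with h
    · refine (hΦup _ (hs0 w) h).trans ?_
      exact Real.rpow_le_rpow_of_nonpos hr hrs (by linarith)
    · positivity

lemma avg_translate {d N : ℕ} (R : Cyl d N → ℝ) (x z : Cyl d N) :
    avg d N (fun z => R (z - x)) z = avg d N R (z - x) := by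
  unfold avg
  simp only [add_sub_right_comm]

lemma avg_quad {d N : ℕ} (m : ℤ) (z : Cyl d N) :
    avg d N (fun z => ((z.2 - m : ℤ) : ℝ)^2) z = ((z.2 - m : ℤ) : ℝ)^2 + 1 / (d+1) := by
  unfold avg
  rw [Fin.sum_univ_castSucc]
  simp only [projE, Prod.snd_add]
  have : ∀ i : Fin d, ∀ ε : ℤ, (Pi.single i.castSucc ε : Lat d) (Fin.last d) = 0 := by
    intro i ε; simp [Pi.single_apply, (Fin.castSucc_lt_last i).ne']
  simp only [this, add_zero, Pi.single_eq_same, Finset.sum_const, Finset.card_univ, Fintype.card_fin, nsmul_eq_mul]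
  push_cast
  field_simp
  ring

lemma exists_h (d D : ℕ) (hD : 3 ≤ D) (p : ℝ) (hp : p = ((D:ℝ) - 2) / 2) :
    ∃ C > 0, ∃ N0 : ℕ, 4 < N0 ∧ ∀ N ≥ N0, ∀ J : Finset (Fin (d+1)), J.card = D → ∀ (j : ℤ) (x : Cyl d N),
      ∃ h : Cyl d N → ℝ, (∀ z, avg d N h z ≤ h z) ∧
        (∀ z : Cyl d N, |z.2 - j * N| ≤ 2 * N → 0 ≤ h z) ∧
        (∀ z : Cyl d N, |z.2 - j * N| ≤ 2 * N → sq J (z - x) = 0 → 1 ≤ h z) ∧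
        (∀ z (r : ℝ), 0 < r → r ≤ sq J (z - x) → h z ≤ C * r ^ (-p) + C * ((N:ℝ)^2/16) ^ (-p)) := by
  obtain ⟨c, hc, C, hC, N0, hN0, hh⟩ := exists_R d D hD p hp
  refine ⟨c⁻¹ * (1 + (d+1) * C * 64), by positivity, N0, hN0, ?_⟩
  intro N hN J hJ j x
  obtain ⟨R, hR0, hR1, hR2, hR3⟩ := hh N hN J hJ
  have hNpos : (0:ℝ) < N := by
    have : 0 < N := by omega
    exact_mod_cast this
  set T : ℝ := (N:ℝ)^2/16 with hT
  have hTpos : 0 < T := by positivity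
  have hTp1 : 0 < T ^ (-p-1) := by positivity
  have eTp1 : T ^ (-p-1) = T ^ (-p) / T := by rw [Real.rpow_sub_one hTpos.ne']
  set K : ℝ := (d+1) * C * T ^ (-p-1) with hK
  have hK0 : 0 < K := by positivity
  set h : Cyl d N → ℝ := fun z => c⁻¹ * (R (z - x) + (K * (4 * N^2) + (-K) * ((z.2 - j * N : ℤ) : ℝ)^2)) with hh
  have hquad : ∀ z : Cyl d N, |z.2 - j * N| ≤ 2 * N → 0 ≤ K * (4 * N^2) + (-K) * ((z.2 - j * N : ℤ) : ℝ)^2 := by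
    intro z hz
    have h1 : |((z.2 - j * N : ℤ) : ℝ)| ≤ 2 * N := by exact_mod_cast hz
    have h2 : ((z.2 - j * N : ℤ) : ℝ)^2 ≤ (2 * N)^2 := sq_le_sq' (by linarith [(abs_le.1 h1).1]) (abs_le.1 h1).2
    nlinarith
  have hquad' : ∀ z : Cyl d N, K * (4 * N^2) + (-K) * ((z.2 - j * N : ℤ) : ℝ)^2 ≤ (d+1) * C * 64 * T ^ (-p) := by
    intro z
    have e : K * (4 * N^2) = (d+1) * C * 64 * T ^ (-p) := by
      rw [hK, eTp1]
      have : (N:ℝ)^2 = 16 * T := by rw [hT]; ring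
      rw [this]; field_simp; ring
    rw [e]
    have : 0 ≤ K * ((z.2 - j * N : ℤ) : ℝ)^2 := by positivity
    linarith
  refine ⟨h, ?_, ?_, ?_, ?_⟩
  · intro z
    simp only [hh]
    rw [avg_smul, avg_add, avg_add, avg_const, avg_smul, avg_quad, avg_translate]
    refine mul_le_mul_of_nonneg_left ?_ (by positivity)
    have h1 := hR1 (z - x)
    have h2 : K * (1 / (d+1)) = C * T^(-p-1) := by rw [hK]; field_simp
    rw [mul_add, neg_mul K (1/(_)), h2]
    linarith
  · intro z hz
    have := hR0 (z - x)
    have := hquad z hz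
    simp only [hh]
    positivity
  · intro z hz hs
    have h1 := hR2 (z - x) hs
    have h2 := hquad z hz
    simp only [hh]
    rw [inv_mul_eq_div, le_div_iff₀ hc]
    linarith
  · intro z r hr hrs
    have h1 := hR3 (z - x) r hr hrs
    have h2 := hquad' z
    simp only [hh]
    rw [← mul_add, mul_assoc c⁻¹]
    refine mul_le_mul_of_nonneg_left ?_ (inv_pos.2 hc).le
    have h3 : 0 ≤ (d+1) * C * 64 * r ^ (-p) := by positivity
    have h4 : 0 ≤ T ^ (-p) := by positivity
    linarith

lemma avg_min_le {d N : ℕ} {f g : Cyl d N → ℝ} {z : Cyl d N} (hf : avg d N f z ≤ f z)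
    (hg : avg d N g z ≤ g z) : avg d N (fun y => min (f y) (g y)) z ≤ min (f z) (g z) := by
  refine le_min ((avg_mono fun y _ => min_le_left _ _).trans hf) ((avg_mono fun y _ => min_le_right _ _).trans hg)

lemma avg_sum {d N : ℕ} {ι : Type*} (A : Finset ι) (f : ι → Cyl d N → ℝ) (z : Cyl d N) :
    avg d N (fun y => ∑ x ∈ A, f x y) z = ∑ x ∈ A, avg d N (f x) z := by
  induction A using Finset.induction_on with
  | empty => simp [avg_const]
  | insert a A ha ih =>
    simp only [Finset.sum_insert ha]
    rw [avg_add, ih]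

/-- transverse coordinates -/
noncomputable def trv {d N k : ℕ} (e : Fin (k+1) ↪ Fin (d+1)) (w : Cyl d N) : ZLat (k+1) := fun i => co w (e i)

/-- The plane supersolution. -/
lemma exists_wF (k : ℕ) (hk : 2 ≤ k) {Q : ZLat (k+1) → Measure (ℕ → ZLat (k+1))} (hQ : IsLatRW (k+1) Q)
    (ε : ℝ) (hε : 0 < ε) :
    ∃ N0 : ℕ, 4 < N0 ∧ ∀ N ≥ N0, ∀ J : Finset (Fin (k+2+1)), J.card = k+1 → ∀ (j : ℤ) (x : Cyl (k+2) N),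
      ∃ w : Cyl (k+2) N → ℝ, (∀ z, |z.2 - j * N| < 2 * N → avg (k+2) N w z ≤ w z) ∧
        (∀ z, |z.2 - j * N| ≤ 2 * N → 0 ≤ w z) ∧
        (∀ z, w z ≤ 1) ∧
        (∀ z, |z.2 - j * N| ≤ 2 * N → sq J (z - x) = 0 → 1 ≤ w z) ∧
        (∀ z, |z.2 - j * N| ≤ 2 * N → sq J (z - x) = 0 → avg (k+2) N w z ≤
          2 / ((k:ℝ)+3) + (1 - 2 / ((k:ℝ)+3)) * retProb (k+1) Q + ε) := by
  obtain ⟨h0, h00, h01, h02, h03⟩ := exists_h0 hQ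
  set p : ℝ := (((k+1 : ℕ):ℝ) - 2) / 2 with hp
  have hk' : (2:ℝ) ≤ k := by exact_mod_cast hk
  have hp0 : 0 < p := by rw [hp]; push_cast; linarith
  obtain ⟨C, hC, N1, hN1, hH⟩ := exists_h (k+2) (k+1) (by omega) p hp
  have hlimr : Tendsto (fun N : ℕ => C * ((N:ℝ)) ^ (-p)) atTop (nhds 0) := by
    have := ((tendsto_rpow_neg_atTop hp0).comp tendsto_natCast_atTop_atTop).const_mul C
    simpa using this
  have hlim : Tendsto (fun N : ℕ => ((N:ℝ)^2/16)) atTop atTop := by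
    refine Tendsto.atTop_div_const (by norm_num) ?_
    exact (tendsto_pow_atTop (by norm_num)).comp tendsto_natCast_atTop_atTop
  have hlim2 : Tendsto (fun N : ℕ => C * ((N:ℝ)^2/16) ^ (-p)) atTop (nhds 0) := by
    have := ((tendsto_rpow_neg_atTop hp0).comp hlim).const_mul C
    simpa using this
  obtain ⟨M, hM, hM2⟩ := ((hlimr.eventually (gt_mem_nhds (half_pos hε))).and (eventually_gt_atTop 1)).exists
  obtain ⟨N0, hN0⟩ := eventually_atTop.1 (((hlim2.eventually (gt_mem_nhds (half_pos hε))).and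
    (hlim.eventually_ge_atTop (M:ℝ))).and (eventually_ge_atTop N1))
  refine ⟨N0, hN1.trans_le (hN0 N0 le_rfl).2, ?_⟩
  intro N hN J hJ j x
  obtain ⟨⟨hNε, hNM⟩, hNN⟩ := hN0 N hN
  have hN4 : 4 < N := hN1.trans_le hNN
  obtain ⟨H, hH1, hH2, hH3, hH4⟩ := hH N hNN J hJ j x
  have hM1 : (1:ℝ) < M := by exact_mod_cast hM2
  set e : Fin (k+1) ↪ Fin (k+2+1) := (J.orderEmbOfFin hJ).toEmbedding with he
  have heJ : Finset.univ.map e = J := by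
    rw [he]; exact Finset.map_orderEmbOfFin_univ J hJ
  have hei : ∀ i, e i ∈ J := fun i => Finset.orderEmbOfFin_mem J hJ i
  set g : Cyl (k+2) N → ℝ := fun z => if sq J (z - x) < M then h0 (trv e (z - x)) + ε else 1 with hg
  set w : Cyl (k+2) N → ℝ := fun z => min (min 1 (H z)) (g z) with hw
  have hw1 : ∀ z, w z ≤ 1 := fun z => (min_le_left _ _).trans (min_le_left _ _)
  have hwH : ∀ z, w z ≤ H z := fun z => (min_le_left _ _).trans (min_le_right _ _)
  have hsmall : ∀ z, w z ≤ h0 (trv e (z - x)) + ε := by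
    intro z
    by_cases hz : sq J (z - x) < M
    · refine (min_le_right _ _).trans (le_of_eq ?_)
      simp only [hg, if_pos hz]
    · push Not at hz
      have h1 := hH4 z M (by linarith) hz
      have h2 := h00 (trv e (z - x))
      linarith [hwH z]
  have hwz : ∀ z, w z = 1 ∨ w z = H z ∨ (sq J (z - x) < M ∧ w z = h0 (trv e (z - x)) + ε) := by
    intro z
    by_cases hz : sq J (z - x) < M
    · simp only [hw, hg, if_pos hz]
      rcases min_choice (min 1 (H z)) (h0 (trv e (z - x)) + ε) with h | h
      · rw [h]
        rcases min_choice 1 (H z) with h | h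
        · left; exact h
        · right; left; exact h
      · right; right; exact ⟨hz, h⟩
    · simp only [hw, hg, if_neg hz]
      have : min (min 1 (H z)) 1 = min 1 (H z) := min_eq_left (min_le_left _ _)
      rw [this]
      rcases min_choice 1 (H z) with h | h
      · left; exact h
      · right; left; exact h
  -- neighbours
  have htrv_mem : ∀ z, sq J (z - x) < M → ∀ i : Fin (k+1), ∀ η : ℤ, |η| ≤ 1 →
      trv e (z + projE (k+2) N (Pi.single (e i) η) - x) = trv e (z - x) + Pi.single i η := by
    intro z hz i η hη
    rw [add_sub_right_comm]
    ext l
    simp only [trv, Pi.add_apply]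
    by_cases hl : l = i
    · subst hl
      rw [co_step hN4 _ _ (co_small _ (hei l) (by linarith)) hη, Pi.single_eq_same]
    · rw [co_same _ (fun h => hl (e.injective h)), Pi.single_eq_of_ne hl, add_zero]
  have htrv_not : ∀ z, ∀ i ∉ J, ∀ η : ℤ,
      trv e (z + projE (k+2) N (Pi.single i η) - x) = trv e (z - x) := by
    intro z i hi η
    rw [add_sub_right_comm]
    ext l
    simp only [trv]
    have hne : e l ≠ i := fun h => hi (h ▸ hei l)
    rw [co_same _ hne]
  have hcard : ((Jᶜ.card : ℕ) : ℝ) = 2 := by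
    have h1 := Finset.card_add_card_compl J
    rw [hJ, Fintype.card_fin] at h1
    have : Jᶜ.card = 2 := by omega
    rw [this]; norm_num
  have hsumJ : ∀ z, sq J (z - x) < M →
      ∑ i ∈ J, (w (z + projE (k+2) N (Pi.single i 1)) + w (z + projE (k+2) N (Pi.single i (-1)))) ≤
      ∑ i : Fin (k+1), (h0 (trv e (z - x) + Pi.single i 1) + h0 (trv e (z - x) + Pi.single i (-1))) + 2 * (k+1) * ε := by
    intro z hz
    rw [← heJ, Finset.sum_map]
    have : (2 * (k+1) * ε : ℝ) = ∑ i : Fin (k+1), (2 * ε) := by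
      rw [Finset.sum_const, Finset.card_univ, Fintype.card_fin, nsmul_eq_mul]; push_cast; ring
    rw [this, ← Finset.sum_add_distrib]
    refine Finset.sum_le_sum fun i _ => ?_
    have a1 := hsmall (z + projE (k+2) N (Pi.single (e i) 1))
    have a2 := hsmall (z + projE (k+2) N (Pi.single (e i) (-1)))
    rw [htrv_mem z hz i 1 (by norm_num)] at a1
    rw [htrv_mem z hz i (-1) (by norm_num)] at a2
    linarith
  refine ⟨w, ?_, ?_, hw1, ?_, ?_⟩
  · intro z hz
    rcases hwz z with h | h | ⟨hM', h⟩
    · rw [h]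
      exact (avg_mono fun y _ => hw1 y).trans (avg_const 1 z).le
    · rw [h]
      exact (avg_mono fun y _ => hwH y).trans (hH1 z)
    · rw [h]
      apply avg_le_of_sum
      rw [← Finset.sum_add_sum_compl J]
      have hc : ∑ i ∈ Jᶜ, (w (z + projE (k+2) N (Pi.single i 1)) + w (z + projE (k+2) N (Pi.single i (-1)))) ≤
         ((Jᶜ.card : ℕ) : ℝ) * (2 * (h0 (trv e (z - x)) + ε)) := by
        rw [← nsmul_eq_mul, ← Finset.sum_const]
        refine Finset.sum_le_sum fun i hi => ?_
        have hi' : i ∉ J := by simpa using hi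
        have a1 := hsmall (z + projE (k+2) N (Pi.single i 1))
        have a2 := hsmall (z + projE (k+2) N (Pi.single i (-1)))
        rw [htrv_not z i hi'] at a1 a2
        linarith
      rw [hcard] at hc
      have hj := hsumJ z hM'
      have h2 := h02 (trv e (z - x))
      push_cast
      nlinarith
  · intro z hz
    refine le_min (le_min zero_le_one (hH2 z hz)) ?_
    simp only [hg]
    split_ifs
    · have := h00 (trv e (z - x)); linarith
    · exact zero_le_one
  · intro z hz hs
    refine le_min (le_min le_rfl (hH3 z hz hs)) ?_
    simp only [hg]
    rw [if_pos (by rw [hs]; linarith)]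
    have : trv e (z - x) = 0 := by
      ext i
      have h1 := le_sq (z - x) (hei i)
      rw [hs] at h1
      have h2 : (co (z - x) (e i) : ℝ) = 0 := by
        have := le_antisymm h1 (_root_.sq_nonneg _)
        exact pow_eq_zero_iff (two_ne_zero) |>.1 this
      simp only [trv, Pi.zero_apply]
      exact_mod_cast h2
    rw [this, h01]; linarith
  · intro z hz hs
    have htr : trv e (z - x) = 0 := by
      ext i
      have h1 := le_sq (z - x) (hei i)
      rw [hs] at h1
      have h2 : (co (z - x) (e i) : ℝ) = 0 := by
        have := le_antisymm h1 (_root_.sq_nonneg _)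
        exact pow_eq_zero_iff (two_ne_zero) |>.1 this
      simp only [trv, Pi.zero_apply]
      exact_mod_cast h2
    apply avg_le_of_sum
    rw [← Finset.sum_add_sum_compl J]
    have hc : ∑ i ∈ Jᶜ, (w (z + projE (k+2) N (Pi.single i 1)) + w (z + projE (k+2) N (Pi.single i (-1)))) ≤
         ((Jᶜ.card : ℕ) : ℝ) * (2 * 1) := by
      rw [← nsmul_eq_mul, ← Finset.sum_const]
      refine Finset.sum_le_sum fun i hi => ?_
      have a1 := hw1 (z + projE (k+2) N (Pi.single i 1))
      have a2 := hw1 (z + projE (k+2) N (Pi.single i (-1)))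
      linarith
    rw [hcard] at hc
    have hj := hsumJ z (by rw [hs]; linarith)
    rw [htr] at hj
    simp only [zero_add] at hj
    have e1 : 2 * (((k+2 : ℕ):ℝ)+1) * (2 / ((k:ℝ)+3) + (1 - 2 / ((k:ℝ)+3)) * retProb (k+1) Q + ε) =
      4 + 2 * (k+1) * retProb (k+1) Q + 2 * (k+3) * ε := by
      push_cast; field_simp; ring
    rw [e1]
    nlinarith

lemma sq_plane {d N : ℕ} {I : Finset (Fin (d+1))} {y : Lat d} {z : Cyl d N}
    (hz : z ∈ (fun v => projE d N (y + v)) '' {v : Lat d | ∀ i ∉ I, v i = 0}) :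
    sq Iᶜ (z - projE d N y) = 0 := by
  obtain ⟨v, hv, rfl⟩ := hz
  have e : projE d N (y + v) - projE d N y = projE d N v := by
    ext l <;> simp [projE]
  simp only [e]
  unfold sq
  refine Finset.sum_eq_zero fun i hi => ?_
  have hvi : v i = 0 := hv i (by simpa using hi)
  have : co (projE d N v) i = 0 := by
    induction i using Fin.lastCases with
    | last => rw [co_last]; exact hvi
    | cast l => rw [co_castSucc]; simp [projE, hvi]
  rw [this]; simp

lemma mem_Cblk_abs {d N : ℕ} {j : ℤ} {x : Cyl d N} (hx : x ∈ Cblk d N j) :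
    4 * |x.2 - j * N| ≤ 3 * N := by
  obtain ⟨h1, h2⟩ := hx
  have h3 : ((-(3 * N) : ℤ):ℝ) ≤ ((4 * (x.2 - j * N) : ℤ) : ℝ) := by push_cast; linarith
  have h4 : ((4 * (x.2 - j * N) : ℤ) : ℝ) ≤ ((3 * N : ℤ):ℝ) := by push_cast; linarith
  have h3' : (-(3 * N) : ℤ) ≤ 4 * (x.2 - j * N) := by exact_mod_cast h3
  have h4' : 4 * (x.2 - j * N) ≤ (3 * N : ℤ) := by exact_mod_cast h4
  rcases abs_cases (x.2 - j * N) with ⟨h, _⟩ | ⟨h, _⟩ <;> rw [h] <;> linarith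

lemma T_pow {N k : ℕ} (hN : 0 < N) (p : ℝ) (hp : p = (((k+3 : ℕ):ℝ) - 2) / 2) :
    ((N:ℝ)^2/16) ^ (-p) = 4^(k+1) / (N:ℝ)^(k+1) := by
  have hN' : (0:ℝ) < N := by exact_mod_cast hN
  have e : (N:ℝ)^2/16 = ((N:ℝ)/4)^(2:ℝ) := by
    rw [show (2:ℝ) = ((2:ℕ):ℝ) by norm_num, Real.rpow_natCast]; ring
  rw [e, ← Real.rpow_mul (by positivity)]
  have e2 : 2 * (-p) = -((k+1 : ℕ):ℝ) := by rw [hp]; push_cast; ring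
  rw [e2, Real.rpow_neg (by positivity), Real.rpow_natCast, div_pow, inv_div]

theorem cov_prob (k : ℕ) (hk : 2 ≤ k) {Q : ZLat (k+1) → Measure (ℕ → ZLat (k+1))} (hQ : IsLatRW (k+1) Q)
    (θ : ℝ) (hθ0 : 0 < θ) (hθ1 : θ ≤ 1)
    (hθ : 2 / ((k:ℝ)+3) + (1 - 2 / ((k:ℝ)+3)) * retProb (k+1) Q < θ) :
    ∃ K ≥ (0:ℝ), ∃ C ≥ (0:ℝ), ∃ N0 : ℕ, ∀ N ≥ N0, ∀ (Pl : Cyl (k+2) N → Measure (ℕ → Cyl (k+2) N)),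
      IsCylRW (k+2) N Pl → ∀ (j : ℤ), ∀ F ∈ Lcoll (k+2) N 2, ∀ A : Finset (Cyl (k+2) N),
      (↑A : Set (Cyl (k+2) N)) ⊆ F ∩ Cblk (k+2) N j → 2 ≤ A.card → ∀ (n : ℕ) (z : Cyl (k+2) N),
      (Pl z).real {ω | ∃ m : ℕ, (m : ℕ∞) ≤ DD (k+2) N j n ω ∧ ∀ x ∈ A, x ∈ ran ω m} ≤
        θ ^ A.card * (1 + K) * (1 + C * A.card / (N:ℝ)^(k+1)) ^ n := by
  set χ := 2 / ((k:ℝ)+3) + (1 - 2 / ((k:ℝ)+3)) * retProb (k+1) Q with hχ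
  set ε := (θ - χ) / 2 with hε
  have hε0 : 0 < ε := by rw [hε]; linarith
  obtain ⟨N1, hN1, hF⟩ := exists_wF k hk hQ ε hε0
  set p : ℝ := (((k+3 : ℕ):ℝ) - 2) / 2 with hp
  obtain ⟨C, hC, N2, hN2, hH⟩ := exists_h (k+2) (k+3) (by omega) p hp
  set K := (1 - θ) / ε with hK
  have hK0 : 0 ≤ K := div_nonneg (by linarith) hε0.le
  refine ⟨K, hK0, K * (2 * C * 4^(k+1)), by positivity, max N1 N2, ?_⟩
  intro N hN Pl hRW j F hFL A hA hAc n z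
  have hN1' : N1 ≤ N := (le_max_left _ _).trans hN
  have hN2' : N2 ≤ N := (le_max_right _ _).trans hN
  have hNpos : 0 < N := by omega
  obtain ⟨I, hI, y, rfl⟩ := hFL
  have hIc : Iᶜ.card = k + 1 := by
    rw [Finset.card_compl, hI, Fintype.card_fin]; omega
  obtain ⟨wF, f1, f2, f3, f4, f5⟩ := hF N hN1' Iᶜ hIc j (projE (k+2) N y)
  have hu : (Finset.univ : Finset (Fin (k+2+1))).card = k+3 := by simp
  choose h g1 g2 g3 g4 using fun x => hH N hN2' Finset.univ hu j x
  have hAb : ∀ x ∈ A, 4 * |x.2 - j * N| ≤ 3 * N := fun x hx => mem_Cblk_abs (hA hx).2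
  have hA1 : ∀ x ∈ A, |x.2 - j * N| < N := fun x hx => by have := hAb x hx; omega
  have hAs : ∀ x ∈ A, sq Iᶜ (x - projE (k+2) N y) = 0 := fun x hx => sq_plane (hA hx).1
  set w : Cyl (k+2) N → ℝ := fun z => min (wF z) (∑ x ∈ A, h x z) with hw
  have hNp : (0:ℝ) < (N:ℝ)^(k+1) := by positivity
  have hwA : ∀ z ∈ A, w z = 1 := by
    intro z hz
    have hz1 : |z.2 - j * N| ≤ 2 * N := by have := hA1 z hz; omega
    refine le_antisymm ((min_le_left _ _).trans (f3 z)) (le_min (f4 z hz1 (hAs z hz)) ?_)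
    have h1 : 1 ≤ h z z := g3 z z hz1 (by
      unfold sq
      refine Finset.sum_eq_zero fun i _ => ?_
      have : co (z - z) i = 0 := by
        rw [sub_self]
        induction i using Fin.lastCases with
        | last => rw [co_last]; rfl
        | cast l => rw [co_castSucc]; simp
      rw [this]; simp)
    exact h1.trans (Finset.single_le_sum (f := fun x => h x z) (fun x _ => g2 x z hz1) hz)
  have hw0 : ∀ z : Cyl (k+2) N, |z.2 - j * N| ≤ 2 * N → 0 ≤ w z := fun z hz =>
    le_min (f2 z hz) (Finset.sum_nonneg fun x _ => g2 x z hz)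
  have hw1 : ∀ z, w z ≤ 1 := fun z => (min_le_left _ _).trans (f3 z)
  have hwavg : ∀ z, |z.2 - j * N| < 2 * N → avg (k+2) N w z ≤ w z := by
    intro z hz
    refine avg_min_le (f1 z hz) ?_
    rw [avg_sum]
    exact Finset.sum_le_sum fun x _ => g1 x z
  have hψavg : ∀ z, avg (k+2) N (fun z => 1 + K * w z) z = 1 + K * avg (k+2) N w z := by
    intro z
    rw [avg_add, avg_const, avg_smul]
  refine cov_final (ψ := fun z => 1 + K * w z) hNpos hRW hA1 hθ0 hθ1 ?_ ?_ ?_ ?_ ?_ (1 + K) (by linarith) ?_ n hAc z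
  · have : 0 ≤ K * (2 * C * 4^(k+1)) * A.card / (N:ℝ)^(k+1) := by positivity
    linarith
  · intro z hz
    have := mul_nonneg hK0 (hw0 z hz)
    linarith
  · intro z hz _
    rw [hψavg]
    have := mul_le_mul_of_nonneg_left (hwavg z (mem_Btl_iff.1 hz)) hK0
    linarith
  · intro z hz
    rw [hψavg]
    have hz1 : |z.2 - j * N| ≤ 2 * N := by have := hA1 z hz; omega
    have h1 : avg (k+2) N w z ≤ χ + ε :=
      (avg_mono fun y _ => min_le_left _ _).trans (f5 z hz1 (hAs z hz))
    rw [hwA z hz]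
    have h2 := mul_le_mul_of_nonneg_left h1 hK0
    have h3 : K * ε = 1 - θ := by rw [hK]; field_simp
    have h4 : θ = χ + 2 * ε := by rw [hε]; ring
    have h5 : K * θ = K * (χ + ε) + K * ε := by rw [h4]; ring
    nlinarith
  · intro z hz
    have h1 : ∀ x ∈ A, h x z ≤ 2 * C * 4^(k+1) / (N:ℝ)^(k+1) := by
      intro x hx
      have h2 := g4 x z ((N:ℝ)^2/16) (by positivity) (by
        refine le_trans ?_ (le_sq (z - x) (Finset.mem_univ (Fin.last (k+2))))
        rw [co_last]
        have hx1 := hAb x hx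
        have : (N:ℤ) ≤ 4 * |(z - x).2| := by
          rw [Prod.snd_sub]
          rcases abs_cases (x.2 - j * N) with ⟨a, _⟩ | ⟨a, _⟩ <;>
          rcases abs_cases (z.2 - j * N) with ⟨b, _⟩ | ⟨b, _⟩ <;>
          rcases abs_cases (z.2 - x.2) with ⟨c, _⟩ | ⟨c, _⟩ <;> omega
        have h3 : (N:ℝ) ≤ 4 * |((z - x).2 : ℝ)| := by exact_mod_cast this
        have h4 : (N:ℝ)^2 ≤ (4 * |((z - x).2 : ℝ)|)^2 := pow_le_pow_left₀ (by positivity) h3 2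
        rw [mul_pow, sq_abs] at h4
        linarith)
      rw [T_pow hNpos p hp] at h2
      refine h2.trans (le_of_eq ?_)
      ring
    have h2 : w z ≤ A.card * (2 * C * 4^(k+1) / (N:ℝ)^(k+1)) := by
      refine (min_le_right _ _).trans ?_
      rw [← nsmul_eq_mul]
      exact Finset.sum_le_card_nsmul _ _ _ h1
    have h3 := mul_le_mul_of_nonneg_left h2 hK0
    have e : K * (2 * C * 4^(k+1)) * A.card / (N:ℝ)^(k+1) = K * (A.card * (2 * C * 4^(k+1) / (N:ℝ)^(k+1))) := by ring
    rw [e]; linarith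
  · intro z
    have := mul_le_mul_of_nonneg_left (hw1 z) hK0
    linarith

/-- A two-dimensional box around `k0`. -/
def box {V : Type*} [AddCommGroup V] (e1 e2 k0 : V) (l : ℕ) : Set V :=
  {v | ∃ a b : ℤ, |a| ≤ l ∧ |b| ≤ l ∧ v = k0 + a • e1 + b • e2}

section topo
variable {V : Type*} [AddCommGroup V] {N : ℕ} [NeZero N] {e1 e2 : V} {ξ : V → ZMod N} {Λ : Set V}

lemma xi_nsmul (h1 : ∀ v, ξ (v + e1) = ξ v + 1) (v : V) (n : ℕ) : ξ (v + n • e1) = ξ v + n := by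
  induction n with
  | zero => simp
  | succ n ih => rw [succ_nsmul, ← add_assoc, h1, ih]; push_cast; ring

lemma xi_zsmul (h1 : ∀ v, ξ (v + e1) = ξ v + 1) (v : V) (n : ℤ) : ξ (v + n • e1) = ξ v + n := by
  obtain ⟨m, rfl | rfl⟩ := n.eq_nat_or_neg
  · rw [natCast_zsmul, xi_nsmul h1]; simp
  · have := xi_nsmul h1 (v + (-(m:ℤ)) • e1) m
    rw [neg_smul, natCast_zsmul, neg_add_cancel_right] at this
    rw [neg_smul, natCast_zsmul, this]; simp

lemma xi_zsmul2 (h2 : ∀ v, ξ (v + e2) = ξ v) (v : V) (n : ℤ) : ξ (v + n • e2) = ξ v := by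
  have hn : ∀ (v : V) (m : ℕ), ξ (v + m • e2) = ξ v := by
    intro v m
    induction m with
    | zero => simp
    | succ n ih => rw [succ_nsmul, ← add_assoc, h2, ih]
  obtain ⟨m, rfl | rfl⟩ := n.eq_nat_or_neg
  · rw [natCast_zsmul, hn]
  · have := hn (v + (-(m:ℤ)) • e2) m
    rw [neg_smul, natCast_zsmul, neg_add_cancel_right] at this
    rw [neg_smul, natCast_zsmul, this]

lemma z2 (a b c d : ZMod 2) (h : a + b + c + d = 0) : a + c = b + d := by
  revert a b c d; decide

lemma tele2 (g : ℕ → ZMod 2) (n : ℕ) : ∑ i ∈ Finset.range n, (g (i+1) + g i) = g n + g 0 := by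
  induction n with
  | zero => simp only [Finset.range_zero, Finset.sum_empty]; exact (CharTwo.add_self_eq_zero _).symm
  | succ n ih =>
    rw [Finset.sum_range_succ, ih]
    have : g n + g n = 0 := CharTwo.add_self_eq_zero _
    linear_combination this

lemma one_comp (hNe : N • e1 = 0) (h1 : ∀ v, ξ (v + e1) = ξ v + 1) (h2 : ∀ v, ξ (v + e2) = ξ v)
    (hΛ1 : ∀ v ∈ Λ, v + e1 ∈ Λ)
    (hconn : ∀ g : V → ZMod 2, (∀ v ∈ Λ, g (v + e1) = g v) → (∀ v ∈ Λ, v + e2 ∈ Λ → g (v + e2) = g v) →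
      ∀ u ∈ Λ, ∀ v ∈ Λ, g u = g v)
    {l : ℕ} (hN : 2 * l + 1 < N) {k0 : V} (hrow : ∃ v ∈ Λ, ∀ i : ℕ, v + i • e1 ∉ box e1 e2 k0 l)
    {B : Set V} (hB : B ⊆ box e1 e2 k0 l) {E1 E2 : V → ZMod 2}
    (hsq : ∀ v ∈ Λ, v + e2 ∈ Λ → E1 v + E2 (v + e1) + E1 (v + e2) + E2 v = 0)
    (hE1 : ∀ v, v ∉ B → v + e1 ∉ B → E1 v = 0) (hE2 : ∀ v, v ∉ B → v + e2 ∉ B → E2 v = 0) :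
    ∃ f : V → ZMod 2, (∀ v ∈ Λ, f (v + e1) = f v + E1 v) ∧
      (∀ v ∈ Λ, v + e2 ∈ Λ → f (v + e2) = f v + E2 v) ∧
      (∀ v ∈ Λ, f v ≠ 0 → v ∈ box e1 e2 k0 l) := by
  have hΛn : ∀ (n : ℕ), ∀ v ∈ Λ, v + n • e1 ∈ Λ := by
    intro n
    induction n with
    | zero => intro v hv; simpa using hv
    | succ n ih => intro v hv; rw [succ_nsmul, ← add_assoc]; exact hΛ1 _ (ih v hv)
  set t : V → ℕ := fun v => (ξ v - ξ k0 + ((l + 1 : ℕ) : ZMod N)).val with ht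
  set r : V → V := fun v => v - t v • e1 with hr
  have htN : ∀ v, t v < N := fun v => ZMod.val_lt _
  have hvr : ∀ v, r v + t v • e1 = v := fun v => by simp [hr]
  have hrΛ : ∀ v ∈ Λ, r v ∈ Λ := by
    intro v hv
    have : r v = v + (N - t v) • e1 := by
      have h3 : (N - t v) • e1 + t v • e1 = 0 := by rw [← add_smul, Nat.sub_add_cancel (htN v).le, hNe]
      simp only [hr]
      rw [sub_eq_add_neg, eq_neg_of_add_eq_zero_left h3]
    rw [this]; exact hΛn _ v hv
  have htr : ∀ v, ξ (r v) = ξ k0 - ((l + 1 : ℕ) : ZMod N) := by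
    intro v
    have h3 := xi_nsmul h1 (r v) (t v)
    rw [hvr] at h3
    have h4 : ((t v : ℕ) : ZMod N) = ξ v - ξ k0 + ((l + 1 : ℕ) : ZMod N) := by
      simp only [ht]; exact ZMod.natCast_zmod_val _
    rw [h4] at h3
    linear_combination -h3
  -- points of the box
  have hbox : ∀ v ∈ box e1 e2 k0 l, ∃ a b : ℤ, |b| ≤ l ∧ v = k0 + a • e1 + b • e2 ∧ a = t v - (l + 1) ∧
      1 ≤ t v ∧ t v ≤ 2 * l + 1 := by
    rintro v ⟨a, b, ha, hb, hv⟩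
    refine ⟨a, b, hb, hv, ?_⟩
    rw [abs_le] at ha
    obtain ⟨n, hn⟩ : ∃ n : ℕ, (n : ℤ) = a + (l + 1) := ⟨(a + (l+1)).toNat, by omega⟩
    have htv : t v = n := by
      have : ξ v - ξ k0 + ((l + 1 : ℕ) : ZMod N) = ((n : ℕ) : ZMod N) := by
        rw [hv, xi_zsmul2 h2, xi_zsmul h1]
        have := congrArg (fun z : ℤ => (z : ZMod N)) hn
        push_cast at this ⊢
        rw [this]; ring
      simp only [ht]
      rw [this, ZMod.val_natCast_of_lt (by omega)]
    rw [htv]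
    omega
  have htadd : ∀ v, ∀ i < N, t (r v + i • e1) = i := by
    intro v i hi
    simp only [ht]
    rw [xi_nsmul h1, htr]
    have : ξ k0 - ((l + 1 : ℕ) : ZMod N) + (i : ZMod N) - ξ k0 + ((l + 1 : ℕ) : ZMod N) = (i : ZMod N) := by ring
    rw [this, ZMod.val_natCast_of_lt hi]
  have hcol : ∀ v, ∀ i ≤ N, (i = 0 ∨ 2 * l + 1 < i) → r v + i • e1 ∉ B := by
    intro v i hi hi2 hm
    obtain ⟨a, b, -, -, -, q1, q2⟩ := hbox _ (hB hm)
    rcases hi.lt_or_eq with h | h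
    · rw [htadd v i h] at q1 q2; omega
    · rw [h, hNe] at q1
      have := htadd v 0 (by omega)
      rw [zero_smul] at this
      omega
  set P : ℕ → V → ZMod 2 := fun n u => ∑ i ∈ Finset.range n, E1 (u + i • e1) with hP
  have hPsucc : ∀ n u, P (n+1) u = P n u + E1 (u + n • e1) := fun n u => by
    simp only [hP]; rw [Finset.sum_range_succ]
  -- vertical differences
  have hPv : ∀ n, ∀ u ∈ Λ, u + e2 ∈ Λ → P n u + P n (u + e2) = E2 (u + n • e1) + E2 u := by
    intro n u hu hu2
    have e : ∀ i : ℕ, E1 (u + i • e1) + E1 (u + e2 + i • e1) = E2 (u + (i+1) • e1) + E2 (u + i • e1) := by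
      intro i
      have h3 := hsq (u + i • e1) (hΛn i u hu) (by
        have := hΛn i _ hu2
        rwa [add_right_comm] at this)
      have h4 := z2 _ _ _ _ h3
      rw [add_right_comm u e2, h4, succ_nsmul, ← add_assoc u]
    simp only [hP]
    rw [← Finset.sum_add_distrib, Finset.sum_congr rfl fun i _ => e i, tele2 (fun i => E2 (u + i • e1))]
    simp
  have hT0 : ∀ u ∈ Λ, P N u = 0 := by
    obtain ⟨v0, hv0, hv0r⟩ := hrow
    have hz : P N v0 = 0 := by
      simp only [hP]
      refine Finset.sum_eq_zero fun i _ => hE1 _ (fun h => hv0r i (hB h)) fun h => hv0r (i+1) ?_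
      rw [succ_nsmul, ← add_assoc]; exact hB h
    intro u hu
    rw [← hz]
    refine hconn (P N) ?_ ?_ u hu v0 hv0
    · intro v _
      have a1 : P (N+1) v = P N v + E1 v := by rw [hPsucc, hNe, add_zero]
      have a2 : P (N+1) v = P N (v + e1) + E1 v := by
        simp only [hP]
        rw [Finset.sum_range_succ', zero_smul, add_zero]
        congr 1
        refine Finset.sum_congr rfl fun i _ => ?_
        rw [succ_nsmul', ← add_assoc]
      exact add_right_cancel (a2.symm.trans a1)
    · intro v hv hv2
      have := hPv N v hv hv2
      rw [hNe, add_zero, CharTwo.add_self_eq_zero] at this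
      exact (CharTwo.add_eq_zero.1 this).symm
  refine ⟨fun v => P (t v) (r v), ?_, ?_, ?_⟩
  · intro v hv
    have hval : t (v + e1) = if t v + 1 = N then 0 else t v + 1 := by
      have : ξ (v + e1) - ξ k0 + ((l + 1 : ℕ) : ZMod N) = ((t v + 1 : ℕ) : ZMod N) := by
        have h4 : ((t v : ℕ) : ZMod N) = ξ v - ξ k0 + ((l + 1 : ℕ) : ZMod N) := by
          simp only [ht]; exact ZMod.natCast_zmod_val _
        rw [h1]; push_cast at h4 ⊢; rw [h4]; ring
      have e : t (v + e1) = ((t v + 1 : ℕ) : ZMod N).val := by rw [← this]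
      rw [e]
      split_ifs with h
      · rw [h]; simp
      · exact ZMod.val_natCast_of_lt (by have := htN v; omega)
    have hE : E1 v = E1 (r v + t v • e1) := by rw [hvr]
    show P (t (v + e1)) (r (v + e1)) = P (t v) (r v) + E1 v
    rw [hE, ← hPsucc]
    by_cases h : t v + 1 = N
    · rw [hval, if_pos h, h, hT0 _ (hrΛ v hv)]; simp [hP]
    · have : r (v + e1) = r v := by
        simp only [hr]; rw [hval, if_neg h, succ_nsmul]; abel
      rw [this, hval, if_neg h]
  · intro v hv hv2
    have e1' : t (v + e2) = t v := by simp only [ht]; rw [h2]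
    have e2' : r (v + e2) = r v + e2 := by simp only [hr]; rw [e1']; abel
    show P (t (v + e2)) (r (v + e2)) = P (t v) (r v) + E2 v
    rw [e1', e2']
    have h3 := hPv (t v) (r v) (hrΛ v hv) (by rw [← e2']; exact hrΛ _ hv2)
    rw [hvr] at h3
    have h4 : E2 (r v) = 0 := by
      apply hE2
      · have := hcol v 0 (by omega) (Or.inl rfl)
        simpa using this
      · have := hcol (v + e2) 0 (by omega) (Or.inl rfl)
        rw [e2'] at this
        simpa using this
    rw [h4, add_zero] at h3
    rw [← h3, ← add_assoc, CharTwo.add_self_eq_zero, zero_add]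
  · intro v hv hf
    have hf' : P (t v) (r v) ≠ 0 := hf
    have hE0 : ∀ i, i + 1 ≤ N → 2 * l + 1 < i → E1 (r v + i • e1) = 0 := by
      intro i hi hi2
      apply hE1
      · exact hcol v i (by omega) (Or.inr hi2)
      · have := hcol v (i+1) hi (Or.inr (by omega))
        rwa [succ_nsmul, ← add_assoc] at this
    have ht2 : t v ≤ 2 * l + 1 := by
      by_contra hlt
      push Not at hlt
      apply hf'
      have hmono : ∀ n, t v ≤ n → n ≤ N → P n (r v) = P (t v) (r v) := by
        intro n hn
        induction n, hn using Nat.le_induction with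
        | base => intro _; rfl
        | succ n hn ih =>
          intro hnN
          rw [hPsucc, hE0 n hnN (by omega), add_zero, ih (by omega)]
      rw [← hmono N (htN v).le le_rfl, hT0 _ (hrΛ v hv)]
    have ht1 : 1 ≤ t v := by
      by_contra h0
      have : t v = 0 := by omega
      apply hf'; rw [this]; simp [hP]
    obtain ⟨i, hi, hne⟩ := Finset.exists_ne_zero_of_sum_ne_zero hf'
    rw [Finset.mem_range] at hi
    have : ∃ i' : ℕ, i' < N ∧ r v + i' • e1 ∈ B := by
      by_contra hcon
      push Not at hcon
      apply hne
      apply hE1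
      · exact hcon i (hi.trans (htN v))
      · have := hcon (i+1) (by have := htN v; omega)
        rwa [succ_nsmul, ← add_assoc] at this
    obtain ⟨i', hi', hmem⟩ := this
    obtain ⟨a, b, hb, hv', ha, q1, q2⟩ := hbox _ (hB hmem)
    rw [htadd v i' hi'] at ha
    refine ⟨(t v : ℤ) - (l + 1), b, ?_, hb, ?_⟩
    · rw [abs_le]; omega
    · have e3 : v = (r v + i' • e1) + ((t v : ℤ) - i') • e1 := by
        rw [sub_smul, natCast_zsmul, natCast_zsmul]
        conv_lhs => rw [← hvr v]
        abel
      have e4 : ((t v : ℤ) - (l + 1)) • e1 = ((i' : ℤ) - (l+1)) • e1 + ((t v : ℤ) - i') • e1 := by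
        rw [← add_smul]; congr 1; ring
      rw [e4]
      calc v = (r v + i' • e1) + ((t v : ℤ) - i') • e1 := e3
        _ = _ := by rw [hv', ha]; abel

end topo

/-- The star-adjacency graph on the blocked sites of `Λ`. -/
def starG {V : Type*} [AddCommGroup V] (e1 e2 : V) (Y : Set V) : SimpleGraph V where
  Adj u v := u ≠ v ∧ u ∈ Y ∧ v ∈ Y ∧ ∃ a b : ℤ, |a| ≤ 1 ∧ |b| ≤ 1 ∧ v = u + a • e1 + b • e2
  symm := by
    constructor
    rintro u v ⟨h, hu, hv, a, b, ha, hb, rfl⟩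
    refine ⟨h.symm, hv, hu, -a, -b, by rwa [abs_neg], by rwa [abs_neg], ?_⟩
    rw [neg_smul, neg_smul]; abel
  loopless := ⟨fun u h => h.1 rfl⟩

section topo2
variable {V : Type*} [AddCommGroup V] {e1 e2 : V} {Λ : Set V}

lemma walk_box {Y : Set V} {u v : V} (w : (starG e1 e2 Y).Walk u v) : v ∈ box e1 e2 u w.length := by
  induction w with
  | nil => exact ⟨0, 0, by simp, by simp, by simp⟩
  | cons h p ih =>
    have hlen := SimpleGraph.Walk.length_cons h p
    obtain ⟨a, b, ha, hb, hv⟩ := ih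
    obtain ⟨_, _, _, a', b', ha', hb', hv'⟩ := h
    refine ⟨a + a', b + b', ?_, ?_, ?_⟩
    · rw [hlen]; push_cast
      exact (abs_add_le _ _).trans (by linarith)
    · rw [hlen]; push_cast
      exact (abs_add_le _ _).trans (by linarith)
    · rw [hv, hv', add_smul, add_smul]; abel

lemma box_mono {u : V} {l m : ℕ} (h : l ≤ m) : box e1 e2 u l ⊆ box e1 e2 u m := by
  rintro v ⟨a, b, ha, hb, hv⟩
  have : (l:ℤ) ≤ m := by exact_mod_cast h
  exact ⟨a, b, ha.trans this, hb.trans this, hv⟩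

lemma z2sum (a b c d : ZMod 2) : (a + b) + (b + c) + (d + c) + (a + d) = 0 := by
  revert a b c d; decide

theorem topo_main {N : ℕ} [NeZero N] {ξ : V → ZMod N}
    (hNe : N • e1 = 0) (h1 : ∀ v, ξ (v + e1) = ξ v + 1) (h2 : ∀ v, ξ (v + e2) = ξ v)
    (hΛ1 : ∀ v ∈ Λ, v + e1 ∈ Λ) (hfin : Λ.Finite)
    (hconn : ∀ g : V → ZMod 2, (∀ v ∈ Λ, g (v + e1) = g v) → (∀ v ∈ Λ, v + e2 ∈ Λ → g (v + e2) = g v) →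
      ∀ u ∈ Λ, ∀ v ∈ Λ, g u = g v)
    {l : ℕ} (hN : 2 * l + 1 < N)
    (hrow : ∀ k0 ∈ Λ, ∃ v ∈ Λ, ∀ i : ℕ, v + i • e1 ∉ box e1 e2 k0 l)
    (X : Set V)
    (hpath : ∀ u v, ∀ w : (starG e1 e2 (X ∩ Λ)).Walk u v, w.IsPath → w.length ≤ l)
    (χ : V → ZMod 2) (hχ1 : ∀ v ∈ Λ, v ∉ X → v + e1 ∉ X → χ v = χ (v + e1))
    (hχ2 : ∀ v ∈ Λ, v + e2 ∈ Λ → v ∉ X → v + e2 ∉ X → χ v = χ (v + e2))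
    (O : Bool → Set V) (hOΛ : ∀ b, O b ⊆ Λ)
    (hO : ∀ b, ∀ g : V → ZMod 2, (∀ v ∈ Λ, v ∉ X → v + e1 ∉ X → g (v + e1) = g v) →
      (∀ v ∈ Λ, v + e2 ∈ Λ → v ∉ X → v + e2 ∉ X → g (v + e2) = g v) → ∀ u ∈ O b, ∀ v ∈ O b, g u = g v)
    (hObox : ∀ b, ∀ k0, ∃ v ∈ O b, v ∉ box e1 e2 k0 l) :
    ∀ p ∈ O true, ∀ q ∈ O false, χ p = χ q := by
  set S := starG e1 e2 (X ∩ Λ) with hS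
  set B : S.ConnectedComponent → Set V := fun c => {v | v ∈ X ∩ Λ ∧ S.connectedComponentMk v = c} with hBdef
  set K : Finset S.ConnectedComponent :=
    (hfin.toFinset.filter (fun v => v ∈ X)).image S.connectedComponentMk with hK
  set e : S.ConnectedComponent → V → V → ZMod 2 :=
    fun c u v => if u ∈ B c ∨ v ∈ B c then χ u + χ v else 0 with he
  have star : ∀ u v : V, u ∈ X → v ∈ X → u ∈ Λ → v ∈ Λ →
      (∃ a b : ℤ, |a| ≤ 1 ∧ |b| ≤ 1 ∧ v = u + a • e1 + b • e2) →
      S.connectedComponentMk u = S.connectedComponentMk v := by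
    intro u v hu hv hu' hv' hab
    by_cases huv : u = v
    · rw [huv]
    · have : S.Adj u v := ⟨huv, ⟨hu, hu'⟩, ⟨hv, hv'⟩, hab⟩
      exact SimpleGraph.ConnectedComponent.sound this.reachable
  have hBX : ∀ c v, v ∈ B c → v ∈ X := fun c v h => h.1.1
  have star' : ∀ c, ∀ u v : V, u ∈ B c → v ∈ X → v ∈ Λ →
      (∃ a b : ℤ, |a| ≤ 1 ∧ |b| ≤ 1 ∧ v = u + a • e1 + b • e2) → v ∈ B c := by
    intro c u v hu hv hv' hab
    exact ⟨⟨hv, hv'⟩, (star u v hu.1.1 hv hu.1.2 hv' hab).symm.trans hu.2⟩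
  have esum : ∀ u ∈ Λ, ∀ v ∈ Λ, (∃ a b : ℤ, |a| ≤ 1 ∧ |b| ≤ 1 ∧ v = u + a • e1 + b • e2) →
      (u ∉ X → v ∉ X → χ u = χ v) → ∑ c ∈ K, e c u v = χ u + χ v := by
    intro u hu v hv hab hfree
    by_cases hblk : u ∈ X ∨ v ∈ X
    · obtain ⟨c, hcK, hc, huniq⟩ : ∃ c ∈ K, (u ∈ B c ∨ v ∈ B c) ∧ ∀ c', (u ∈ B c' ∨ v ∈ B c') → c' = c := by
        rcases hblk with hux | hvx
        · refine ⟨S.connectedComponentMk u, ?_, Or.inl ⟨⟨hux, hu⟩, rfl⟩, ?_⟩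
          · exact Finset.mem_image_of_mem _ (by simp [hu, hux])
          · rintro c' (h | h)
            · exact h.2.symm
            · exact h.2.symm.trans (star u v hux h.1.1 hu hv hab).symm
        · refine ⟨S.connectedComponentMk v, ?_, Or.inr ⟨⟨hvx, hv⟩, rfl⟩, ?_⟩
          · exact Finset.mem_image_of_mem _ (by simp [hv, hvx])
          · rintro c' (h | h)
            · exact h.2.symm.trans (star u v h.1.1 hvx hu hv hab)
            · exact h.2.symm
      rw [Finset.sum_eq_single c]
      · simp only [he]; rw [if_pos hc]
      · intro c' _ hne
        simp only [he]; rw [if_neg (fun h => hne (huniq c' h))]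
      · intro h; exact absurd hcK h
    · push Not at hblk
      rw [hfree hblk.1 hblk.2, CharTwo.add_self_eq_zero]
      apply Finset.sum_eq_zero
      intro c _
      simp only [he]
      rw [if_neg]
      rintro (h | h)
      · exact hblk.1 (hBX c _ h)
      · exact hblk.2 (hBX c _ h)
  have ab1 : ∀ v : V, ∃ a b : ℤ, |a| ≤ 1 ∧ |b| ≤ 1 ∧ v + e1 = v + a • e1 + b • e2 := fun v =>
    ⟨1, 0, by simp, by simp, by simp⟩
  have ab2 : ∀ v : V, ∃ a b : ℤ, |a| ≤ 1 ∧ |b| ≤ 1 ∧ v + e2 = v + a • e1 + b • e2 := fun v =>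
    ⟨0, 1, by simp, by simp, by simp⟩
  have hfc : ∀ c : S.ConnectedComponent, c ∈ K → ∃ f : V → ZMod 2, (∀ v ∈ Λ, f (v + e1) = f v + e c v (v + e1)) ∧
      (∀ v ∈ Λ, v + e2 ∈ Λ → f (v + e2) = f v + e c v (v + e2)) ∧
      (∃ k0, ∀ v ∈ Λ, f v ≠ 0 → v ∈ box e1 e2 k0 l) := by
    intro c hc
    obtain ⟨k0, hk0, hkc⟩ := Finset.mem_image.1 hc
    simp only [Finset.mem_filter, Set.Finite.mem_toFinset] at hk0
    have hBbox : B c ⊆ box e1 e2 k0 l := by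
      intro v hv
      have hr : S.Reachable k0 v := SimpleGraph.ConnectedComponent.exact (hkc.trans hv.2.symm)
      obtain ⟨w, hw⟩ := hr.exists_isPath
      exact box_mono (hpath _ _ w hw) (walk_box w)
    have hoc := one_comp (E1 := fun v => e c v (v + e1)) (E2 := fun v => e c v (v + e2))
      hNe h1 h2 hΛ1 hconn hN (hrow k0 hk0.1) hBbox ?_ ?_ ?_
    · obtain ⟨f, hf1, hf2, hf3⟩ := hoc
      exact ⟨f, hf1, hf2, k0, hf3⟩
    · intro v hv hv2
      have hv1 := hΛ1 v hv
      have hv3 : v + e1 + e2 ∈ Λ := by have := hΛ1 _ hv2; rwa [add_right_comm] at this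
      have ec : v + e2 + e1 = v + e1 + e2 := add_right_comm _ _ _
      rw [ec]
      by_cases hany : v ∈ B c ∨ v + e1 ∈ B c ∨ v + e1 + e2 ∈ B c ∨ v + e2 ∈ B c
      · have key : (v ∈ X → v ∈ B c) ∧ (v + e1 ∈ X → v + e1 ∈ B c) ∧
            (v + e1 + e2 ∈ X → v + e1 + e2 ∈ B c) ∧ (v + e2 ∈ X → v + e2 ∈ B c) := by
          obtain ⟨u, s, t, hs, ht, hu, rfl⟩ : ∃ (u : V) (s t : ℤ), (s = 0 ∨ s = 1) ∧ (t = 0 ∨ t = 1) ∧ u ∈ B c ∧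
              u = v + s • e1 + t • e2 := by
            rcases hany with h | h | h | h
            · exact ⟨_, 0, 0, by simp, by simp, h, by simp⟩
            · exact ⟨_, 1, 0, by simp, by simp, h, by simp⟩
            · exact ⟨_, 1, 1, by simp, by simp, h, by simp⟩
            · exact ⟨_, 0, 1, by simp, by simp, h, by simp⟩
          refine ⟨fun h => star' c _ _ hu h hv ⟨-s, -t, ?_, ?_, ?_⟩,
            fun h => star' c _ _ hu h hv1 ⟨1-s, -t, ?_, ?_, ?_⟩,
            fun h => star' c _ _ hu h hv3 ⟨1-s, 1-t, ?_, ?_, ?_⟩,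
            fun h => star' c _ _ hu h hv2 ⟨-s, 1-t, ?_, ?_, ?_⟩⟩
          all_goals first
            | (simp only [sub_smul, neg_smul, one_smul]; abel)
            | (rw [abs_le]; omega)
        obtain ⟨k1, k2, k3, k4⟩ := key
        have eq : ∀ u w : V, (u ∈ X → u ∈ B c) → (w ∈ X → w ∈ B c) → (u ∉ X → w ∉ X → χ u = χ w) →
            e c u w = χ u + χ w := by
          intro u w hu hw hf
          simp only [he]
          split_ifs with h
          · rfl
          · push Not at h
            rw [hf (fun hx => h.1 (hu hx)) (fun hx => h.2 (hw hx)), CharTwo.add_self_eq_zero]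
        rw [eq _ _ k1 k2 (hχ1 v hv), eq _ _ k2 k3 (hχ2 _ hv1 hv3),
          eq _ _ k4 k3 (by rw [← ec]; exact hχ1 _ hv2), eq _ _ k1 k4 (hχ2 v hv hv2)]
        exact z2sum _ _ _ _
      · push Not at hany
        obtain ⟨n1, n2, n3, n4⟩ := hany
        simp [he, n1, n2, n3, n4]
    · intro v n1 n2; simp [he, n1, n2]
    · intro v n1 n2; simp [he, n1, n2]
  choose! f hf1 hf2 k0 hf3 using hfc
  have hg := hconn (fun v => (∑ c ∈ K, f c v) + χ v) ?_ ?_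
  · intro p hp q hq
    have hz : ∀ b, ∀ p ∈ O b, ∀ c ∈ K, f c p = 0 := by
      intro b p hp c hc
      obtain ⟨v, hv, hvb⟩ := hObox b (k0 c)
      rw [hO b (f c) ?_ ?_ p hp v hv]
      · by_contra hne
        exact hvb (hf3 c hc v (hOΛ b hv) hne)
      · intro v hv n1 n2
        rw [hf1 c hc v hv]
        have m1 : v ∉ B c := fun h => n1 (hBX c _ h)
        have m2 : v + e1 ∉ B c := fun h => n2 (hBX c _ h)
        simp [he, m1, m2]
      · intro v hv hv2 n1 n2
        rw [hf2 c hc v hv hv2]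
        have m1 : v ∉ B c := fun h => n1 (hBX c _ h)
        have m2 : v + e2 ∉ B c := fun h => n2 (hBX c _ h)
        simp [he, m1, m2]
    have := hg p (hOΛ _ hp) q (hOΛ _ hq)
    rwa [Finset.sum_eq_zero (hz true p hp), Finset.sum_eq_zero (hz false q hq), zero_add, zero_add] at this
  · intro v hv
    rw [Finset.sum_congr rfl (fun c hc => hf1 c hc v hv), Finset.sum_add_distrib,
      esum v hv _ (hΛ1 v hv) (ab1 v) (hχ1 v hv)]
    have := CharTwo.add_self_eq_zero (χ (v + e1))
    linear_combination this
  · intro v hv hv2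
    rw [Finset.sum_congr rfl (fun c hc => hf2 c hc v hv hv2), Finset.sum_add_distrib,
      esum v hv _ hv2 (ab2 v) (hχ2 v hv hv2)]
    have := CharTwo.add_self_eq_zero (χ (v + e2))
    linear_combination this

end topo2

/-- The projected unit vector. -/
def ev (d N : ℕ) (i : Fin (d+1)) : Cyl d N := projE d N (Pi.single i 1)

lemma projE_add {d N : ℕ} (u v : Lat d) : projE d N (u + v) = projE d N u + projE d N v := by
  ext l <;> simp [projE]

lemma projE_zsmul {d N : ℕ} (a : ℤ) (v : Lat d) : projE d N (a • v) = a • projE d N v := by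
  ext l <;> simp [projE]

lemma projE_sub {d N : ℕ} (u v : Lat d) : projE d N (u - v) = projE d N u - projE d N v := by
  ext l <;> simp [projE]

lemma projE_dvd {d N : ℕ} {v : Lat d} (h : projE d N v = 0) (i : Fin (d+1)) : (N:ℤ) ∣ v i := by
  induction i using Fin.lastCases with
  | last => have := congrArg Prod.snd h; simp only [projE, Prod.snd_zero] at this; rw [this]; exact dvd_zero _
  | cast l =>
    have := congrFun (congrArg Prod.fst h) l
    simp only [projE, Prod.fst_zero, Pi.zero_apply] at this
    exact (ZMod.intCast_zmod_eq_zero_iff_dvd _ _).1 this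

lemma mem_Cblk_iff {d N : ℕ} {j : ℤ} {x : Cyl d N} : x ∈ Cblk d N j ↔
    -(3 * N : ℤ) ≤ 4 * (x.2 - j * N) ∧ 4 * (x.2 - j * N) ≤ (3 * N : ℤ) := by
  constructor
  · intro h
    have := mem_Cblk_abs h
    have h2 := abs_le.1 (show |x.2 - j * N| ≤ |x.2 - j * N| from le_rfl)
    constructor <;> linarith [h2.1, h2.2]
  · rintro ⟨h1, h2⟩
    have h3 : ((-(3 * N) : ℤ):ℝ) ≤ ((4 * (x.2 - j * N) : ℤ) : ℝ) := by exact_mod_cast h1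
    have h4 : ((4 * (x.2 - j * N) : ℤ) : ℝ) ≤ ((3 * N : ℤ):ℝ) := by exact_mod_cast h2
    push_cast at h3 h4
    constructor <;> linarith

lemma Cblk_finite {d N : ℕ} [NeZero N] (j : ℤ) : (Cblk d N j).Finite := by
  apply Set.Finite.subset (s := (Set.univ : Set (Fin d → ZMod N)) ×ˢ Set.Icc (j * N - 3 * N) (j * N + 3 * N))
  · exact Set.finite_univ.prod (Set.finite_Icc _ _)
  · intro x hx
    rw [mem_Cblk_iff] at hx
    simp only [Set.mem_prod, Set.mem_univ, true_and, Set.mem_Icc]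
    omega

lemma lat_two {d : ℕ} {i1 i2 : Fin (d+1)} (h12 : i1 ≠ i2) (v : Lat d) (hv : ∀ i, i ∉ ({i1, i2} : Finset (Fin (d+1))) → v i = 0) :
    v = v i1 • Pi.single i1 1 + v i2 • Pi.single i2 1 := by
  ext i
  simp only [Pi.add_apply, Pi.smul_apply, smul_eq_mul, Pi.single_apply]
  by_cases h1 : i = i1
  · subst h1; simp [h12]
  · by_cases h2 : i = i2
    · subst h2; simp [h1]
    · rw [hv i (by simp [h1, h2])]; simp [h1, h2]

lemma mem_plane {d N : ℕ} {i1 i2 : Fin (d+1)} (h12 : i1 ≠ i2) (y : Lat d) (z : Cyl d N) :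
    z ∈ (fun v => projE d N (y + v)) '' {v : Lat d | ∀ i ∉ ({i1, i2} : Finset (Fin (d+1))), v i = 0} ↔
    ∃ a b : ℤ, z = projE d N y + a • ev d N i1 + b • ev d N i2 := by
  constructor
  · rintro ⟨v, hv, rfl⟩
    refine ⟨v i1, v i2, ?_⟩
    simp only []
    conv_lhs => rw [lat_two h12 v hv]
    rw [projE_add, projE_add, projE_zsmul, projE_zsmul, add_assoc]; rfl
  · rintro ⟨a, b, rfl⟩
    refine ⟨a • Pi.single i1 1 + b • Pi.single i2 1, ?_, ?_⟩
    · intro i hi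
      simp only [Finset.mem_insert, Finset.mem_singleton, not_or] at hi
      simp [Pi.single_apply, hi.1, hi.2]
    · simp only []
      rw [projE_add, projE_add, projE_zsmul, projE_zsmul, add_assoc]; rfl

lemma adj_symm {d N : ℕ} {x y : Cyl d N} (h : adj d N x y) : adj d N y x := by
  obtain ⟨hne, e, he, rfl⟩ := h
  refine ⟨hne.symm, -e, ?_, ?_⟩
  · unfold unitVecs at he ⊢
    obtain ⟨⟨i, b⟩, -, rfl⟩ := Finset.mem_image.1 he
    refine Finset.mem_image.2 ⟨⟨i, !b⟩, Finset.mem_univ _, ?_⟩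
    rw [← Pi.single_neg]
    cases b <;> simp
  · have := projE_add (N := N) e (-e)
    rw [add_neg_cancel] at this
    have h0 : projE d N 0 = 0 := by ext l <;> simp [projE]
    rw [h0] at this
    rw [add_assoc, ← this, add_zero]

lemma ev_adj {d N : ℕ} (hN : 2 ≤ N) (i : Fin (d+1)) (x : Cyl d N) : adj d N x (x + ev d N i) := by
  refine ⟨?_, Pi.single i 1, ?_, rfl⟩
  · intro h
    have h0 : ev d N i = 0 := by simpa using h.symm
    have := projE_dvd h0 i
    simp only [Pi.single_eq_same] at this
    have := Int.le_of_dvd one_pos this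
    omega
  · unfold unitVecs
    exact Finset.mem_image.2 ⟨⟨i, true⟩, Finset.mem_univ _, by simp⟩

lemma plane_adj {d N : ℕ} (hN : 2 ≤ N) {i1 i2 : Fin (d+1)} {y : Lat d} {u v : Cyl d N}
    (hu : ∃ a b : ℤ, u = projE d N y + a • ev d N i1 + b • ev d N i2)
    (hv : ∃ a b : ℤ, v = projE d N y + a • ev d N i1 + b • ev d N i2) (h : adj d N u v) :
    (v = u + ev d N i1 ∨ u = v + ev d N i1) ∨ (v = u + ev d N i2 ∨ u = v + ev d N i2) := by
  obtain ⟨hne, e, he, hvu⟩ := h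
  unfold unitVecs at he
  obtain ⟨⟨i, b⟩, -, rfl⟩ := Finset.mem_image.1 he
  have key : ∀ i, (v = u + projE d N (Pi.single i (if b then (1:ℤ) else -1))) → (v = u + ev d N i ∨ u = v + ev d N i) := by
    intro i hi
    cases b with
    | true => left; rw [hi]; simp [ev]
    | false =>
      right; rw [hi]
      have : Pi.single i (-1) + Pi.single i 1 = (0 : Lat d) := by rw [← Pi.single_add]; simp
      have h2 := projE_add (N := N) (Pi.single i (-1)) (Pi.single i 1 : Lat d)
      have h0 : projE d N 0 = 0 := by ext l <;> simp [projE]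
      rw [this, h0] at h2
      simp only [Bool.false_eq_true, if_false, ev]
      rw [add_assoc, ← h2, add_zero]
  by_cases h1 : i = i1
  · left; exact key i1 (by rw [← h1]; exact hvu)
  by_cases h2 : i = i2
  · right; exact key i2 (by rw [← h2]; exact hvu)
  exfalso
  obtain ⟨a, b', hu⟩ := hu
  obtain ⟨a', b'', hv⟩ := hv
  have h0 : projE d N (Pi.single i (if b then (1:ℤ) else -1) - ((a'-a) • Pi.single i1 1 + (b''-b') • Pi.single i2 1)) = 0 := by
    rw [projE_sub, projE_add, projE_zsmul, projE_zsmul]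
    change _ - ((a' - a) • ev d N i1 + (b'' - b') • ev d N i2) = 0
    have : projE d N (Pi.single i (if b then (1:ℤ) else -1)) = v - u := by rw [hvu]; abel
    rw [this, hu, hv, sub_smul, sub_smul]; abel
  have := projE_dvd h0 i
  simp only [Pi.sub_apply, Pi.add_apply, Pi.smul_apply, Pi.single_apply, if_true, h1, h2, if_false, smul_zero,
    add_zero, sub_zero] at this
  cases b with
  | true => have := Int.le_of_dvd one_pos (by simpa using this); omega
  | false => have := Int.le_of_dvd one_pos (by simpa using this); omega

theorem topo_cyl {d N : ℕ} {l L : ℕ} (hL : 2 * l < L) (hN : 4 * l + 8 ≤ N) (j : ℤ) {F : Set (Cyl d N)}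
    (hF : F ∈ Lcoll d N 2) (X : Set (Cyl d N)) {O₁ O₂ : Set (Cyl d N)}
    (hO1 : O₁ ⊆ (F ∩ Cblk d N j) \ X) (hO2 : O₂ ⊆ (F ∩ Cblk d N j) \ X)
    (hc1 : IsConnIn d N O₁) (hc2 : IsConnIn d N O₂) (hd1 : diamGE d N O₁ L) (hd2 : diamGE d N O₂ L)
    {p q : Cyl d N} (hp : p ∈ O₁) (hq : q ∈ O₂) (hpq : ¬ connIn d N ((F ∩ Cblk d N j) \ X) p q) :
    ∃ i1 i2 : Fin (d+1), ∃ u v, ∃ w : (starG (ev d N i1) (ev d N i2) (X ∩ (F ∩ Cblk d N j))).Walk u v,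
      w.IsPath ∧ l < w.length := by
  have : NeZero N := ⟨by omega⟩
  obtain ⟨I, hI, y, rfl⟩ := hF
  obtain ⟨i1, i2, h12, hl1, hIe⟩ : ∃ i1 i2 : Fin (d+1), i1 ≠ i2 ∧ i1 ≠ Fin.last d ∧ I = {i1, i2} := by
    obtain ⟨a, b, hab, hI'⟩ := Finset.card_eq_two.1 hI
    by_cases ha : a = Fin.last d
    · exact ⟨b, a, hab.symm, fun h => hab (ha.trans h.symm), by rw [hI', Finset.pair_comm]⟩
    · exact ⟨a, b, hab, ha, hI'⟩
  subst hIe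
  refine ⟨i1, i2, ?_⟩
  by_contra hcon
  push Not at hcon
  apply hpq
  obtain ⟨t, rfl⟩ := Fin.exists_castSucc_eq.2 hl1
  set F := (fun v => projE d N (y + v)) '' {v : Lat d | ∀ i ∉ ({t.castSucc, i2} : Finset (Fin (d+1))), v i = 0} with hFdef
  set Λ := F ∩ Cblk d N j with hΛdef
  set e1 := ev d N t.castSucc with he1
  set e2 := ev d N i2 with he2
  have hFm : ∀ z, z ∈ F ↔ ∃ a b : ℤ, z = projE d N y + a • e1 + b • e2 := fun z => mem_plane h12 y z
  have hFadd : ∀ z ∈ F, ∀ a b : ℤ, z + a • e1 + b • e2 ∈ F := by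
    intro z hz a b
    obtain ⟨a', b', h⟩ := (hFm z).1 hz
    refine (hFm _).2 ⟨a' + a, b' + b, ?_⟩
    rw [h, add_smul, add_smul]; abel
  have e12 : e1.2 = 0 := by simp [he1, ev, projE, Pi.single_apply]
  obtain ⟨ε, hε, e22⟩ : ∃ ε : ℤ, (ε = 0 ∨ ε = 1) ∧ e2.2 = ε := by
    by_cases h : i2 = Fin.last d
    · exact ⟨1, by simp, by simp [he2, ev, projE, h]⟩
    · exact ⟨0, by simp, by simp [he2, ev, projE, Pi.single_apply, Ne.symm h]⟩
  have hh : ∀ (z : Cyl d N) (a b : ℤ), (z + a • e1 + b • e2).2 = z.2 + b * ε := by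
    intro z a b
    simp [e12, e22]
  have hh2 : ∀ (z : Cyl d N) (b : ℤ), (z + b • e2).2 = z.2 + b * ε := by
    intro z b
    simp [e22]
  have hFadd2 : ∀ z ∈ F, ∀ b : ℤ, z + b • e2 ∈ F := by
    intro z hz b
    have := hFadd z hz 0 b
    simpa using this
  have hΛ1z : ∀ v ∈ Λ, ∀ a : ℤ, v + a • e1 ∈ Λ := by
    intro v hv a
    refine ⟨by simpa using hFadd v hv.1 a 0, ?_⟩
    have h2 := hv.2
    have h3 : (v + a • e1).2 = v.2 := by simp [e12]
    rw [mem_Cblk_iff] at h2 ⊢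
    rw [h3]; exact h2
  have hΛ1 : ∀ v ∈ Λ, v + e1 ∈ Λ := fun v hv => by simpa using hΛ1z v hv 1
  have hfin : Λ.Finite := (Cblk_finite j).subset Set.inter_subset_right
  have hconn : ∀ g : Cyl d N → ZMod 2, (∀ v ∈ Λ, g (v + e1) = g v) →
      (∀ v ∈ Λ, v + e2 ∈ Λ → g (v + e2) = g v) → ∀ u ∈ Λ, ∀ v ∈ Λ, g u = g v := by
    intro g hg1 hg2
    have c1 : ∀ n : ℕ, ∀ u ∈ Λ, g (u + n • e1) = g u := by
      intro n
      induction n with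
      | zero => intro u _; simp
      | succ n ih =>
        intro u hu
        rw [succ_nsmul, ← add_assoc, hg1 _ (by simpa using hΛ1z u hu n), ih u hu]
    have c1z : ∀ a : ℤ, ∀ u ∈ Λ, g (u + a • e1) = g u := by
      intro a u hu
      obtain ⟨n, rfl | rfl⟩ := a.eq_nat_or_neg
      · simpa using c1 n u hu
      · have := c1 n _ (hΛ1z u hu (-(n:ℤ)))
        rw [neg_smul, natCast_zsmul, neg_add_cancel_right] at this
        rw [neg_smul, natCast_zsmul, this]
    have c2 : ∀ n : ℕ, ∀ u ∈ Λ, u + (n:ℤ) • e2 ∈ Λ → g (u + (n:ℤ) • e2) = g u := by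
      intro n
      induction n with
      | zero => intro u _ _; simp
      | succ n ih =>
        intro u hu hu2
        have hm : u + (n:ℤ) • e2 ∈ Λ := by
          refine ⟨hFadd2 u hu.1 n, ?_⟩
          have h1 := hu.2
          have h2 := hu2.2
          rw [mem_Cblk_iff] at h1 h2 ⊢
          rw [hh2] at h2 ⊢
          rcases hε with rfl | rfl
          · simpa using h1
          · push_cast at h2 ⊢; omega
        have es : u + ((n+1:ℕ):ℤ) • e2 = u + (n:ℤ) • e2 + e2 := by
          push_cast; rw [add_smul, one_smul, add_assoc]
        rw [es] at hu2 ⊢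
        rw [hg2 _ hm hu2, ih u hu hm]
    intro u hu v hv
    obtain ⟨a, b, h⟩ := (hFm u).1 hu.1
    obtain ⟨a', b', h'⟩ := (hFm v).1 hv.1
    have hu' := hΛ1z u hu (a' - a)
    have hv' : v = u + (a' - a) • e1 + (b' - b) • e2 := by
      rw [h, h', sub_smul, sub_smul]; abel
    rw [← c1z (a' - a) u hu]
    obtain ⟨n, hn | hn⟩ := (b' - b).eq_nat_or_neg
    · rw [hn] at hv'
      rw [hv'] at hv ⊢
      exact (c2 n _ hu' hv).symm
    · rw [hn, neg_smul] at hv'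
      have : u + (a' - a) • e1 = v + (n:ℤ) • e2 := by rw [hv']; abel
      rw [this] at hu' ⊢
      exact c2 n _ hv hu'
  have h1 : ∀ v : Cyl d N, (v + e1).1 t = v.1 t + 1 := by
    intro v; simp [he1, ev, projE]
  have h2 : ∀ v : Cyl d N, (v + e2).1 t = v.1 t := by
    intro v; simp [he2, ev, projE, Pi.single_apply, h12]
  have hNe : N • e1 = 0 := by
    ext s
    · simp
    · simp [e12]
  have hrow : ∀ k0 ∈ Λ, ∃ v ∈ Λ, ∀ i : ℕ, v + i • e1 ∉ box e1 e2 k0 l := by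
    intro k0 hk0
    obtain ⟨s, hs, hsΛ⟩ : ∃ s : ℤ, (s = l + 1 ∨ s = -(l + 1)) ∧ k0 + s • e2 ∈ Λ := by
      have hk2 := hk0.2
      rw [mem_Cblk_iff] at hk2
      rcases le_total (k0.2 - j * N) 0 with hle | hle
      · refine ⟨l + 1, Or.inl rfl, hFadd2 _ hk0.1 _, ?_⟩
        rw [mem_Cblk_iff, hh2]
        rcases hε with rfl | rfl
        · simpa using hk2
        · constructor <;> push_cast <;> omega
      · refine ⟨-(l + 1), Or.inr rfl, hFadd2 _ hk0.1 _, ?_⟩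
        rw [mem_Cblk_iff, hh2]
        rcases hε with rfl | rfl
        · simpa using hk2
        · constructor <;> push_cast <;> omega
    refine ⟨_, hsΛ, ?_⟩
    rintro i ⟨a, b, ha, hb, hab⟩
    have h0 : projE d N (((i:ℤ) - a) • Pi.single t.castSucc 1 + (s - b) • Pi.single i2 1) = 0 := by
      rw [projE_add, projE_zsmul, projE_zsmul]
      change ((i:ℤ) - a) • e1 + (s - b) • e2 = 0
      rw [sub_smul, sub_smul, natCast_zsmul]
      have h3 : k0 + s • e2 + i • e1 - (k0 + a • e1 + b • e2) = 0 := by rw [hab, sub_self]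
      rw [← h3]; abel
    have := projE_dvd h0 i2
    simp only [Pi.add_apply, Pi.smul_apply, Pi.single_apply, if_true, h12.symm, if_false, smul_zero, zero_add,
      smul_eq_mul, mul_one] at this
    rw [abs_le] at hb
    have hz := Int.eq_zero_of_abs_lt_dvd this (by rw [abs_lt]; omega)
    omega
  have hdist : ∀ (k0 x z : Cyl d N), x ∈ box e1 e2 k0 l → z ∈ box e1 e2 k0 l → cylDist d N x z < L := by
    rintro k0 x z ⟨a, b, ha, hb, rfl⟩ ⟨a', b', ha', hb', rfl⟩
    refine lt_of_le_of_lt (Nat.sInf_le ⟨(a' - a) • Pi.single t.castSucc 1 + (b' - b) • Pi.single i2 1, ?_, rfl⟩) ?_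
    · rw [projE_add, projE_zsmul, projE_zsmul]
      change (a' - a) • e1 + (b' - b) • e2 = _
      rw [sub_smul, sub_smul]; abel
    · refine lt_of_le_of_lt ?_ hL
      unfold linf
      refine Finset.sup_le fun i _ => ?_
      rw [abs_le] at ha hb ha' hb'
      simp only [Pi.add_apply, Pi.smul_apply, Pi.single_apply, smul_eq_mul]
      split_ifs with q1 q2 q2
      · exact absurd (q1.symm.trans q2) h12
      all_goals omega
  have hbox : ∀ O : Set (Cyl d N), diamGE d N O L → ∀ k0, ∃ v ∈ O, v ∉ box e1 e2 k0 l := by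
    rintro O ⟨x, hx, z, hz, hLd⟩ k0
    by_contra hall
    push Not at hall
    exact absurd (hdist k0 x z (hall x hx) (hall z hz)) (not_lt.2 hLd)
  have hconst : ∀ O : Set (Cyl d N), O ⊆ Λ \ X → IsConnIn d N O → ∀ g : Cyl d N → ZMod 2,
      (∀ v ∈ Λ, v ∉ X → v + e1 ∉ X → g (v + e1) = g v) →
      (∀ v ∈ Λ, v + e2 ∈ Λ → v ∉ X → v + e2 ∉ X → g (v + e2) = g v) → ∀ u ∈ O, ∀ v ∈ O, g u = g v := by
    intro O hO hOc g hg1 hg2 u hu v hv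
    have := hOc u hu v hv
    unfold connIn at this
    induction this with
    | refl => rfl
    | tail _ hbc ih =>
      obtain ⟨hb, hc, hadj⟩ := hbc
      rw [ih hb]
      have hb' := hO hb
      have hc' := hO hc
      rcases plane_adj (by omega) ((hFm _).1 hb'.1.1) ((hFm _).1 hc'.1.1) hadj with (h | h) | (h | h)
      · rw [h]; rw [h] at hc'; exact (hg1 _ hb'.1 hb'.2 hc'.2).symm
      · rw [h]; rw [h] at hb'; exact hg1 _ hc'.1 hc'.2 hb'.2
      · rw [h]; rw [h] at hc'; exact (hg2 _ hb'.1 hc'.1 hb'.2 hc'.2).symm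
      · rw [h]; rw [h] at hb'; exact hg2 _ hc'.1 hb'.1 hc'.2 hb'.2
  have hχ : ∀ u v : Cyl d N, u ∈ Λ \ X → v ∈ Λ \ X → adj d N u v →
      (if connIn d N (Λ \ X) p u then (1 : ZMod 2) else 0) = if connIn d N (Λ \ X) p v then 1 else 0 := by
    intro u v hu hv ha
    have : connIn d N (Λ \ X) p u ↔ connIn d N (Λ \ X) p v :=
      ⟨fun h => Relation.ReflTransGen.tail h ⟨hu, hv, ha⟩,
        fun h => Relation.ReflTransGen.tail h ⟨hv, hu, adj_symm ha⟩⟩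
    simp only [this]
  have main := topo_main (ξ := fun v : Cyl d N => v.1 t) hNe h1 h2 hΛ1 hfin hconn (by omega) hrow X hcon
    (fun u => if connIn d N (Λ \ X) p u then (1 : ZMod 2) else 0)
    (fun v hv n1 n2 => hχ _ _ ⟨hv, n1⟩ ⟨hΛ1 v hv, n2⟩ (ev_adj (by omega) _ _))
    (fun v hv hv2 n1 n2 => hχ _ _ ⟨hv, n1⟩ ⟨hv2, n2⟩ (ev_adj (by omega) _ _))
    (fun b => if b then O₁ else O₂)
    (by intro b; cases b
        · exact hO2.trans Set.sdiff_subset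
        · exact hO1.trans Set.sdiff_subset)
    (by intro b; cases b
        · exact hconst O₂ hO2 hc2
        · exact hconst O₁ hO1 hc1)
    (by intro b; cases b
        · exact hbox O₂ hd2
        · exact hbox O₁ hd1) p hp q hq
  have hpp : connIn d N (Λ \ X) p p := Relation.ReflTransGen.refl
  simp only [hpp, if_true] at main
  by_contra hn
  simp [hn] at main

/-- The eight star directions. -/
noncomputable def dirs : Finset (ℤ × ℤ) := (Finset.Icc (-1) 1 ×ˢ Finset.Icc (-1) 1).erase 0

lemma dirs_card : dirs.card = 8 := by decide

lemma dirs_erase_card {δ : ℤ × ℤ} (h : δ ∈ dirs) : (dirs.erase (-δ)).card = 7 := by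
  have : -δ ∈ dirs := by revert δ; decide
  rw [Finset.card_erase_of_mem this, dirs_card]

/-- The traces of non-backtracking star paths of length `n` from `v`. -/
noncomputable def WW {V : Type*} [AddCommGroup V] (e1 e2 : V) : ℕ → V → ℤ × ℤ → Finset (Finset V)
  | 0, v, _ => {{v}}
  | n + 1, v, δ => (dirs.erase (-δ)).biUnion fun δ' =>
      (WW e1 e2 n (v + δ'.1 • e1 + δ'.2 • e2) δ').image (insert v)

lemma WW_card {V : Type*} [AddCommGroup V] (e1 e2 : V) (n : ℕ) : ∀ (v : V) (δ : ℤ × ℤ), δ ∈ dirs →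
    (WW e1 e2 n v δ).card ≤ 7 ^ n := by
  induction n with
  | zero => intro v δ _; simp [WW]
  | succ n ih =>
    intro v δ hδ
    rw [WW]
    refine (Finset.card_biUnion_le_card_mul _ _ (7^n) ?_).trans ?_
    · intro δ' h'
      exact Finset.card_image_le.trans (ih _ _ (Finset.mem_of_mem_erase h'))
    · rw [dirs_erase_card hδ, pow_succ, mul_comm]

lemma WW_card0 {V : Type*} [AddCommGroup V] (e1 e2 : V) (n : ℕ) (v : V) :
    (WW e1 e2 (n+1) v 0).card ≤ 8 * 7 ^ n := by
  rw [WW]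
  refine (Finset.card_biUnion_le_card_mul _ _ (7^n) ?_).trans ?_
  · intro δ' h'
    exact Finset.card_image_le.trans (WW_card _ _ _ _ _ (Finset.mem_of_mem_erase h'))
  · exact Nat.mul_le_mul_right _ ((Finset.card_le_card (Finset.erase_subset _ _)).trans dirs_card.le)

lemma WW_mem {V : Type*} [AddCommGroup V] {e1 e2 : V} {Y : Set V} (n : ℕ) :
    ∀ (u v : V) (w : (starG e1 e2 Y).Walk u v) (δ : ℤ × ℤ), w.IsPath → n ≤ w.length → u ∈ Y →
      (δ ≠ 0 → u + (-δ).1 • e1 + (-δ).2 • e2 ∉ w.support) →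
      ∃ A ∈ WW e1 e2 n u δ, A.card = n + 1 ∧ (∀ x ∈ A, x ∈ w.support) ∧ (↑A : Set V) ⊆ Y := by
  induction n with
  | zero =>
    intro u v w δ _ _ hu _
    exact ⟨{u}, by simp [WW], by simp, by simp, by simpa using hu⟩
  | succ n ih =>
    intro u v w δ hw hlen hu hδ
    cases w with
    | nil => simp at hlen
    | @cons _ x _ h p =>
      have hadj := h
      obtain ⟨hne, -, hx, a, b, ha, hb, hxe⟩ := hadj
      rw [SimpleGraph.Walk.cons_isPath_iff] at hw
      have hlen' : n ≤ p.length := by rw [SimpleGraph.Walk.length_cons] at hlen; omega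
      have hback : x + (-(a,b) : ℤ × ℤ).1 • e1 + (-(a,b) : ℤ × ℤ).2 • e2 = u := by
        simp only [Prod.fst_neg, Prod.snd_neg, neg_smul]; rw [hxe]; abel
      obtain ⟨A, hA, hcard, hsup, hAY⟩ := ih x v p (a, b) hw.1 hlen' hx (fun _ => by rw [hback]; exact hw.2)
      have h0 : ((a, b) : ℤ × ℤ) ≠ 0 := by
        intro h0
        simp only [Prod.mk_eq_zero] at h0
        apply hne; rw [hxe, h0.1, h0.2]; simp
      have hd : ((a, b) : ℤ × ℤ) ∈ dirs := by
        rw [abs_le] at ha hb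
        refine Finset.mem_erase.2 ⟨h0, ?_⟩
        simp only [Finset.mem_product, Finset.mem_Icc]
        exact ⟨ha, hb⟩
      have hnb : ((a, b) : ℤ × ℤ) ≠ -δ := by
        intro hab
        by_cases hδ0 : δ = 0
        · rw [hδ0, neg_zero] at hab; exact h0 hab
        · apply hδ hδ0
          rw [← hab]
          simp only []
          rw [← hxe, SimpleGraph.Walk.support_cons]
          exact List.mem_cons_of_mem _ (SimpleGraph.Walk.start_mem_support p)
      have huA : u ∉ A := fun h => hw.2 (hsup u h)
      refine ⟨insert u A, ?_, ?_, ?_, ?_⟩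
      · rw [WW]
        refine Finset.mem_biUnion.2 ⟨(a, b), Finset.mem_erase.2 ⟨hnb, hd⟩, ?_⟩
        apply Finset.mem_image_of_mem
        simp only []
        rw [← hxe]; exact hA
      · rw [Finset.card_insert_of_notMem huA, hcard]
      · intro z hz
        rw [SimpleGraph.Walk.support_cons]
        rcases Finset.mem_insert.1 hz with rfl | hz
        · exact List.mem_cons_self
        · exact List.mem_cons_of_mem _ (hsup z hz)
      · intro z hz
        rcases Finset.mem_insert.1 (Finset.mem_coe.1 hz) with rfl | hz
        · exact hu
        · exact hAY hz

theorem union_bound {d N : ℕ} {l k : ℕ} {K : ℝ} (hL : 2 * l < ⌊K * Real.log N⌋₊) (hN : 4 * l + 8 ≤ N) (j : ℤ)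
    (μ : Measure (ℕ → Cyl d N)) [IsFiniteMeasure μ] (bd : ℝ) (hbd0 : 0 ≤ bd)
    (hbd : ∀ F ∈ Lcoll d N 2, ∀ A : Finset (Cyl d N), (↑A : Set (Cyl d N)) ⊆ F ∩ Cblk d N j → A.card = l + 2 →
      μ.real {ω | ∃ m : ℕ, (m : ℕ∞) ≤ DD d N j k ω ∧ ∀ x ∈ A, x ∈ ran ω m} ≤ bd) :
    μ.real (Uev d N K j k)ᶜ ≤ (((d:ℝ) + 1)^2 * (3 * (N:ℝ)^(d+1))) * (8 * 7^l) * bd := by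
  have : NeZero N := ⟨by omega⟩
  set ev' : Finset (Cyl d N) → Set (ℕ → Cyl d N) := fun A =>
    {ω | ∃ m : ℕ, (m : ℕ∞) ≤ DD d N j k ω ∧ ∀ x ∈ A, x ∈ ran ω m} with hev
  set S : Finset (Cyl d N) := Finset.univ ×ˢ Finset.Icc (j * N - N) (j * N + N) with hS
  set T : Finset ((Fin (d+1) × Fin (d+1)) × Cyl d N) := Finset.univ ×ˢ S with hT
  set G : (Fin (d+1) × Fin (d+1)) × Cyl d N → Finset (Finset (Cyl d N)) := fun x =>
    (WW (ev d N x.1.1) (ev d N x.1.2) (l+1) x.2 0).filter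
      (fun A => A.card = l + 2 ∧ ∃ F ∈ Lcoll d N 2, (↑A : Set (Cyl d N)) ⊆ F ∩ Cblk d N j) with hG
  have hsub : (Uev d N K j k)ᶜ ⊆ ⋃ x ∈ T, ⋃ A ∈ G x, ev' A := by
    intro ω hω
    unfold Uev at hω
    simp only [Set.mem_compl_iff, Set.mem_ofPred_eq] at hω
    push Not at hω
    obtain ⟨F, hF, n, hn, O₁, O₂, hO1, hO2, hc1, hc2, hd1, hd2, p, hp, q, hq, hpq⟩ := hω
    obtain ⟨i1, i2, u, v, w, hw, hlen⟩ := topo_cyl hL hN j hF (ran ω n) hO1 hO2 hc1 hc2 hd1 hd2 hp hq hpq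
    have hu : u ∈ ran ω n ∩ (F ∩ Cblk d N j) := by
      cases w with
      | nil => simp at hlen
      | cons h p => exact h.2.1
    obtain ⟨A, hA, hcard, -, hAY⟩ := WW_mem (l+1) u v w 0 hw hlen hu (fun h => absurd rfl h)
    simp only [Set.mem_iUnion]
    refine ⟨((i1, i2), u), ?_, A, ?_, n, hn, ?_⟩
    · have h2 := hu.2.2
      rw [mem_Cblk_iff] at h2
      simp only [hT, hS, Finset.mem_product, Finset.mem_univ, true_and, Finset.mem_Icc]
      omega
    · exact Finset.mem_filter.2 ⟨hA, hcard, F, hF, hAY.trans Set.inter_subset_right⟩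
    · intro x hx
      exact (hAY (Finset.mem_coe.2 hx)).1
  have hcardS : (S.card : ℝ) ≤ 3 * (N:ℝ)^(d+1) := by
    have : S.card = N^d * (2 * N + 1) := by
      rw [hS, Finset.card_product, Finset.card_univ, Fintype.card_fun, ZMod.card, Fintype.card_fin, Int.card_Icc]
      congr 1; omega
    rw [this]; push_cast
    have h1 : (1:ℝ) ≤ N := by exact_mod_cast (show 1 ≤ N by omega)
    have h2 : (0:ℝ) ≤ (N:ℝ)^d := by positivity
    rw [pow_succ]
    have := mul_le_mul_of_nonneg_left h1 h2
    linarith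
  have hGx : ∀ x ∈ T, μ.real (⋃ A ∈ G x, ev' A) ≤ (8 * 7^l) * bd := by
    intro x _
    refine (measureReal_biUnion_finset_le _ _).trans ?_
    refine (Finset.sum_le_card_nsmul (G x) _ bd ?_).trans ?_
    · intro A hA
      obtain ⟨_, hcard, F, hF, hAF⟩ := Finset.mem_filter.1 hA
      exact hbd F hF A hAF hcard
    · rw [nsmul_eq_mul]
      refine mul_le_mul_of_nonneg_right ?_ hbd0
      have := (Finset.card_le_card (Finset.filter_subset _ _ : G x ⊆ _)).trans (WW_card0 (ev d N x.1.1) (ev d N x.1.2) l x.2)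
      exact_mod_cast this
  calc μ.real (Uev d N K j k)ᶜ ≤ μ.real (⋃ x ∈ T, ⋃ A ∈ G x, ev' A) := measureReal_mono hsub (measure_ne_top _ _)
    _ ≤ ∑ x ∈ T, μ.real (⋃ A ∈ G x, ev' A) := measureReal_biUnion_finset_le _ _
    _ ≤ T.card • ((8 * 7^l) * bd) := Finset.sum_le_card_nsmul _ _ _ hGx
    _ ≤ _ := by
      rw [nsmul_eq_mul, mul_assoc (((d:ℝ) + 1)^2 * (3 * (N:ℝ)^(d+1)))]
      refine mul_le_mul_of_nonneg_right ?_ (by positivity)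
      rw [hT, Finset.card_product, Finset.card_univ, Fintype.card_prod, Fintype.card_fin]
      push_cast
      rw [← pow_two]
      exact mul_le_mul_of_nonneg_left hcardS (by positivity)

lemma lawP_le {d N : ℕ} (hN : 1 ≤ N) (Pl : Cyl d N → Measure (ℕ → Cyl d N)) (E : Set (ℕ → Cyl d N)) (b : ℝ≥0∞)
    (h : ∀ x, Pl x E ≤ b) : lawP d N Pl E ≤ b := by
  have : NeZero N := ⟨by omega⟩
  unfold lawP
  rw [Measure.smul_apply, Measure.sum_apply_of_countable, smul_eq_mul]
  set S : Finset (Cyl d N) := Finset.univ ×ˢ Finset.Icc (-(N:ℤ)) N with hS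
  have hcard : (S.card : ℝ≥0∞) = (N : ℝ≥0∞) ^ d * (2 * N + 1) := by
    have : S.card = N^d * (2 * N + 1) := by
      rw [hS, Finset.card_product, Finset.card_univ, Fintype.card_fun, ZMod.card, Fintype.card_fin, Int.card_Icc]
      congr 1; omega
    rw [this]; push_cast; ring
  have hsum : ∑' x : Cyl d N, (if x ∈ Bblk d N 0 then Pl x else 0) E ≤ S.card * b := by
    rw [tsum_eq_sum (s := S)]
    · refine (Finset.sum_le_card_nsmul S _ b ?_).trans (by rw [nsmul_eq_mul])
      intro x _
      split_ifs
      · exact h x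
      · simp
    · intro x hx
      rw [if_neg]
      · simp
      · intro hB
        apply hx
        obtain ⟨h1, h2⟩ := hB
        simp only [hS, Finset.mem_product, Finset.mem_univ, true_and, Finset.mem_Icc]
        omega
  rw [← hcard]
  have hc0 : (S.card : ℝ≥0∞) ≠ 0 := by
    rw [hcard]
    have : (N : ℝ≥0∞) ≠ 0 := by exact_mod_cast (show N ≠ 0 by omega)
    simp [this]
  calc _ ≤ (S.card : ℝ≥0∞)⁻¹ * (S.card * b) := mul_le_mul_right hsum _
    _ = b := by
      rw [← mul_assoc, ENNReal.inv_mul_cancel hc0 (ENNReal.natCast_ne_top _), one_mul]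

lemma retProb_mem {ν : ℕ} {Q : ZLat ν → Measure (ℕ → ZLat ν)} (hQ : IsLatRW ν Q) :
    0 ≤ retProb ν Q ∧ retProb ν Q ≤ 1 := by
  have := hQ.1 0
  unfold retProb
  refine ⟨ENNReal.toReal_nonneg, ?_⟩
  exact measureReal_le_one

lemma decay_bound {r' lam D x : ℝ} {m : ℕ} {N : ℕ} {e : ℕ} (hN : 1 ≤ N) (hr : 0 < r') (hx : x = Real.log N)
    (hr' : Real.log r' = -(7/8) * lam) (hlam : 0 < lam) (hm : 8 * D / lam * x / 2 ≤ m) (he : (e:ℝ) ≤ 7/2 * D) :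
    r' ^ m ≤ ((N:ℝ)^e)⁻¹ := by
  have hN' : (0:ℝ) < N := by exact_mod_cast hN
  have hx0 : 0 ≤ x := by rw [hx]; exact Real.log_nonneg (by exact_mod_cast hN)
  rw [← Real.log_le_log_iff (by positivity) (by positivity), Real.log_pow, hr', Real.log_inv, Real.log_pow, ← hx]
  have h1 : 8 * D / lam * x / 2 * lam = 4 * (D * x) := by field_simp; ring
  have h2 : 4 * (D * x) ≤ m * lam := by rw [← h1]; exact mul_le_mul_of_nonneg_right hm hlam.le
  have h3 : (e:ℝ) * x ≤ 7/2 * D * x := mul_le_mul_of_nonneg_right he hx0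
  linarith

lemma ev_log (c : ℝ) (b : ℝ) : ∀ᶠ N : ℕ in atTop, c * Real.log N + b ≤ N := by
  have h := (Real.isLittleO_log_id_atTop.bound (show (0:ℝ) < 1 / (2 * (|c| + 1)) by positivity))
  have h2 := (tendsto_natCast_atTop_atTop (R := ℝ)).eventually h
  have h3 := (tendsto_natCast_atTop_atTop (R := ℝ)).eventually (eventually_ge_atTop (2 * |b|))
  filter_upwards [h2, h3, eventually_ge_atTop 1] with N h2 h3 hN
  simp only [id, Real.norm_eq_abs] at h2
  have hl : 0 ≤ Real.log N := Real.log_nonneg (by exact_mod_cast hN)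
  rw [abs_of_nonneg hl, Nat.abs_cast] at h2
  have h4 : c * Real.log N ≤ (|c| + 1) * Real.log N :=
    mul_le_mul_of_nonneg_right ((le_abs_self c).trans (by linarith)) hl
  have h5 : (|c| + 1) * Real.log N ≤ (|c| + 1) * (1 / (2 * (|c| + 1)) * N) :=
    mul_le_mul_of_nonneg_left h2 (by positivity)
  have h6 : (|c| + 1) * (1 / (2 * (|c| + 1)) * N) = N / 2 := by field_simp
  have := le_abs_self b
  linarith

theorem main_k (k : ℕ) (hk : 2 ≤ k)
    (Q : ZLat (k + 1) → Measure (ℕ → ZLat (k + 1))) (hQ : IsLatRW (k + 1) Q) (ρ c0 : ℝ)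
    (hρ : ρ = 7 * (2 / (((k + 2 : ℕ) : ℝ) + 1) + (1 - 2 / (((k + 2 : ℕ) : ℝ) + 1)) * retProb (k + 1) Q))
    (hρ1 : ρ < 1) (hc0 : c0 = 8 * ((k + 2 : ℕ) : ℝ) / Real.log (1 / ρ))
    (Pl : ∀ N : ℕ, Cyl (k + 2) N → Measure (ℕ → Cyl (k + 2) N))
    (hPl : ∀ N : ℕ, IsCylRW (k + 2) N (Pl N)) :
    ∃ u₀ : ℝ, 0 < u₀ ∧
      Tendsto (fun N : ℕ =>
          (N : ℝ) ^ (2 * (k + 2)) * ⨆ j : ℤ,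
            ((lawP (k + 2) N (Pl N))
              (Uev (k + 2) N c0 j ⌊u₀ * (N : ℝ) ^ (k + 1)⌋₊)ᶜ).toReal)
        atTop (nhds 0) := by
  obtain ⟨hq0, hq1⟩ := retProb_mem hQ
  set q := retProb (k + 1) Q with hq
  have hkR : (2:ℝ) ≤ k := by exact_mod_cast hk
  have hχ : ρ / 7 = 2 / ((k:ℝ) + 3) + (1 - 2 / ((k:ℝ) + 3)) * q := by
    rw [hρ]; push_cast
    have : (k:ℝ) + 2 + 1 = k + 3 := by ring
    rw [this]; ring
  have hρ0 : 0 < ρ := by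
    have h1 : 0 < 2 / ((k:ℝ) + 3) := by positivity
    have h2 : 2 / ((k:ℝ) + 3) ≤ 1 := by rw [div_le_one (by positivity)]; linarith
    have h3 := mul_nonneg (sub_nonneg.2 h2) hq0
    linarith
  set lam := Real.log (1 / ρ) with hlam
  have hlam' : Real.log ρ = -lam := by rw [hlam, one_div, Real.log_inv, neg_neg]
  have hlam0 : 0 < lam := by
    have := Real.log_neg hρ0 hρ1
    linarith
  set r' := ρ ^ (7/8 : ℝ) with hr'
  have hr0 : 0 < r' := Real.rpow_pos_of_pos hρ0 _
  have hr1 : r' < 1 := Real.rpow_lt_one hρ0.le hρ1 (by norm_num)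
  have hρr : ρ < r' := by
    have := Real.rpow_lt_rpow_of_exponent_gt hρ0 hρ1 (show (7/8:ℝ) < 1 by norm_num)
    rwa [Real.rpow_one] at this
  have hrlog : Real.log r' = -(7/8) * lam := by
    rw [hr', Real.log_rpow hρ0, hlam']; ring
  set θ := (ρ / 7 + r' / 7) / 2 with hθ
  have hθ0 : 0 < θ := by positivity
  obtain ⟨K, hK, C, hC, N0, hcov⟩ := cov_prob k hk hQ θ hθ0 (by rw [hθ]; linarith) (by rw [← hχ, hθ]; linarith)
  have h7θ : 7 * θ < r' := by rw [hθ]; linarith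
  set u₀ := Real.log (r' / (7 * θ)) / (C + 1) with hu
  have hlogpos : 0 < Real.log (r' / (7 * θ)) := Real.log_pos (by rw [one_lt_div (by positivity)]; exact h7θ)
  have hu0 : 0 < u₀ := by positivity
  have hexp : 7 * θ * Real.exp (C * u₀) ≤ r' := by
    have h1 : C * u₀ ≤ Real.log (r' / (7 * θ)) := by
      have : (C + 1) * u₀ = Real.log (r' / (7 * θ)) := by rw [hu]; field_simp
      nlinarith
    have h2 := Real.exp_le_exp.2 h1
    rw [Real.exp_log (by positivity)] at h2
    calc 7 * θ * Real.exp (C * u₀) ≤ 7 * θ * (r' / (7 * θ)) := mul_le_mul_of_nonneg_left h2 (by positivity)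
      _ = r' := by field_simp
  have hc0pos : 0 < c0 := by rw [hc0]; positivity
  refine ⟨u₀, hu0, ?_⟩
  set Cst : ℝ := ((((k+2:ℕ):ℝ) + 1)^2 * 3) * 8 * (1 + K) with hCst
  have hCst0 : 0 ≤ Cst := by positivity
  have hlim : Tendsto (fun N : ℕ => Cst * ((N:ℝ))⁻¹) atTop (nhds 0) := by
    have := (tendsto_inv_atTop_nhds_zero_nat (𝕜 := ℝ)).const_mul Cst
    simpa using this
  have hLlarge : ∀ᶠ N : ℕ in atTop, 1 ≤ c0 * Real.log N := by
    have h1 : Tendsto (fun N : ℕ => c0 * Real.log N) atTop atTop :=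
      (Real.tendsto_log_atTop.comp (tendsto_natCast_atTop_atTop (R := ℝ))).const_mul_atTop hc0pos
    exact h1.eventually_ge_atTop 1
  refine squeeze_zero' (Eventually.of_forall fun N => ?_) ?_ hlim
  · exact mul_nonneg (by positivity) (Real.iSup_nonneg fun j => ENNReal.toReal_nonneg)
  filter_upwards [eventually_ge_atTop N0, eventually_ge_atTop 1, hLlarge, ev_log (2 * c0) 8] with N hNN0 hN1 hL1 hLN
  have hN' : (0:ℝ) < N := by exact_mod_cast hN1
  set L := ⌊c0 * Real.log N⌋₊ with hL
  have hLpos : 1 ≤ L := Nat.le_floor (by exact_mod_cast hL1)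
  have hLle : (L:ℝ) ≤ c0 * Real.log N := Nat.floor_le (by linarith)
  have hLge : c0 * Real.log N < L + 1 := Nat.lt_floor_add_one _
  set l := (L - 1) / 2 with hl
  have hl1 : 2 * l < L := by omega
  have hl2 : 4 * l + 8 ≤ N := by
    have h1 : 4 * l ≤ 2 * L := by omega
    have h1' : (4:ℝ) * l ≤ 2 * L := by exact_mod_cast h1
    have : (4:ℝ) * l + 8 ≤ N := by linarith
    exact_mod_cast this
  have hl3 : c0 * Real.log N / 2 ≤ ((l + 2 : ℕ) : ℝ) := by
    have h1 : L + 2 ≤ 2 * (l + 2) := by omega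
    have h1' : (L:ℝ) + 2 ≤ 2 * ((l + 2 : ℕ) : ℝ) := by exact_mod_cast h1
    linarith
  set n := ⌊u₀ * (N : ℝ) ^ (k + 1)⌋₊ with hn
  set m := l + 2 with hm
  set bd : ℝ := θ ^ m * (1 + K) * Real.exp (C * u₀) ^ m with hbd
  have hbd0 : 0 ≤ bd := by positivity
  have hpow : (1 + C * m / (N:ℝ)^(k+1)) ^ n ≤ Real.exp (C * u₀) ^ m := by
    have h1 : 1 + C * m / (N:ℝ)^(k+1) ≤ Real.exp (C * m / (N:ℝ)^(k+1)) := by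
      have := Real.add_one_le_exp (C * m / (N:ℝ)^(k+1)); linarith
    have h2 : (n:ℝ) ≤ u₀ * (N:ℝ)^(k+1) := Nat.floor_le (by positivity)
    calc (1 + C * m / (N:ℝ)^(k+1)) ^ n ≤ Real.exp (C * m / (N:ℝ)^(k+1)) ^ n :=
          pow_le_pow_left₀ (by positivity) h1 n
      _ = Real.exp (n * (C * m / (N:ℝ)^(k+1))) := by rw [← Real.exp_nat_mul]
      _ ≤ Real.exp (m * (C * u₀)) := by
          apply Real.exp_le_exp.2
          calc n * (C * m / (N:ℝ)^(k+1)) ≤ (u₀ * (N:ℝ)^(k+1)) * (C * m / (N:ℝ)^(k+1)) :=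
                mul_le_mul_of_nonneg_right h2 (by positivity)
            _ = m * (C * u₀) := by field_simp
      _ = _ := by rw [← Real.exp_nat_mul]
  set b : ℝ := ((((k+2:ℕ):ℝ) + 1)^2 * (3 * (N:ℝ)^(k+2+1))) * (8 * 7^l) * bd with hb
  have hb0 : 0 ≤ b := by positivity
  have hbound : ∀ j : ℤ, ((lawP (k + 2) N (Pl N)) (Uev (k + 2) N c0 j n)ᶜ).toReal ≤ b := by
    intro j
    apply ENNReal.toReal_le_of_le_ofReal hb0
    refine lawP_le hN1 _ _ _ fun z => ?_
    have hp := (hPl N).1 z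
    have := union_bound (K := c0) (k := n) hl1 hl2 j (Pl N z) bd hbd0 ?_
    · rw [← ofReal_measureReal (measure_ne_top _ _)]
      exact ENNReal.ofReal_le_ofReal this
    · intro F hF A hA hcard
      have h1 := hcov N hNN0 (Pl N) (hPl N) j F hF A hA (by omega) n z
      refine h1.trans ?_
      rw [hcard]
      exact mul_le_mul_of_nonneg_left hpow (by positivity)
  have hsup : (⨆ j : ℤ, ((lawP (k + 2) N (Pl N)) (Uev (k + 2) N c0 j n)ᶜ).toReal) ≤ b := ciSup_le hbound
  have hdec : r' ^ m ≤ ((N:ℝ)^(3 * (k+2) + 2))⁻¹ := by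
    apply decay_bound (lam := lam) (D := ((k+2:ℕ):ℝ)) (x := Real.log N) hN1 hr0 rfl hrlog hlam0
    · rw [← hc0]; exact hl3
    · push_cast; linarith
  have hb2 : b ≤ Cst * (N:ℝ)^(k+2+1) * ((N:ℝ)^(3 * (k+2) + 2))⁻¹ := by
    have h7 : (7:ℝ)^l ≤ 7^m := pow_le_pow_right₀ (by norm_num) (by omega)
    calc b = Cst * (N:ℝ)^(k+2+1) * (7^l * (θ ^ m * Real.exp (C * u₀) ^ m)) := by rw [hb, hbd, hCst]; ring
      _ ≤ Cst * (N:ℝ)^(k+2+1) * (7^m * (θ ^ m * Real.exp (C * u₀) ^ m)) :=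
          mul_le_mul_of_nonneg_left (mul_le_mul_of_nonneg_right h7 (by positivity)) (by positivity)
      _ = Cst * (N:ℝ)^(k+2+1) * (7 * θ * Real.exp (C * u₀)) ^ m := by rw [mul_pow, mul_pow]; ring
      _ ≤ Cst * (N:ℝ)^(k+2+1) * r' ^ m :=
          mul_le_mul_of_nonneg_left (pow_le_pow_left₀ (by positivity) hexp m) (by positivity)
      _ ≤ _ := mul_le_mul_of_nonneg_left hdec (by positivity)
  calc (N : ℝ) ^ (2 * (k + 2)) * _ ≤ (N : ℝ) ^ (2 * (k + 2)) * (Cst * (N:ℝ)^(k+2+1) * ((N:ℝ)^(3 * (k+2) + 2))⁻¹) :=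
        mul_le_mul_of_nonneg_left (hsup.trans hb2) (by positivity)
    _ = Cst * (N:ℝ)⁻¹ := by
        have e : (N:ℝ)^(3 * (k+2) + 2) = (N : ℝ) ^ (2 * (k + 2)) * (N:ℝ)^(k+2+1) * N := by
          rw [← pow_add, ← pow_succ]; congr 1; ring
        rw [e]; field_simp

/-- **Corollary 1.4.** If `d ≥ 4` and `ρ = 7(2/(d+1) + (1 - 2/(d+1)) q(d-1)) < 1`, then
with `c₀ = 8d/log(1/ρ)` there exists `u₀ > 0` such that
`lim_N N^{2d} sup_j P[(U_{c₀,j,u₀N^{d-1}})^c] = 0`. -/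
theorem statement_8 (d : ℕ) (hd : 4 ≤ d)
    (Q : ZLat (d - 1) → Measure (ℕ → ZLat (d - 1))) (hQ : IsLatRW (d - 1) Q)
    (hrho : 7 * (2 / ((d : ℝ) + 1) + (1 - 2 / ((d : ℝ) + 1)) * retProb (d - 1) Q) < 1)
    (Pl : ∀ N : ℕ, Cyl d N → Measure (ℕ → Cyl d N))
    (hPl : ∀ N : ℕ, IsCylRW d N (Pl N)) :
    ∃ u₀ : ℝ, 0 < u₀ ∧
      Tendsto (fun N : ℕ =>
          (N : ℝ) ^ (2 * d) * ⨆ j : ℤ,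
            ((lawP d N (Pl N))
              (Uev d N
                (8 * d / Real.log
                  (1 / (7 * (2 / ((d : ℝ) + 1)
                    + (1 - 2 / ((d : ℝ) + 1)) * retProb (d - 1) Q))))
                j ⌊u₀ * (N : ℝ) ^ (d - 1)⌋₊)ᶜ).toReal)
        atTop (nhds 0) := by



  obtain ⟨k, rfl⟩ : ∃ k, d = k + 2 := ⟨d - 2, by omega⟩
  exact main_k k (by omega) Q hQ _ _ rfl hrho rfl Pl hPl

end DiscCyl
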